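/- arXiv:2012.12623 — 2 statements merged into one kernel-verified Lean document; each statement's English description precedes it below -/
import Mathlib

section
/- For every integer n ≥ 1: (a) Z_n^{{(1,1), b_n}} = Z_{n−1}; (b) Z_n^{{(0,0), b_n}} = Z_n; and (c) for every integer 2 ≤ j ≤ 2n−1, Z_n^{{(1,1),(j,j)}} = Z_{n−1}^{{(j−2,j−2), b_{n−1}}}. -/
open Finset

/-- Membership predicate for the vertex set `V_n` of the TSSCPP graph `G_n`:
`0 ≤ x₁ ≤ 2n`, `x₁ ≤ x₂ ≤ 2n+1`, with `(2n,2n+1)` removed when `n` is odd. -/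
def memV (n : ℕ) (x : ℤ × ℤ) : Prop :=
  0 ≤ x.1 ∧ x.1 ≤ 2*(n:ℤ) ∧ x.1 ≤ x.2 ∧ x.2 ≤ 2*(n:ℤ)+1 ∧
    ¬(n % 2 = 1 ∧ x.1 = 2*(n:ℤ) ∧ x.2 = 2*(n:ℤ)+1)

instance memV.decPred (n : ℕ) : DecidablePred (memV n) := fun x => by
  unfold memV; infer_instance

/-- The vertex set `V_n` as a finite set. -/
noncomputable def Vfin (n : ℕ) : Finset (ℤ × ℤ) :=
  (Finset.Icc (0:ℤ) (2*(n:ℤ)) ×ˢ Finset.Icc (0:ℤ) (2*(n:ℤ)+1)).filter (memV n)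

/-- The vertex set `V_n` as a set. -/
def Vset (n : ℕ) : Set (ℤ × ℤ) := {x | memV n x}

/-- The distinguished vertex `b_n = (2n, 2n+1-(n mod 2))`. -/
def bvertex (n : ℕ) : ℤ × ℤ := (2*(n:ℤ), 2*(n:ℤ)+1 - ((n % 2 : ℕ) : ℤ))

/-- Edge relation (with `x` the "lower-left" endpoint) of the TSSCPP graph `G_n`:
horizontal edges `((x₁,x₂),(x₁+1,x₂))` for `0 ≤ x₁ ≤ 2n−1`, `x₁ ≤ x₂ ≤ 2n+1`, `x₁+x₂` odd;
vertical edges `((x₁,x₂),(x₁,x₂+1))` for `0 ≤ x₁ ≤ 2n` (`2n−1` when `n` odd), `x₁ ≤ x₂ ≤ 2n`;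
diagonal edges `((x₁,x₁),(x₁+1,x₁+1))` for `0 ≤ x₁ ≤ 2n−1`. -/
def edgeRel (n : ℕ) (x y : ℤ × ℤ) : Prop :=
  (y.1 = x.1 + 1 ∧ y.2 = x.2 ∧ 0 ≤ x.1 ∧ x.1 ≤ 2*(n:ℤ) - 1 ∧ x.1 ≤ x.2 ∧
      x.2 ≤ 2*(n:ℤ)+1 ∧ Odd (x.1 + x.2)) ∨
  (y.1 = x.1 ∧ y.2 = x.2 + 1 ∧ 0 ≤ x.1 ∧ x.1 ≤ 2*(n:ℤ) - ((n % 2 : ℕ) : ℤ) ∧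
      x.1 ≤ x.2 ∧ x.2 ≤ 2*(n:ℤ)) ∨
  (x.1 = x.2 ∧ y.1 = x.1 + 1 ∧ y.2 = x.2 + 1 ∧ 0 ≤ x.1 ∧ x.1 ≤ 2*(n:ℤ) - 1)

/-- The TSSCPP graph `G_n` (as a graph on all of `ℤ × ℤ`; all of its edges join
vertices of `V_n`). -/
def Gph (n : ℕ) : SimpleGraph (ℤ × ℤ) where
  Adj x y := edgeRel n x y ∨ edgeRel n y x
  symm := ⟨fun x y h => Or.symm h⟩
  loopless := ⟨by
    rintro ⟨x1, x2⟩ (h | h) <;>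
      rcases h with ⟨h1, h2, -⟩ | ⟨h1, h2, -⟩ | ⟨h0, h1, h2, -⟩ <;> omega⟩

/-- `Zpm n U` = number of perfect matchings of the subgraph of `G_n` induced on `V_n \ U`. -/
noncomputable def Zpm (n : ℕ) (U : Set (ℤ × ℤ)) : ℕ :=
  Nat.card {M : ((Gph n).induce (Vset n \ U)).Subgraph // M.IsPerfectMatching}

/-! ### Perfect matchings as involutions -/

/-- `f` encodes a perfect matching of the graph `A` induced on `W`: it exchanges the two ends of
every matching edge, and it fixes every point outside `W`. -/
def IsMatchingMap {α : Type*} (A : α → α → Prop) (W : Set α) (f : α → α) : Prop :=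
  (∀ x ∈ W, f x ∈ W ∧ A x (f x)) ∧ (∀ x, f (f x) = x) ∧ ∀ x, x ∉ W → f x = x

/-- The number of perfect matchings of a simple graph induced on `W`, counted by involutions. -/
theorem card_isPerfectMatching_induce {α : Type*} (G : SimpleGraph α) (W : Set α) :
    Nat.card {M : (G.induce W).Subgraph // M.IsPerfectMatching} =
      Nat.card {f : α → α // IsMatchingMap G.Adj W f} := by
  classical
  symm
  let toSubgraph : {f : α → α // IsMatchingMap G.Adj W f} →
      {M : (G.induce W).Subgraph // M.IsPerfectMatching} := fun f =>
    ⟨{ verts := Set.univ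
       Adj := fun x y => f.1 x = y
       adj_sub := by
         rintro ⟨x, hx⟩ ⟨y, hy⟩ h
         have h' : f.1 x = y := h
         simpa [← h'] using (f.2.1 x hx).2
       edge_vert := fun _ => Set.mem_univ _
       symm := ⟨by
         intro x y h
         rw [← h]
         exact f.2.2.1 x⟩ }, by
      refine ⟨?_, fun v => Set.mem_univ v⟩
      rintro ⟨x, hx⟩ -
      exact ⟨⟨f.1 x, (f.2.1 x hx).1⟩, rfl, fun y hy => Subtype.ext (Eq.symm hy)⟩⟩
  refine Nat.card_eq_of_bijective toSubgraph ⟨?_, ?_⟩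
  · intro f g h
    apply Subtype.ext
    funext x
    by_cases hx : x ∈ W
    · have hadj : (toSubgraph f).1.Adj ⟨x, hx⟩ ⟨f.1 x, (f.2.1 x hx).1⟩ := rfl
      rw [h] at hadj
      exact Eq.symm hadj
    · rw [f.2.2.2 x hx, g.2.2.2 x hx]
  · rintro ⟨M, hM⟩
    have hM' := hM
    rw [SimpleGraph.Subgraph.isPerfectMatching_iff] at hM
    choose g hg hg' using hM
    have hgg : ∀ v, g (g v) = v := fun v => (hg' _ _ (hg v).symm).symm
    refine ⟨⟨fun x => if hx : x ∈ W then (g ⟨x, hx⟩ : α) else x, ?_, ?_, ?_⟩, ?_⟩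
    · intro x hx
      simp only [hx, dite_true]
      exact ⟨(g ⟨x, hx⟩).2, M.adj_sub (hg ⟨x, hx⟩)⟩
    · intro x
      by_cases hx : x ∈ W
      · simp [hx, hgg]
      · simp [hx]
    · intro x hx
      simp [hx]
    · apply Subtype.ext
      apply SimpleGraph.Subgraph.ext
      · exact (Set.eq_univ_of_forall hM'.2).symm
      · funext x y
        apply propext
        change (if hx : (x : α) ∈ W then (g ⟨x, hx⟩ : α) else x) = y ↔ M.Adj x y
        simp only [x.2, dite_true]
        constructor
        · intro h
          rw [← Subtype.ext h]
          exact hg x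
        · intro h
          rw [hg' x y h]

namespace IsMatchingMap

variable {α β : Type*} {A : α → α → Prop} {W Q R : Set α} {f g : α → α}

open Classical in
/-- The map equal to `f` on `Q` and to `g` elsewhere. -/
noncomputable def glue (Q : Set α) (f g : α → α) : α → α := fun x => if x ∈ Q then f x else g x

theorem glue_of_mem {x : α} (hx : x ∈ Q) : glue Q f g x = f x := if_pos hx

theorem glue_of_notMem {x : α} (hx : x ∉ Q) : glue Q f g x = g x := if_neg hx

theorem injective (hf : IsMatchingMap A W f) : Function.Injective f :=
  Function.Involutive.injective hf.2.1

/-- Restriction of a matching to a union of matching edges. -/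
theorem restrict (hf : IsMatchingMap A W f) (hQ : Q ⊆ W) (hfQ : ∀ x ∈ Q, f x ∈ Q) :
    IsMatchingMap A Q (glue Q f id) := by
  refine ⟨fun x hx => ?_, fun x => ?_, fun x hx => by simp [glue, hx]⟩
  · simp only [glue_of_mem hx]
    exact ⟨hfQ x hx, (hf.1 x (hQ hx)).2⟩
  · by_cases hx : x ∈ Q
    · simp [glue, hx, hfQ x hx, hf.2.1 x]
    · simp [glue, hx]

/-- Union of matchings of disjoint vertex sets. -/
theorem union (hf : IsMatchingMap A Q f) (hg : IsMatchingMap A R g) (h : Disjoint Q R) :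
    IsMatchingMap A (Q ∪ R) (glue Q f g) := by
  have hR : ∀ x ∈ R, x ∉ Q := fun x hx hx' => Set.disjoint_left.1 h hx' hx
  refine ⟨fun x hx => ?_, fun x => ?_, fun x hx => ?_⟩
  · by_cases hxQ : x ∈ Q
    · simp [glue, hxQ, hf.1 x hxQ]
    · have hxR : x ∈ R := hx.resolve_left hxQ
      simp [glue, hxQ, hg.1 x hxR]
  · by_cases hxQ : x ∈ Q
    · simp [glue, hxQ, (hf.1 x hxQ).1, hf.2.1 x]
    · by_cases hxR : x ∈ R
      · simp [glue, hxQ, hR _ (hg.1 x hxR).1, hg.2.1 x]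
      · simp [glue, hxQ, hg.2.2 x hxR]
  · rw [Set.mem_union, not_or] at hx
    simp [glue, hx.1, hg.2.2 x hx.2]

theorem apply_mem_diff (hf : IsMatchingMap A W f) (hfQ : ∀ x ∈ Q, f x ∈ Q) :
    ∀ x ∈ W \ Q, f x ∈ W \ Q := fun x hx =>
  ⟨(hf.1 x hx.1).1, fun h => hx.2 (by simpa [glue, hf.2.1 x] using hfQ _ h)⟩

/-- If the edges on `Q` are forced, they can be deleted without changing the number of perfect
matchings. -/
theorem card_eq_card_diff (hg : IsMatchingMap A Q g) (hQ : Q ⊆ W)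
    (hforced : ∀ f, IsMatchingMap A W f → ∀ x ∈ Q, f x = g x) :
    Nat.card {f // IsMatchingMap A W f} = Nat.card {f // IsMatchingMap A (W \ Q) f} := by
  have hfQ : ∀ f, IsMatchingMap A W f → ∀ x ∈ Q, f x ∈ Q := fun f hf x hx => by
    rw [hforced f hf x hx]
    exact (hg.1 x hx).1
  refine Nat.card_eq_of_bijective
    (fun f => ⟨glue (W \ Q) f.1 id,
      f.2.restrict Set.sdiff_subset (f.2.apply_mem_diff (hfQ _ f.2))⟩) ⟨?_, ?_⟩
  · intro f₁ f₂ h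
    apply Subtype.ext
    funext x
    by_cases hxQ : x ∈ Q
    · rw [hforced _ f₁.2 x hxQ, hforced _ f₂.2 x hxQ]
    · by_cases hxW : x ∈ W
      · simpa [glue, hxQ, hxW] using congrFun (congrArg Subtype.val h) x
      · rw [f₁.2.2.2 x hxW, f₂.2.2.2 x hxW]
  · rintro ⟨f, hf⟩
    have hu := hg.union hf Set.disjoint_sdiff_right
    rw [Set.union_sdiff_cancel hQ] at hu
    refine ⟨⟨_, hu⟩, Subtype.ext (funext fun x => ?_)⟩
    by_cases hx : x ∈ W \ Q
    · simp [glue, hx, hx.2]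
    · simp [glue, hx, hf.2.2 x hx]

/-- Isomorphic induced subgraphs have equally many perfect matchings. -/
theorem card_congr {B : β → β → Prop} {Y : Set β} (e : α ≃ β) (hW : ∀ x, x ∈ W ↔ e x ∈ Y)
    (hA : ∀ x ∈ W, ∀ y ∈ W, A x y ↔ B (e x) (e y)) :
    Nat.card {f // IsMatchingMap A W f} = Nat.card {f // IsMatchingMap B Y f} := by
  refine Nat.card_congr (e.conj.subtypeEquiv fun f => ⟨fun hf => ?_, fun hf => ?_⟩)
  · refine ⟨fun y hy => ?_, fun y => by simp [Equiv.conj_apply, hf.2.1], fun y hy => ?_⟩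
    · obtain ⟨x, rfl⟩ := e.surjective y
      have hx := (hW x).2 hy
      have hfx := hf.1 x hx
      simpa [Equiv.conj_apply] using
        And.intro ((hW _).1 hfx.1) ((hA x hx _ hfx.1).1 hfx.2)
    · obtain ⟨x, rfl⟩ := e.surjective y
      simp [Equiv.conj_apply, hf.2.2 x fun h => hy ((hW x).1 h)]
  · have hfe : ∀ x, e.conj f (e x) = e (f x) := fun x => by simp [Equiv.conj_apply]
    refine ⟨fun x hx => ?_, fun x => ?_, fun x hx => ?_⟩
    · have h := hf.1 (e x) ((hW x).1 hx)
      rw [hfe] at h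
      have hfx := (hW _).2 h.1
      exact ⟨hfx, (hA x hx _ hfx).2 h.2⟩
    · have h := hf.2.1 (e x)
      rw [hfe, hfe] at h
      exact e.injective h
    · have h := hf.2.2 (e x) fun h => hx ((hW x).2 h)
      rw [hfe] at h
      exact e.injective h

/-- A matching of `U ∪ S` splits into the part covering `U` and a matching of the rest of `S`. If
the latter is always unique, only the former has to be counted. -/
theorem card_union_eq {U S : Set α} (hUS : Disjoint U S)
    (huniq : ∀ T ⊆ S, (∀ x ∈ T, ∃ u ∈ U, A x u) → ∀ f g,
      IsMatchingMap A (S \ T) f → IsMatchingMap A (S \ T) g → f = g) :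
    Nat.card {f // IsMatchingMap A (U ∪ S) f} =
      Nat.card {h : α → α // ∃ T ⊆ S, IsMatchingMap A (U ∪ T) h ∧ (∀ x ∈ T, h x ∈ U) ∧
        ∃ g, IsMatchingMap A (S \ T) g} := by
  have hSU : ∀ x ∈ S, x ∉ U := fun x hx hx' => Set.disjoint_left.1 hUS hx' hx
  have hmem : ∀ f, IsMatchingMap A (U ∪ S) f →
      ∀ x ∈ U ∪ {x ∈ S | f x ∈ U}, f x ∈ U ∪ {x ∈ S | f x ∈ U} := by
    rintro f hf x (hx | hx)
    · rcases (hf.1 x (Or.inl hx)).1 with h | h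
      · exact Or.inl h
      · exact Or.inr ⟨h, by rwa [hf.2.1]⟩
    · exact Or.inl hx.2
  have hsub : ∀ f : α → α, U ∪ {x ∈ S | f x ∈ U} ⊆ U ∪ S := fun f =>
    Set.union_subset_union_right _ fun x hx => hx.1
  have hdiff : ∀ T ⊆ S, (U ∪ S) \ (U ∪ T) = S \ T := fun T _ => by
    ext x
    have := hSU x
    simp only [Set.mem_sdiff, Set.mem_union]
    tauto
  have hrest : ∀ f, IsMatchingMap A (U ∪ S) f → IsMatchingMap A (S \ {x ∈ S | f x ∈ U})
      (glue (S \ {x ∈ S | f x ∈ U}) f id) := fun f hf => by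
    have h := hf.apply_mem_diff (hmem f hf)
    rw [hdiff _ fun x hx => hx.1] at h
    exact hf.restrict (fun x hx => Or.inr hx.1) h
  refine Nat.card_eq_of_bijective
    (fun f => ⟨glue (U ∪ {x ∈ S | f.1 x ∈ U}) f.1 id, {x ∈ S | f.1 x ∈ U}, fun x hx => hx.1,
      f.2.restrict (hsub _) (hmem _ f.2), fun x hx => ?_, _, hrest _ f.2⟩) ⟨?_, ?_⟩
  · rw [glue_of_mem (Set.mem_union_right _ hx)]
    exact hx.2
  · rintro ⟨f₁, h₁⟩ ⟨f₂, h₂⟩ h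
    have hpw := congrArg Subtype.val h
    dsimp only at hpw
    have hU : ∀ x ∈ U, f₁ x = f₂ x := fun x hx => by
      simpa [glue, hx] using congrFun hpw x
    have hT : ∀ f g, IsMatchingMap A (U ∪ S) f → IsMatchingMap A (U ∪ S) g →
        (∀ x ∈ U, f x = g x) → ∀ x, f x ∈ U → g x ∈ U := fun f g hf hg hfg x hx => by
      have h := hfg _ hx
      rw [hf.2.1] at h
      rw [h, hg.2.1]
      exact hx
    have hTT : {x ∈ S | f₁ x ∈ U} = {x ∈ S | f₂ x ∈ U} := by
      ext x
      exact and_congr_right fun _ =>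
        ⟨hT _ _ h₁ h₂ hU x, hT _ _ h₂ h₁ (fun x hx => (hU x hx).symm) x⟩
    have hS := hrest _ h₁
    rw [hTT] at hS
    have heq := huniq _ (fun x hx => hx.1)
      (fun x hx => ⟨_, hx.2, (h₂.1 x (Or.inr hx.1)).2⟩) _ _ hS (hrest _ h₂)
    apply Subtype.ext
    funext x
    by_cases hxT : x ∈ U ∪ {x ∈ S | f₂ x ∈ U}
    · rw [hTT] at hpw
      have := congrFun hpw x
      rwa [glue_of_mem hxT, glue_of_mem hxT] at this
    · by_cases hx : x ∈ U ∪ S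
      · have hxS : x ∈ S \ {x ∈ S | f₂ x ∈ U} := by
          rw [← hdiff _ fun x hx => hx.1]
          exact ⟨hx, hxT⟩
        have := congrFun heq x
        rwa [glue_of_mem hxS, glue_of_mem hxS] at this
      · exact (h₁.2.2 x hx).trans (h₂.2.2 x hx).symm
  · rintro ⟨h, T, hTS, hh, hTU, g, hg⟩
    have hu := hh.union hg (by rw [← hdiff T hTS]; exact Set.disjoint_sdiff_right)
    rw [← hdiff T hTS, Set.union_sdiff_cancel (Set.union_subset_union_right _ hTS)] at hu
    refine ⟨⟨_, hu⟩, Subtype.ext ?_⟩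
    have hT : {x ∈ S | glue (U ∪ T) h g x ∈ U} = T := by
      ext x
      constructor
      · rintro ⟨hx, hx'⟩
        by_contra hxT
        rw [glue_of_notMem (by simp [hxT, hSU x hx])] at hx'
        exact hSU _ (hg.1 x ⟨hx, hxT⟩).1.1 hx'
      · intro hx
        refine ⟨hTS hx, ?_⟩
        rw [glue_of_mem (Set.mem_union_right _ hx)]
        exact hTU x hx
    dsimp only
    rw [hT]
    funext x
    by_cases hx : x ∈ U ∪ T
    · simp only [glue_of_mem hx]
    · simp only [glue_of_notMem hx, id, hh.2.2 x hx]

/-- Replacing `S` by `S'` does not change the number of perfect matchings of `U ∪ S` if both sets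
have unique completions, which exist simultaneously. -/
theorem card_union_eq_card_union {U S S' : Set α}
    (hUS : Disjoint U S) (hUS' : Disjoint U S')
    (hadj : ∀ x, (∃ u ∈ U, A x u) → (x ∈ S ↔ x ∈ S'))
    (huniq : ∀ T ⊆ S, (∀ x ∈ T, ∃ u ∈ U, A x u) → ∀ f g,
      IsMatchingMap A (S \ T) f → IsMatchingMap A (S \ T) g → f = g)
    (huniq' : ∀ T ⊆ S', (∀ x ∈ T, ∃ u ∈ U, A x u) → ∀ f g,
      IsMatchingMap A (S' \ T) f → IsMatchingMap A (S' \ T) g → f = g)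
    (hex : ∀ T ⊆ S, (∀ x ∈ T, ∃ u ∈ U, A x u) →
      ((∃ f, IsMatchingMap A (S \ T) f) ↔ ∃ f, IsMatchingMap A (S' \ T) f)) :
    Nat.card {f // IsMatchingMap A (U ∪ S) f} = Nat.card {f // IsMatchingMap A (U ∪ S') f} := by
  rw [card_union_eq hUS huniq, card_union_eq hUS' huniq']
  refine Nat.card_congr (Equiv.subtypeEquivRight fun h => exists_congr fun T => ?_)
  have key : IsMatchingMap A (U ∪ T) h → (∀ x ∈ T, h x ∈ U) → ∀ x ∈ T, ∃ u ∈ U, A x u :=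
    fun hh hT x hx => ⟨h x, hT x hx, (hh.1 x (Or.inr hx)).2⟩
  constructor
  · rintro ⟨hTS, hh, hT, hg⟩
    have hTU := key hh hT
    exact ⟨fun x hx => (hadj x (hTU x hx)).1 (hTS hx), hh, hT, (hex T hTS hTU).1 hg⟩
  · rintro ⟨hTS, hh, hT, hg⟩
    have hTU := key hh hT
    have hTS' : T ⊆ S := fun x hx => (hadj x (hTU x hx)).2 (hTS hx)
    exact ⟨hTS', hh, hT, (hex T hTS' hTU).2 hg⟩

/-- The involution exchanging two adjacent vertices. -/
theorem swap [DecidableEq α] (hA : ∀ x y, A x y → A y x) {a b : α} (hab : A a b) :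
    IsMatchingMap A {a, b} (Equiv.swap a b) := by
  refine ⟨?_, fun x => Equiv.swap_apply_self a b x, fun x hx => ?_⟩
  · rintro x (rfl | rfl)
    · simp [hab]
    · simp [hA _ _ hab]
  · simp only [Set.mem_insert_iff, Set.mem_singleton_iff, not_or] at hx
    exact Equiv.swap_apply_of_ne_of_ne hx.1 hx.2

/-- A strip of triangles with some of its odd vertices deleted has at most one perfect matching, and
it has one exactly when the number of vertices is even. -/
theorem strip (hA : ∀ x y, A x y → A y x) (hirr : ∀ x, ¬ A x x) {p : ℤ → α}
    (hp : Function.Injective p) {lo hi : ℤ}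
    (hnext : ∀ i, lo ≤ i → i + 1 ≤ hi → A (p i) (p (i + 1)))
    (hskip : ∀ i, lo ≤ i → i + 2 ≤ hi → Even i → A (p i) (p (i + 2)))
    (hadj : ∀ i j, i < j → A (p i) (p j) → j = i + 1 ∨ j = i + 2 ∧ Even i)
    (R : Finset ℤ) (a : ℤ) (hlo : lo ≤ a) (hR : ∀ i ∈ R, a ≤ i ∧ i ≤ hi)
    (heven : ∀ i j, a ≤ i → i ≤ j → j ∈ R → Even i → i ∈ R) :
    ((∃ f, IsMatchingMap A (p '' R) f) ↔ Even #R) ∧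
      ∀ f g, IsMatchingMap A (p '' R) f → IsMatchingMap A (p '' R) g → f = g := by
  classical
  induction hk : #R using Nat.strong_induction_on generalizing R a with
  | _ k ih =>
  rcases R.eq_empty_or_nonempty with rfl | hne
  · have hid : ∀ f, IsMatchingMap A (p '' ((∅ : Finset ℤ) : Set ℤ)) f → f = id := fun f hf =>
      funext fun x => hf.2.2 x (by simp)
    refine ⟨⟨fun _ => by simp [← hk], fun _ => ⟨id, by simp, by simp, by simp⟩⟩, fun f g hf hg => ?_⟩
    rw [hid f hf, hid g hg]
  obtain ⟨m, hm, hmin⟩ : ∃ m ∈ R, ∀ i ∈ R, m ≤ i :=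
    ⟨R.min' hne, R.min'_mem hne, fun i hi => R.min'_le i hi⟩
  have hmW : p m ∈ p '' (R : Set ℤ) := ⟨m, hm, rfl⟩
  rcases (R.erase m).eq_empty_or_nonempty with he | hne'
  · have hRm : R = {m} := by
      rw [← Finset.insert_erase hm, he]
      rfl
    have hno : ∀ f, ¬ IsMatchingMap A (p '' (R : Set ℤ)) f := fun f hf => by
      obtain ⟨⟨j, hj, hj'⟩, hadj'⟩ := hf.1 _ hmW
      obtain rfl : j = m := by simpa [hRm] using hj
      rw [← hj'] at hadj'
      exact hirr _ hadj'
    have h1 : k = 1 := by rw [← hk, hRm]; rfl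
    exact ⟨⟨fun ⟨f, hf⟩ => absurd hf (hno f), fun h => by simp [h1] at h⟩,
      fun f g hf => absurd hf (hno f)⟩
  obtain ⟨m', hm', hmin'⟩ : ∃ m' ∈ R.erase m, ∀ i ∈ R.erase m, m' ≤ i :=
    ⟨(R.erase m).min' hne', Finset.min'_mem _ hne', fun i hi => Finset.min'_le _ i hi⟩
  obtain ⟨hm'ne, hm'R⟩ := Finset.mem_erase.1 hm'
  have hlt : m < m' := lt_of_le_of_ne (hmin m' hm'R) hm'ne.symm
  have hgap : ∀ i ∈ R, i = m ∨ m' ≤ i := fun i hi => by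
    by_cases h : i = m
    · exact Or.inl h
    · exact Or.inr (hmin' i (Finset.mem_erase.2 ⟨h, hi⟩))
  have hma := hR m hm
  have hm'a := hR m' hm'R
  have hmm' : m' = m + 1 ∨ m' = m + 2 ∧ Even m := by
    by_cases h : m' = m + 1
    · exact Or.inl h
    · have hodd : ¬ Even (m + 1) := fun he => by
        have := hgap _ (heven (m + 1) m' (by omega) (by omega) hm'R he)
        omega
      have he : Even m := by
        rw [Int.even_iff] at hodd ⊢
        omega
      have := hgap _ (heven (m + 2) m' (by omega) (by omega) hm'R (he.add even_two))
      exact Or.inr ⟨by omega, he⟩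
  have hA' : A (p m) (p m') := by
    rcases hmm' with rfl | ⟨rfl, he⟩
    · exact hnext m (by omega) (by omega)
    · exact hskip m (by omega) (by omega) he
  have hforced : ∀ f, IsMatchingMap A (p '' (R : Set ℤ)) f → f (p m) = p m' := fun f hf => by
    obtain ⟨⟨j, hj, hjf⟩, hmj⟩ := hf.1 _ hmW
    rw [← hjf] at hmj ⊢
    have hjm : j ≠ m := fun h => hirr _ (h ▸ hmj)
    have hj' := (hgap j hj).resolve_left hjm
    rcases hadj m j (by omega) hmj with h | ⟨h, he⟩
    · rw [show j = m' by omega]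
    · by_contra hne
      have hm1 : m' = m + 1 := by
        rcases hmm' with h' | h'
        · exact h'
        · exact absurd (by rw [h, h'.1]) hne
      obtain ⟨⟨l, hl, hlf⟩, hml⟩ := hf.1 _ ⟨m', hm'R, rfl⟩
      rw [← hlf] at hml
      have hlm : l ≠ m := fun h' => hne (by rw [hjf, ← h', hlf, hf.2.1])
      have hlm' : l ≠ m' := fun h' => hirr _ (h' ▸ hml)
      have hlj : l ≠ j := fun h' => hm'ne (hp (hf.injective (by rw [← hlf, ← hjf, h'])))
      have hl' := (hgap l hl).resolve_left hlm
      rcases hadj m' l (by omega) hml with h' | ⟨-, he'⟩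
      · omega
      · rw [Int.even_iff] at he he'
        omega
  have himage : p '' (R : Set ℤ) \ {p m, p m'} = p '' ((R.erase m).erase m' : Finset ℤ) := by
    ext x
    constructor
    · rintro ⟨⟨i, hi, rfl⟩, hx⟩
      simp only [Set.mem_insert_iff, Set.mem_singleton_iff, not_or, hp.eq_iff] at hx
      exact ⟨i, by simpa using ⟨⟨hi, hx.1⟩, hx.2⟩, rfl⟩
    · rintro ⟨i, hi, rfl⟩
      simp only [Finset.coe_erase, Set.mem_sdiff, Set.mem_singleton_iff] at hi
      refine ⟨⟨i, hi.1.1, rfl⟩, ?_⟩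
      simp [hp.eq_iff, hi.1.2, hi.2]
  have hcard : #((R.erase m).erase m') + 2 = k := by
    have h₁ := Finset.card_erase_add_one hm
    have h₂ := Finset.card_erase_add_one hm'
    omega
  obtain ⟨hex, huniq⟩ := ih #((R.erase m).erase m') (by omega) ((R.erase m).erase m') (m' + 1)
    (by omega) (fun i hi => by
      simp only [Finset.mem_erase] at hi
      have := hgap i hi.2.2
      have := hR i hi.2.2
      omega) (fun i j hi hij hj he => by
      simp only [Finset.mem_erase] at hj ⊢
      exact ⟨by omega, by omega, heven i j (by omega) hij hj.2.2 he⟩) rfl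
  have hpair : ∀ f, IsMatchingMap A (p '' (R : Set ℤ)) f →
      ∀ x ∈ ({p m, p m'} : Set α), f x = Equiv.swap (p m) (p m') x := by
    rintro f hf x (rfl | rfl)
    · rw [Equiv.swap_apply_left, hforced f hf]
    · rw [Equiv.swap_apply_right, ← hforced f hf, hf.2.1]
  have hsw := swap hA hA'
  have hsub : ({p m, p m'} : Set α) ⊆ p '' (R : Set ℤ) := by
    rintro x (rfl | rfl)
    · exact hmW
    · exact ⟨m', hm'R, rfl⟩
  have hrest : ∀ f, IsMatchingMap A (p '' (R : Set ℤ)) f →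
      IsMatchingMap A (p '' ((R.erase m).erase m' : Finset ℤ))
        (glue (p '' ((R.erase m).erase m' : Finset ℤ)) f id) := fun f hf => by
    rw [← himage]
    refine hf.restrict Set.sdiff_subset (hf.apply_mem_diff fun x hx => ?_)
    rw [hpair f hf x hx]
    exact (hsw.1 x hx).1
  refine ⟨?_, fun f g hf hg => funext fun x => ?_⟩
  · rw [show Even k ↔ Even #((R.erase m).erase m') by rw [← hcard, Nat.even_add]; simp, ← hex]
    constructor
    · rintro ⟨f, hf⟩
      exact ⟨_, hrest f hf⟩
    · rintro ⟨f, hf⟩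
      rw [← himage] at hf
      have hu := hsw.union hf Set.disjoint_sdiff_right
      rw [Set.union_sdiff_cancel hsub] at hu
      exact ⟨_, hu⟩
  · by_cases hx : x ∈ ({p m, p m'} : Set α)
    · rw [hpair f hf x hx, hpair g hg x hx]
    · by_cases hxR : x ∈ p '' (R : Set ℤ)
      · have hx' : x ∈ p '' ((R.erase m).erase m' : Finset ℤ) := himage ▸ ⟨hxR, hx⟩
        have := congrFun (huniq _ _ (hrest f hf) (hrest g hg)) x
        rwa [glue_of_mem hx', glue_of_mem hx'] at this
      · rw [hf.2.2 x hxR, hg.2.2 x hxR]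

end IsMatchingMap

/-! ### Forced edges in `G_n` -/

theorem Zpm_eq_card (n : ℕ) (U : Set (ℤ × ℤ)) :
    Zpm n U = Nat.card {f // IsMatchingMap (Gph n).Adj (Vset n \ U) f} :=
  card_isPerfectMatching_induce _ _

theorem mem_Vset_iff (n : ℕ) (a b : ℤ) :
    (a, b) ∈ Vset n ↔ 0 ≤ a ∧ a ≤ 2 * (n : ℤ) ∧ a ≤ b ∧ b ≤ 2 * (n : ℤ) + 1 ∧
      ¬(n % 2 = 1 ∧ a = 2 * (n : ℤ) ∧ b = 2 * (n : ℤ) + 1) := Iff.rfl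

theorem edgeRel_iff (n : ℕ) (a b c d : ℤ) :
    edgeRel n (a, b) (c, d) ↔
      (c = a + 1 ∧ d = b ∧ 0 ≤ a ∧ a ≤ 2 * (n : ℤ) - 1 ∧ a ≤ b ∧ b ≤ 2 * (n : ℤ) + 1 ∧
        (a + b) % 2 = 1) ∨
      (c = a ∧ d = b + 1 ∧ 0 ≤ a ∧ a ≤ 2 * (n : ℤ) - ((n % 2 : ℕ) : ℤ) ∧ a ≤ b ∧
        b ≤ 2 * (n : ℤ)) ∨
      (a = b ∧ c = a + 1 ∧ d = b + 1 ∧ 0 ≤ a ∧ a ≤ 2 * (n : ℤ) - 1) := by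
  rw [← Int.odd_iff]
  rfl

theorem Gph_adj_iff (n : ℕ) (x y : ℤ × ℤ) :
    (Gph n).Adj x y ↔ edgeRel n x y ∨ edgeRel n y x := Iff.rfl

/-- The vertices of the first two columns, apart from `(1,1)`. -/
def firstColumns (n : ℕ) : Set (ℤ × ℤ) := {x ∈ Vset n | x.1 ≤ 1 ∧ x ≠ (1, 1)}

theorem mem_firstColumns_iff (n : ℕ) (a b : ℤ) :
    (a, b) ∈ firstColumns n ↔ (a, b) ∈ Vset n ∧ a ≤ 1 ∧ ¬(a = 1 ∧ b = 1) := by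
  have hne : (a, b) ≠ ((1 : ℤ), (1 : ℤ)) ↔ ¬(a = 1 ∧ b = 1) := by
    rw [Ne, Prod.mk.injEq]
  rw [← hne]
  rfl

open Classical in
/-- The matching of the first two columns by vertical edges whose lower end has even height. -/
noncomputable def verticalPairing (n : ℕ) (x : ℤ × ℤ) : ℤ × ℤ :=
  if x ∈ firstColumns n then (x.1, x.2 + 1 - 2 * (x.2 % 2)) else x

theorem isMatchingMap_verticalPairing (n : ℕ) (hn : 1 ≤ n) :
    IsMatchingMap (Gph n).Adj (firstColumns n) (verticalPairing n) := by
  have hmem : ∀ a b : ℤ, (a, b) ∈ firstColumns n →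
      (a, b + 1 - 2 * (b % 2)) ∈ firstColumns n := fun a b h => by
    simp only [mem_firstColumns_iff, mem_Vset_iff] at h ⊢
    omega
  refine ⟨?_, ?_, fun x hx => if_neg hx⟩
  · rintro ⟨a, b⟩ h
    rw [verticalPairing, if_pos h]
    refine ⟨hmem a b h, ?_⟩
    simp only [mem_firstColumns_iff, mem_Vset_iff] at h
    rw [Gph_adj_iff, edgeRel_iff, edgeRel_iff]
    omega
  · rintro ⟨a, b⟩
    by_cases h : (a, b) ∈ firstColumns n
    · rw [verticalPairing, verticalPairing, if_pos h, if_pos (hmem a b h), Prod.mk.injEq]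
      exact ⟨rfl, by dsimp only; omega⟩
    · rw [verticalPairing, verticalPairing, if_neg h, if_neg h]

section ForcedColumns

variable {n : ℕ} {W : Set (ℤ × ℤ)} {f : ℤ × ℤ → ℤ × ℤ}

theorem forced_column_zero (h11 : ((1 : ℤ), (1 : ℤ)) ∉ W)
    (hF : firstColumns n ⊆ W) (hf : IsMatchingMap (Gph n).Adj W f) (i : ℕ) (hi : i ≤ n) :
    f (0, 2 * (i : ℤ)) = (0, 2 * (i : ℤ) + 1) := by
  induction i with
  | zero =>
    have hmem : ((0 : ℤ), 2 * ((0 : ℕ) : ℤ)) ∈ firstColumns n := by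
      simp only [mem_firstColumns_iff, mem_Vset_iff]
      omega
    obtain ⟨h, hadj⟩ := hf.1 _ (hF hmem)
    obtain ⟨c, d, hcd⟩ : ∃ c d, f (0, 2 * ((0 : ℕ) : ℤ)) = (c, d) := ⟨_, _, rfl⟩
    rw [hcd] at h hadj ⊢
    have hne : ¬(c = 1 ∧ d = 1) := by
      rintro ⟨rfl, rfl⟩
      exact h11 h
    simp only [Gph_adj_iff, edgeRel_iff] at hadj
    rw [Prod.mk.injEq]
    omega
  | succ i ih =>
    have hmem : ((0 : ℤ), 2 * ((i + 1 : ℕ) : ℤ)) ∈ firstColumns n := by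
      simp only [mem_firstColumns_iff, mem_Vset_iff]
      omega
    have hadj := (hf.1 _ (hF hmem)).2
    obtain ⟨c, d, hcd⟩ : ∃ c d, f (0, 2 * ((i + 1 : ℕ) : ℤ)) = (c, d) := ⟨_, _, rfl⟩
    rw [hcd] at hadj ⊢
    have hne : ¬(c = 0 ∧ d = 2 * (i : ℤ) + 1) := by
      rintro ⟨rfl, rfl⟩
      rw [← ih (by omega)] at hcd
      have := hf.injective hcd
      rw [Prod.mk.injEq] at this
      omega
    simp only [Gph_adj_iff, edgeRel_iff] at hadj
    rw [Prod.mk.injEq]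
    omega

theorem forced_column_one (h11 : ((1 : ℤ), (1 : ℤ)) ∉ W)
    (hF : firstColumns n ⊆ W) (hf : IsMatchingMap (Gph n).Adj W f) (i : ℕ) (hi : i < n) :
    f (1, 2 * (n : ℤ) + 1 - 2 * i) = (1, 2 * (n : ℤ) - 2 * i) := by
  induction i with
  | zero =>
    have hmem : ((1 : ℤ), 2 * (n : ℤ) + 1 - 2 * ((0 : ℕ) : ℤ)) ∈ firstColumns n := by
      simp only [mem_firstColumns_iff, mem_Vset_iff]
      omega
    have hadj := (hf.1 _ (hF hmem)).2
    obtain ⟨c, d, hcd⟩ : ∃ c d, f (1, 2 * (n : ℤ) + 1 - 2 * ((0 : ℕ) : ℤ)) = (c, d) :=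
      ⟨_, _, rfl⟩
    rw [hcd] at hadj ⊢
    have hne : ¬(c = 0 ∧ d = 2 * (n : ℤ) + 1) := by
      rintro ⟨rfl, rfl⟩
      rw [← forced_column_zero h11 hF hf n le_rfl] at hcd
      have := hf.injective hcd
      rw [Prod.mk.injEq] at this
      omega
    simp only [Gph_adj_iff, edgeRel_iff] at hadj
    rw [Prod.mk.injEq]
    omega
  | succ i ih =>
    have hmem : ((1 : ℤ), 2 * (n : ℤ) + 1 - 2 * ((i + 1 : ℕ) : ℤ)) ∈ firstColumns n := by
      simp only [mem_firstColumns_iff, mem_Vset_iff]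
      omega
    have hadj := (hf.1 _ (hF hmem)).2
    obtain ⟨c, d, hcd⟩ : ∃ c d, f (1, 2 * (n : ℤ) + 1 - 2 * ((i + 1 : ℕ) : ℤ)) = (c, d) :=
      ⟨_, _, rfl⟩
    rw [hcd] at hadj ⊢
    have hne : ¬(c = 0 ∧ d = 2 * ((n - (i + 1) : ℕ) : ℤ) + 1) := by
      rintro ⟨rfl, rfl⟩
      rw [← forced_column_zero h11 hF hf (n - (i + 1)) (by omega)] at hcd
      have := hf.injective hcd
      rw [Prod.mk.injEq] at this
      omega
    have hne' : ¬(c = 1 ∧ d = 2 * (n : ℤ) - 2 * i) := by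
      rintro ⟨rfl, rfl⟩
      rw [← ih (by omega)] at hcd
      have := hf.injective hcd
      rw [Prod.mk.injEq] at this
      omega
    simp only [Gph_adj_iff, edgeRel_iff] at hadj
    rw [Prod.mk.injEq]
    omega

theorem card_diff_firstColumns (hn : 1 ≤ n) (h11 : ((1 : ℤ), (1 : ℤ)) ∉ W)
    (hF : firstColumns n ⊆ W) :
    Nat.card {f // IsMatchingMap (Gph n).Adj W f} =
      Nat.card {f // IsMatchingMap (Gph n).Adj (W \ firstColumns n) f} := by
  refine (isMatchingMap_verticalPairing n hn).card_eq_card_diff hF ?_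
  rintro f hf ⟨a, b⟩ hab
  rw [verticalPairing, if_pos hab]
  simp only [mem_firstColumns_iff, mem_Vset_iff] at hab
  rcases (by omega : a = 0 ∨ a = 1) with rfl | rfl
  · obtain ⟨i, hi⟩ : ∃ i : ℕ, b / 2 = i := ⟨(b / 2).toNat, by omega⟩
    have h := forced_column_zero h11 hF hf i (by omega)
    rcases Int.emod_two_eq_zero_or_one b with hb | hb
    · rw [show b = 2 * (i : ℤ) by omega, h, Prod.mk.injEq]
      dsimp only
      omega
    · rw [show b = 2 * (i : ℤ) + 1 by omega, ← h, hf.2.1, Prod.mk.injEq, h]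
      dsimp only
      omega
  · obtain ⟨i, hi⟩ : ∃ i : ℕ, b / 2 = n - i := ⟨(n - b / 2).toNat, by omega⟩
    have h := forced_column_one h11 hF hf i (by omega)
    rcases Int.emod_two_eq_zero_or_one b with hb | hb
    · rw [show b = 2 * (n : ℤ) - 2 * i by omega, ← h, hf.2.1, Prod.mk.injEq, h]
      dsimp only
      omega
    · rw [show b = 2 * (n : ℤ) + 1 - 2 * i by omega, h, Prod.mk.injEq]
      dsimp only
      omega

/-- For even `n` the corner `(2n,2n+1)` is a leaf attached to `(2n,2n)`. -/
theorem card_diff_corner (hn : n % 2 = 0) (hcorner : (2 * (n : ℤ), 2 * (n : ℤ) + 1) ∈ W)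
    (hdiag : (2 * (n : ℤ), 2 * (n : ℤ)) ∈ W) :
    Nat.card {f // IsMatchingMap (Gph n).Adj W f} =
      Nat.card {f // IsMatchingMap (Gph n).Adj
        (W \ {(2 * (n : ℤ), 2 * (n : ℤ) + 1), (2 * (n : ℤ), 2 * (n : ℤ))}) f} := by
  have hadj : (Gph n).Adj (2 * (n : ℤ), 2 * (n : ℤ) + 1) (2 * (n : ℤ), 2 * (n : ℤ)) := by
    rw [Gph_adj_iff, edgeRel_iff, edgeRel_iff]
    omega
  refine (IsMatchingMap.swap (fun _ _ h => h.symm) hadj).card_eq_card_diff ?_ fun f hf => ?_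
  · rintro x (rfl | rfl)
    · exact hcorner
    · exact hdiag
  · have h : f (2 * (n : ℤ), 2 * (n : ℤ) + 1) = (2 * (n : ℤ), 2 * (n : ℤ)) := by
      have h := (hf.1 _ hcorner).2
      obtain ⟨c, d, hcd⟩ : ∃ c d, f (2 * (n : ℤ), 2 * (n : ℤ) + 1) = (c, d) := ⟨_, _, rfl⟩
      rw [hcd] at h ⊢
      simp only [Gph_adj_iff, edgeRel_iff] at h
      rw [Prod.mk.injEq]
      omega
    rintro x (rfl | rfl)
    · rw [h, Equiv.swap_apply_left]
    · rw [Equiv.swap_apply_right, ← h, hf.2.1]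

end ForcedColumns

theorem edgeRel_shift {m : ℕ} {a b c d : ℤ} (hx : (a, b) ∈ Vset m) (hy : (c, d) ∈ Vset m)
    (hx' : (a + 2, b + 2) ∈ Vset (m + 1)) (hy' : (c + 2, d + 2) ∈ Vset (m + 1)) :
    edgeRel m (a, b) (c, d) ↔ edgeRel (m + 1) (a + 2, b + 2) (c + 2, d + 2) := by
  rw [mem_Vset_iff] at hx hy hx' hy'
  rw [edgeRel_iff, edgeRel_iff]
  exact or_congr ⟨fun h => by omega, fun h => by omega⟩
    (or_congr ⟨fun h => by omega, fun h => by omega⟩ ⟨fun h => by omega, fun h => by omega⟩)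

/-- Translation by `(2,2)` embeds `G_m` into `G_{m+1}`. -/
theorem card_shift (m : ℕ) {W Y : Set (ℤ × ℤ)} (hW : W ⊆ Vset m) (hY : Y ⊆ Vset (m + 1))
    (hWY : ∀ a b : ℤ, (a, b) ∈ W ↔ (a + 2, b + 2) ∈ Y) :
    Nat.card {f // IsMatchingMap (Gph (m + 1)).Adj Y f} =
      Nat.card {f // IsMatchingMap (Gph m).Adj W f} := by
  symm
  refine IsMatchingMap.card_congr (Equiv.addRight ((2 : ℤ), (2 : ℤ)))
    (fun x => hWY x.1 x.2) ?_
  rintro ⟨a, b⟩ hx ⟨c, d⟩ hy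
  have hx' := hY ((hWY a b).1 hx)
  have hy' := hY ((hWY c d).1 hy)
  have hx := hW hx
  have hy := hW hy
  exact or_congr (edgeRel_shift hx hy hx' hy') (edgeRel_shift hy hx hy' hx')

theorem Zpm_succ_one_bvertex (m : ℕ) :
    Zpm (m + 1) {((1 : ℤ), (1 : ℤ)), bvertex (m + 1)} = Zpm m ∅ := by
  rw [Zpm_eq_card, Zpm_eq_card, Set.sdiff_empty, card_diff_firstColumns (by omega) (by simp) ?_]
  · rcases Nat.mod_two_eq_zero_or_one m with hm | hm
    · rw [card_diff_corner (n := m) hm]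
      · refine card_shift m (fun x hx => hx.1) (fun x hx => hx.1.1) fun a b => ?_
        simp only [Set.mem_sdiff, Set.mem_insert_iff, Set.mem_singleton_iff, bvertex,
          mem_firstColumns_iff, mem_Vset_iff, Prod.mk.injEq]
        omega
      · rw [mem_Vset_iff]
        omega
      · rw [mem_Vset_iff]
        omega
    · refine card_shift m subset_rfl (fun x hx => hx.1.1) fun a b => ?_
      simp only [Set.mem_sdiff, Set.mem_insert_iff, Set.mem_singleton_iff, bvertex,
        mem_firstColumns_iff, mem_Vset_iff, Prod.mk.injEq]
      omega
  · rintro ⟨a, b⟩ h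
    simp only [Set.mem_sdiff, Set.mem_insert_iff, Set.mem_singleton_iff, bvertex,
      mem_firstColumns_iff, mem_Vset_iff, Prod.mk.injEq] at h ⊢
    omega

theorem Zpm_succ_one_diagonal (m j : ℕ) (h2 : 2 ≤ j) (hj : j ≤ 2 * m + 1) :
    Zpm (m + 1) {((1 : ℤ), (1 : ℤ)), ((j : ℤ), (j : ℤ))} =
      Zpm m {((j : ℤ) - 2, (j : ℤ) - 2), bvertex m} := by
  rw [Zpm_eq_card, Zpm_eq_card, card_diff_firstColumns (by omega) (by simp) ?_]
  · rcases Nat.mod_two_eq_zero_or_one m with hm | hm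
    · refine card_shift m (fun x hx => hx.1) (fun x hx => hx.1.1) fun a b => ?_
      simp only [Set.mem_sdiff, Set.mem_insert_iff, Set.mem_singleton_iff, bvertex,
        mem_firstColumns_iff, mem_Vset_iff, Prod.mk.injEq]
      omega
    · rw [card_diff_corner (n := m + 1) (by omega)]
      · refine card_shift m (fun x hx => hx.1) (fun x hx => hx.1.1.1) fun a b => ?_
        simp only [Set.mem_sdiff, Set.mem_insert_iff, Set.mem_singleton_iff, bvertex,
          mem_firstColumns_iff, mem_Vset_iff, Prod.mk.injEq]
        omega
      · simp only [Set.mem_sdiff, Set.mem_insert_iff, Set.mem_singleton_iff,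
          mem_firstColumns_iff, mem_Vset_iff, Prod.mk.injEq]
        omega
      · simp only [Set.mem_sdiff, Set.mem_insert_iff, Set.mem_singleton_iff,
          mem_firstColumns_iff, mem_Vset_iff, Prod.mk.injEq]
        omega
  · rintro ⟨a, b⟩ h
    simp only [Set.mem_sdiff, Set.mem_insert_iff, Set.mem_singleton_iff,
      mem_firstColumns_iff, mem_Vset_iff, Prod.mk.injEq] at h ⊢
    omega

/-! ### The diagonal strip -/

/-- The zigzag path `(0,0), (0,1), (1,1), (1,2), …` along the diagonal. -/
def zigzag (i : ℤ) : ℤ × ℤ := (i / 2, (i + 1) / 2)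

theorem zigzag_injective : Function.Injective zigzag := by
  intro i j h
  simp only [zigzag, Prod.mk.injEq] at h
  omega

/-- The vertices of `G_n` off the zigzag path. -/
def upperPart (n : ℕ) : Set (ℤ × ℤ) := {x ∈ Vset n | x.1 + 2 ≤ x.2}

theorem mem_upperPart_iff (n : ℕ) (a b : ℤ) :
    (a, b) ∈ upperPart n ↔ (a, b) ∈ Vset n ∧ a + 2 ≤ b := Iff.rfl

/-- The index of `b_n` on the zigzag path, which is its last vertex in `G_n`. -/
def lastIndex (n : ℕ) : ℤ := 4 * (n : ℤ) + 1 - ((n % 2 : ℕ) : ℤ)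

theorem zigzag_adj_upperPart {n : ℕ} {i : ℤ} (h : ∃ u ∈ upperPart n, (Gph n).Adj (zigzag i) u) :
    0 < i ∧ i < lastIndex n ∧ ¬ Even i := by
  obtain ⟨⟨a, b⟩, hu, hadj⟩ := h
  simp only [mem_upperPart_iff, mem_Vset_iff] at hu
  simp only [zigzag, Gph_adj_iff, edgeRel_iff] at hadj
  rw [Int.even_iff, lastIndex]
  omega

theorem mem_image_zigzag_iff (lo hi a b : ℤ) :
    (a, b) ∈ zigzag '' Set.Icc lo hi ↔ (b = a ∨ b = a + 1) ∧ lo ≤ a + b ∧ a + b ≤ hi := by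
  constructor
  · rintro ⟨i, ⟨h₁, h₂⟩, h⟩
    simp only [zigzag, Prod.mk.injEq] at h
    omega
  · rintro ⟨h, h₁, h₂⟩
    refine ⟨a + b, ⟨h₁, h₂⟩, ?_⟩
    simp only [zigzag, Prod.mk.injEq]
    omega

theorem zigzag_strip (n : ℕ) {lo hi : ℤ} (hlo : 0 ≤ lo) (hhi : hi ≤ lastIndex n)
    {T : Set (ℤ × ℤ)} [DecidablePred fun i => zigzag i ∉ T]
    (hT : ∀ x ∈ T, ∃ u ∈ upperPart n, (Gph n).Adj x u) :
    ((∃ f, IsMatchingMap (Gph n).Adj (zigzag '' Set.Icc lo hi \ T) f) ↔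
      Even #{i ∈ Finset.Icc lo hi | zigzag i ∉ T}) ∧
      ∀ f g, IsMatchingMap (Gph n).Adj (zigzag '' Set.Icc lo hi \ T) f →
        IsMatchingMap (Gph n).Adj (zigzag '' Set.Icc lo hi \ T) g → f = g := by
  have himage : zigzag '' Set.Icc lo hi \ T =
      zigzag '' ({i ∈ Finset.Icc lo hi | zigzag i ∉ T} : Finset ℤ) := by
    ext x
    constructor
    · rintro ⟨⟨i, hi, rfl⟩, hx⟩
      exact ⟨i, by simpa using ⟨hi, hx⟩, rfl⟩
    · rintro ⟨i, hi, rfl⟩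
      simp only [Finset.coe_filter, Finset.mem_Icc, Set.mem_ofPred_eq] at hi
      exact ⟨⟨i, hi.1, rfl⟩, hi.2⟩
  rw [himage]
  unfold lastIndex at hhi
  refine IsMatchingMap.strip (fun _ _ h => h.symm) (fun _ => (Gph n).irrefl) zigzag_injective
    (lo := lo) (hi := hi) ?_ ?_ ?_ _ lo le_rfl ?_ ?_
  · intro i h₁ h₂
    rw [Gph_adj_iff, zigzag, zigzag, edgeRel_iff]
    rcases Int.even_or_odd' i with ⟨k, rfl | rfl⟩
    · exact Or.inl (Or.inr (Or.inl (by omega)))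
    · exact Or.inl (Or.inl (by omega))
  · rintro i h₁ h₂ ⟨k, rfl⟩
    rw [Gph_adj_iff, zigzag, zigzag, edgeRel_iff]
    exact Or.inl (Or.inr (Or.inr (by omega)))
  · intro i j hij h
    rw [Gph_adj_iff, zigzag, zigzag, edgeRel_iff, edgeRel_iff] at h
    rw [Int.even_iff]
    rcases h with (h | h | h) | (h | h | h) <;> omega
  · intro i hi
    simpa using (Finset.mem_filter.1 hi).1
  · intro i j h₁ h₂ hj he
    simp only [Finset.mem_filter, Finset.mem_Icc] at hj ⊢
    exact ⟨by omega, fun h => (zigzag_adj_upperPart (hT _ h)).2.2 he⟩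

theorem Zpm_zero_bvertex (n : ℕ) (hn : 1 ≤ n) :
    Zpm n {((0 : ℤ), (0 : ℤ)), bvertex n} = Zpm n ∅ := by
  classical
  have hall : Vset n \ ∅ = upperPart n ∪ zigzag '' Set.Icc 0 (lastIndex n) := by
    ext ⟨a, b⟩
    rw [Set.sdiff_empty]
    simp only [Set.mem_union, mem_upperPart_iff,
      mem_image_zigzag_iff, mem_Vset_iff, lastIndex]
    omega
  have hdel : Vset n \ {((0 : ℤ), (0 : ℤ)), bvertex n} =
      upperPart n ∪ zigzag '' Set.Icc 1 (lastIndex n - 1) := by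
    ext ⟨a, b⟩
    simp only [Set.mem_sdiff, Set.mem_insert_iff, Set.mem_singleton_iff, bvertex, Prod.mk.injEq,
      Set.mem_union, mem_upperPart_iff, mem_image_zigzag_iff, mem_Vset_iff, lastIndex]
    omega
  have hdisj : ∀ lo hi, Disjoint (upperPart n) (zigzag '' Set.Icc lo hi) := fun lo hi => by
    rw [Set.disjoint_left]
    rintro ⟨a, b⟩ h h'
    rw [mem_upperPart_iff] at h
    rw [mem_image_zigzag_iff] at h'
    omega
  have hpos : 0 < lastIndex n := by
    unfold lastIndex
    omega
  rw [Zpm_eq_card, Zpm_eq_card, hall, hdel]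
  symm
  refine IsMatchingMap.card_union_eq_card_union (hdisj _ _) (hdisj _ _) ?_
    (fun T _ hT => (zigzag_strip n le_rfl le_rfl hT).2)
    (fun T _ hT => (zigzag_strip n (by omega) (by omega) hT).2) ?_
  · intro x hx
    constructor
    · rintro ⟨i, -, rfl⟩
      have := zigzag_adj_upperPart hx
      exact ⟨i, ⟨by omega, by omega⟩, rfl⟩
    · rintro ⟨i, ⟨h₁, h₂⟩, rfl⟩
      exact ⟨i, ⟨by omega, by omega⟩, rfl⟩
  · intro T _ hT
    rw [(zigzag_strip n le_rfl le_rfl hT).1, (zigzag_strip n (by omega) (by omega) hT).1]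
    have hends : {i ∈ Finset.Icc 0 (lastIndex n) | zigzag i ∉ T} =
        insert 0 (insert (lastIndex n)
          {i ∈ Finset.Icc 1 (lastIndex n - 1) | zigzag i ∉ T}) := by
      ext i
      have hi : zigzag i ∈ T → 0 < i ∧ i < lastIndex n := fun h =>
        ⟨(zigzag_adj_upperPart (hT _ h)).1, (zigzag_adj_upperPart (hT _ h)).2.1⟩
      simp only [Finset.mem_filter, Finset.mem_Icc, Finset.mem_insert]
      by_cases h : zigzag i ∈ T
      · have := hi h
        simp only [h, not_true, and_false, or_false, false_iff]
        omega
      · simp only [h, not_false_eq_true, and_true]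
        omega
    rw [hends, Finset.card_insert_of_notMem, Finset.card_insert_of_notMem]
    · simp [Nat.even_add_one]
    · simp
    · simp only [Finset.mem_filter, Finset.mem_Icc, Finset.mem_insert]
      omega

/-- For every `n ≥ 1`: (a) `Z_n^{{(1,1), b_n}} = Z_{n−1}`; (b) `Z_n^{{(0,0), b_n}} = Z_n`;
(c) for every `2 ≤ j ≤ 2n−1`, `Z_n^{{(1,1),(j,j)}} = Z_{n−1}^{{(j−2,j−2), b_{n−1}}}`. -/
theorem Zpm_boundary_identities (n : ℕ) (hn : 1 ≤ n) :
    Zpm n {((1:ℤ), (1:ℤ)), bvertex n} = Zpm (n-1) ∅ ∧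
    Zpm n {((0:ℤ), (0:ℤ)), bvertex n} = Zpm n ∅ ∧
    ∀ j : ℕ, 2 ≤ j → j ≤ 2*n - 1 →
      Zpm n {((1:ℤ), (1:ℤ)), ((j:ℤ), (j:ℤ))}
        = Zpm (n-1) {((j:ℤ) - 2, (j:ℤ) - 2), bvertex (n-1)} := by
  obtain ⟨m, rfl⟩ : ∃ m, n = m + 1 := ⟨n - 1, by omega⟩
  rw [Nat.add_sub_cancel]
  exact ⟨Zpm_succ_one_bvertex m, Zpm_zero_bvertex (m + 1) hn, fun j h2 hj =>
    Zpm_succ_one_diagonal m j h2 (by omega)⟩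
end

section
/- Let n ≥ 1 and suppose the Kasteleyn matrix K_n, regarded as a matrix over ℂ, is invertible. Let x = (i₁, i₁+2i₂+ε_i) and y = (j₁, j₁+2j₂+ε_j) be vertices of V_n with 0 ≤ i₁, j₁ ≤ 2n−1, ε_i, ε_j ∈ {0,1}, 0 ≤ i₂ ≤ n−⌊(i₁+ε_i)/2⌋ and 0 ≤ j₂ ≤ n−⌊(j₁+ε_j)/2⌋. Then: (1) if ε_i = ε_j = 1, K_n⁻¹(x,y) = Σ_{ℓ₁=0}^{i₁} Σ_{ℓ₂=0}^{j₁} (−1)^{i₂+j₂}(−1)^{ℓ₁+ℓ₂} binom(i₂−1+ℓ₁, ℓ₁) binom(j₂−1+ℓ₂, ℓ₂) t_n^{1,1}(i₁−ℓ₁, j₁−ℓ₂); (2) if ε_i = ε_j = 0, K_n⁻¹(x,y) = Σ_{ℓ₁=0}^{i₂} Σ_{ℓ₂=0}^{j₂} (−1)^{i₂+j₂} binom(i₂, ℓ₁) binom(j₂, ℓ₂) t_n^{0,0}(i₁+ℓ₁, j₁+ℓ₂); (3) if ε_i = 1 and ε_j = 0, K_n⁻¹(x,y) = Σ_{ℓ₁=0}^{i₁}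 Σ_{ℓ₂=0}^{j₂} (−1)^{i₂+j₂}(−1)^{ℓ₁} binom(i₂−1+ℓ₁, ℓ₁) binom(j₂, ℓ₂) t_n^{1,0}(i₁−ℓ₁, j₁+ℓ₂) − (−1)^{i₂+j₂}·1_{x₁≥y₁}·1_{x₁+x₂<y₁+y₂}·binom(j₂−i₂−1, i₁−j₁); and the remaining case ε_i = 0, ε_j = 1 is determined by skew-symmetry K_n⁻¹(x,y) = −K_n⁻¹(y,x). -/
open Finset

/-- The entry function `k(x,y)` of the Kasteleyn matrix (over `ℂ`). -/
def kfunC (x y : ℤ × ℤ) : ℂ :=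
  if ((x.1 + x.2) % 2 = 0 ∧ x.2 = y.2 ∧ x.1 - y.1 = 1) ∨
     ((x.1 + x.2) % 2 = 0 ∧ x.1 = y.1 ∧ (y.2 - x.2 = 1 ∨ x.2 - y.2 = 1)) ∨
     (x.1 = x.2 ∧ y.1 = y.2 ∧ y.1 = x.1 - 1)
  then 1 else 0

/-- The Kasteleyn matrix `K_n` of `G_n` over `ℂ`, rows and columns indexed by `V_n`. -/
def KmatC (n : ℕ) : Matrix ↥(Vfin n) ↥(Vfin n) ℂ :=
  fun x y => kfunC x.val y.val - kfunC y.val x.val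

/-- `p(n,k,ℓ) = (−1)^k (3n−3k+2) C_{n−k} (n+k−2ℓ+1)! (2n−k−ℓ+1)! / ((k−ℓ)! (3n−k+2−2ℓ)!)`. -/
def pnk (n k l : ℕ) : ℚ :=
  (-1)^k * (3*(n:ℚ) - 3*(k:ℚ) + 2) * (catalan (n-k) : ℚ) *
    (Nat.factorial (n+k-2*l+1) : ℚ) * (Nat.factorial (2*n-k-l+1) : ℚ) /
    ((Nat.factorial (k-l) : ℚ) * (Nat.factorial (3*n-k+2-2*l) : ℚ))

/-- `h_n^{0,b}(i) = −((i+1) mod 2) + Σ_{k=0}^{n} p(n,k,0)·(1/2πi)∮ (1+r)^{n−k}(1−r)^{-1}r^{2k−i} dr`,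
over the positively oriented circle of radius `1/2` centred at the origin. -/
noncomputable def h0b (n i : ℕ) : ℂ :=
  -((((i+1) % 2 : ℕ) : ℂ)) + ∑ k ∈ Finset.range (n+1), ((pnk n k 0 : ℚ) : ℂ) *
    (1/(2*(Real.pi : ℂ)*Complex.I)) *
    (∮ r in C(0, 1/2), (1+r)^(n-k) * (1-r)⁻¹ * r^(2*(k:ℤ) - (i:ℤ)))

/-- `h_n^{1,b}(i) = Σ_{k=0}^{n} p(n,k,0)·(1/2πi)∮ (1+r)^{n−k} r^{2k−i−1} dr`. -/
noncomputable def h1b (n i : ℕ) : ℂ :=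
  ∑ k ∈ Finset.range (n+1), ((pnk n k 0 : ℚ) : ℂ) *
    (1/(2*(Real.pi : ℂ)*Complex.I)) *
    (∮ r in C(0, 1/2), (1+r)^(n-k) * r^(2*(k:ℤ) - (i:ℤ) - 1))

/-- Generalized binomial coefficient `binom(m,ℓ) = m(m−1)⋯(m−ℓ+1)/ℓ!` for integer `m`. -/
noncomputable def genBinom (m : ℤ) (l : ℕ) : ℂ :=
  (∏ t ∈ Finset.range l, ((m : ℂ) - (t : ℂ))) / (Nat.factorial l : ℂ)

/-- `A₁(r; i,k) = (1+r)^{n−k}/r^{i−2k+1}` and `A₀(r; i,k) = (1+r)^{n−k}/((1−r)·r^{i−2k})`. -/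
noncomputable def Afun (e n k i : ℕ) (r : ℂ) : ℂ :=
  if e = 1 then (1+r)^(n-k) * r^(2*(k:ℤ) - (i:ℤ) - 1)
  else (1+r)^(n-k) * (1-r)⁻¹ * r^(2*(k:ℤ) - (i:ℤ))

/-- `(1/2πi)⁴ ∮∮∮∮ F(r₁,r₂,s₁,s₂) dr₁ dr₂ ds₁ ds₂`, each contour the positively oriented
circle of radius `1/2` centred at the origin. -/
noncomputable def quadInt (F : ℂ → ℂ → ℂ → ℂ → ℂ) : ℂ :=
  (1/(2*(Real.pi : ℂ)*Complex.I))^4 *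
    ∮ s2 in C(0, 1/2), ∮ s1 in C(0, 1/2), ∮ r2 in C(0, 1/2), ∮ r1 in C(0, 1/2),
      F r1 r2 s1 s2

/-- The quadruple-sum quadruple-integral part of `t_n^{ε₁,ε₂}(i,j)`. -/
noncomputable def tInt (n e1 e2 i j : ℕ) : ℂ :=
  ∑ k1 ∈ Finset.range (n+1), ∑ l1 ∈ Finset.range (k1+1),
    ∑ k2 ∈ Finset.range (n+1), ∑ l2 ∈ Finset.range (k2+1),
      ((pnk n k1 l1 : ℚ) : ℂ) * ((pnk n k2 l2 : ℚ) : ℂ) *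
        quadInt (fun r1 r2 s1 s2 =>
          Afun e1 n k1 i r1 * Afun e2 n k2 j r2 *
            ((s1 - s2) / ((s1*s2 - 1) * s1^(l1+1) * s2^(l2+1))))

/-- `t_n^{1,1}(i,j)`. -/
noncomputable def t11 (n i j : ℕ) : ℂ := tInt n 1 1 i j

/-- `t_n^{1,0}(i,j) = ((j+1) mod 2)·h_n^{1,b}(i) + (integral part)`. -/
noncomputable def t10 (n i j : ℕ) : ℂ :=
  (((j+1) % 2 : ℕ) : ℂ) * h1b n i + tInt n 1 0 i j

/-- `t_n^{0,0}(i,j) = 1_{i<j}((i+1) mod 2)(j mod 2) − 1_{i>j}(i mod 2)((j+1) mod 2)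
  + ((j+1) mod 2)·h_n^{0,b}(i) − ((i+1) mod 2)·h_n^{0,b}(j) + (integral part)`. -/
noncomputable def t00 (n i j : ℕ) : ℂ :=
  (if i < j then ((((i+1) % 2 : ℕ)) : ℂ) * (((j % 2 : ℕ)) : ℂ) else 0)
  - (if j < i then (((i % 2 : ℕ)) : ℂ) * ((((j+1) % 2 : ℕ)) : ℂ) else 0)
  + ((((j+1) % 2 : ℕ)) : ℂ) * h0b n i - ((((i+1) % 2 : ℕ)) : ℂ) * h0b n j
  + tInt n 0 0 i j

namespace TSSCPP

/-- The reciprocal factorial on `ℤ`, zero at negative integers. -/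
def invFact (z : ℤ) : ℚ := if z < 0 then 0 else ((z.toNat.factorial : ℕ) : ℚ)⁻¹

lemma invFact_of_neg {z : ℤ} (h : z < 0) : invFact z = 0 := by simp [invFact, h]

lemma invFact_natCast (m : ℕ) : invFact (m : ℤ) = ((m.factorial : ℕ) : ℚ)⁻¹ := by
  simp [invFact]

lemma invFact_sub_one (z : ℤ) : invFact (z - 1) = z * invFact z := by
  rcases lt_trichotomy z 0 with h | h | h
  · rw [invFact_of_neg h, invFact_of_neg (by omega), mul_zero]
  · subst h; simp [invFact]
  · obtain ⟨m, rfl⟩ : ∃ m : ℕ, z = (m + 1 : ℕ) := ⟨(z - 1).toNat, by omega⟩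
    have : ((m + 1 : ℕ) : ℤ) - 1 = (m : ℕ) := by push_cast; ring
    rw [this, invFact_natCast, invFact_natCast, Nat.factorial_succ]
    have : (m.factorial : ℚ) ≠ 0 := by exact_mod_cast m.factorial_ne_zero
    push_cast
    field_simp

lemma invFact_eq_succ (z w : ℤ) (h : w = z + 1) : invFact z = (w : ℚ) * invFact w := by
  rw [← invFact_sub_one, h, add_sub_cancel_right]

lemma catalan_succ_mul (b : ℕ) :
    ((b : ℚ) + 2) * (catalan (b + 1) : ℚ) = 2 * (2 * b + 1) * (catalan b : ℚ) := by
  have h1 := succ_mul_catalan_eq_centralBinom (b + 1)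
  have h2 := succ_mul_catalan_eq_centralBinom b
  have h3 := Nat.succ_mul_centralBinom_succ b
  rw [← h1, ← h2] at h3
  have h4 : ((b : ℚ) + 1) * (((b : ℚ) + 2) * (catalan (b + 1) : ℚ))
      = ((b : ℚ) + 1) * (2 * (2 * b + 1) * (catalan b : ℚ)) := by
    have := congrArg (Nat.cast : ℕ → ℚ) h3
    push_cast at this
    linear_combination this
  exact mul_left_cancel₀ (by positivity) h4

/-- The part of `pcoef` shared by all the telescoping arguments below. -/
def pcore (b c : ℕ) : ℚ :=
  (-1) ^ b * (catalan b : ℚ) * ((2 * c + 1 - b).factorial : ℚ) * ((b + c + 1).factorial : ℚ) *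
    invFact ((c : ℤ) - b) * invFact (2 * c + b + 2)

/-- The coefficients `p(n,k,ℓ)` up to sign, in terms of `b = n - k` and `c = n - ℓ`. -/
def pcoef (b c : ℕ) : ℚ := (3 * b + 2) * pcore b c

lemma pcore_of_lt {b c : ℕ} (h : c < b) : pcore b c = 0 := by
  rw [pcore, invFact_of_neg (z := (c : ℤ) - b) (by omega)]; ring

lemma pcoef_of_lt {b c : ℕ} (h : c < b) : pcoef b c = 0 := by
  rw [pcoef, pcore_of_lt h, mul_zero]

lemma cast_factorial_sub {m b : ℕ} (h : b < m) :
    (((m - b).factorial : ℕ) : ℚ) = ((m : ℚ) - b) * (((m - (b + 1)).factorial : ℕ) : ℚ) := by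
  obtain ⟨d, rfl⟩ := Nat.exists_eq_add_of_lt h
  rw [show b + d + 1 - b = d + 1 by omega, show b + d + 1 - (b + 1) = d by omega,
    Nat.factorial_succ]
  push_cast
  ring

lemma cast_factorial_eq_succ (m k : ℕ) (h : m = k + 1) :
    ((m.factorial : ℕ) : ℚ) = ((k : ℚ) + 1) * ((k.factorial : ℕ) : ℚ) := by
  rw [h, Nat.factorial_succ]
  push_cast
  ring

lemma pcore_succ {b c : ℕ} (h : b ≤ c) :
    ((b : ℚ) + 2) * (2 * c + 1 - b) * (2 * c + b + 3) * pcore (b + 1) c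
      = - (2 * (2 * b + 1) * (c - b) * (b + c + 2)) * pcore b c := by
  have hc := catalan_succ_mul b
  have f1 := cast_factorial_sub (m := 2 * c + 1) (b := b) (by omega)
  have f2 := cast_factorial_eq_succ (b + 1 + c + 1) (b + c + 1) (by ring)
  have i1 := invFact_eq_succ ((c : ℤ) - (b + 1 : ℕ)) ((c : ℤ) - b) (by push_cast; ring)
  have i2 := invFact_eq_succ (2 * (c : ℤ) + b + 2) (2 * (c : ℤ) + (b + 1 : ℕ) + 2)
    (by push_cast; ring)
  unfold pcore
  rw [f1, f2, i1, i2, pow_succ]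
  generalize invFact ((c : ℤ) - b) = x
  generalize invFact (2 * (c : ℤ) + (b + 1 : ℕ) + 2) = y
  generalize (((2 * c + 1 - (b + 1)).factorial : ℕ) : ℚ) = z
  generalize (((b + c + 1).factorial : ℕ) : ℚ) = w
  push_cast
  linear_combination (-(-1 : ℚ) ^ b * (2 * c + 1 - b) * (2 * c + b + 3) * z *
    ((b + c + 2) * w) * ((c - b) * x) * y) * hc

/-- The mixed weight `binom(a+b,2b-a+1) + binom(a+b+1,2b-a+1)` divided by `3a+1`. -/
def xweight (a b : ℕ) : ℚ :=
  ((a + b).factorial : ℚ) * invFact (2 * b - a + 1) * invFact (2 * a - b)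

lemma pcoef_xweight_telescope (a : ℕ) {b c : ℕ} (h : b ≤ c) :
    2 * (2 * a + 3) * (c - a) * (c + a + 2) * (xweight (a + 1) b * pcoef b c)
      + a * (2 * c + a + 3) * (2 * c - a + 1) * (xweight a b * pcoef b c)
    = 3 * (a + 1) *
      ((b + 1) * (2 * c - b + 2) * (2 * c + b + 2) *
          (((a + b).factorial : ℚ) * invFact (2 * b - a - 1) * invFact (2 * a + 2 - b)) * pcore b c
        - ((b + 1 : ℕ) + 1) * (2 * c - (b + 1 : ℕ) + 2) * (2 * c + (b + 1 : ℕ) + 2) *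
          (((a + (b + 1)).factorial : ℚ) * invFact (2 * (b + 1 : ℕ) - a - 1) *
            invFact (2 * a + 2 - (b + 1 : ℕ))) * pcore (b + 1) c) := by
  have hs := pcore_succ h
  have j1 := invFact_eq_succ (2 * (b : ℤ) - a) (2 * b - a + 1) (by ring)
  have j2 := invFact_eq_succ (2 * (b : ℤ) - a - 1) (2 * b - a) (by ring)
  have k1 := invFact_eq_succ (2 * (a : ℤ) - b) (2 * a + 1 - b) (by ring)
  have k2 := invFact_eq_succ (2 * (a : ℤ) + 1 - b) (2 * a + 2 - b) (by ring)
  have e1 : 2 * (b : ℤ) - ((a + 1 : ℕ) : ℤ) + 1 = 2 * b - a := by push_cast; ring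
  have e2 : 2 * ((a + 1 : ℕ) : ℤ) - b = 2 * a + 2 - b := by push_cast; ring
  have e3 : 2 * ((b + 1 : ℕ) : ℤ) - a - 1 = 2 * b - a + 1 := by push_cast; ring
  have e4 : 2 * (a : ℤ) + 2 - ((b + 1 : ℕ) : ℤ) = 2 * a + 1 - b := by push_cast; ring
  unfold xweight pcoef
  rw [e1, e2, e3, e4, j2, j1, k1, k2, show a + 1 + b = a + b + 1 by ring,
    show a + (b + 1) = a + b + 1 by ring, Nat.factorial_succ]
  push_cast
  linear_combination 3 * ((a : ℚ) + 1) * ((a + b + 1) * ((a + b).factorial : ℚ) *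
    invFact (2 * b - a + 1) * ((2 * a + 2 - b) * invFact (2 * a + 2 - b))) * hs

lemma sum_xweight_recurrence (a c : ℕ) :
    2 * (2 * a + 3) * ((c : ℚ) - a) * (c + a + 2) *
        ∑ b ∈ range (c + 1), xweight (a + 1) b * pcoef b c
      + a * (2 * c + a + 3) * (2 * c - a + 1) *
        ∑ b ∈ range (c + 1), xweight a b * pcoef b c = 0 := by
  rw [mul_sum, mul_sum, ← sum_add_distrib,
    sum_congr rfl fun b hb => pcoef_xweight_telescope a (Nat.lt_succ_iff.mp (mem_range.mp hb)),
    ← mul_sum]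
  rw [sum_range_sub' (fun b : ℕ => ((b : ℚ) + 1) * (2 * c - b + 2) * (2 * c + b + 2) *
    (((a + b).factorial : ℚ) * invFact (2 * b - a - 1) * invFact (2 * a + 2 - b)) * pcore b c)]
  rw [pcore_of_lt (Nat.lt_succ_self c), invFact_of_neg (z := 2 * ((0 : ℕ) : ℤ) - a - 1) (by
    push_cast; omega)]
  ring

lemma sum_xweight_eq_zero {a c : ℕ} (h : a < c) :
    ∑ b ∈ range (c + 1), xweight (a + 1) b * pcoef b c = 0 := by
  have key : ∀ a < c, (a : ℚ) * ∑ b ∈ range (c + 1), xweight a b * pcoef b c = 0 →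
      ∑ b ∈ range (c + 1), xweight (a + 1) b * pcoef b c = 0 := by
    intro a ha h0
    have hr := sum_xweight_recurrence a c
    have hca : (0 : ℚ) < (c : ℚ) - a := by
      have : (a : ℚ) < c := by exact_mod_cast ha
      linarith
    have hpos : (2 * (2 * a + 3) * ((c : ℚ) - a) * (c + a + 2)) ≠ 0 := by positivity
    refine (mul_eq_zero.mp ?_).resolve_left hpos
    linear_combination hr - (2 * c + a + 3) * (2 * c - a + 1) * h0
  induction a with
  | zero => exact key 0 h (by simp)
  | succ a ih => exact key _ h (by rw [ih (by omega), mul_zero])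

/-- The part shared by `pcoef b c` and `pcoef b (c + 1)`. -/
def pstep (b c : ℕ) : ℚ :=
  (-2) ^ b * (catalan b : ℚ) * ((2 * c + 1 - b).factorial : ℚ) * ((b + c + 1).factorial : ℚ) *
    invFact ((c : ℤ) + 1 - b) * invFact (2 * c + b + 4)

lemma pstep_of_lt {b c : ℕ} (h : c + 1 < b) : pstep b c = 0 := by
  rw [pstep, invFact_of_neg (z := (c : ℤ) + 1 - b) (by omega)]; ring

lemma pstep_succ {b c : ℕ} (h : b ≤ c + 1) :
    ((b : ℚ) + 2) * (2 * c + 1 - b) * (2 * c + b + 5) * pstep (b + 1) c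
      = - (4 * (2 * b + 1) * (c + 1 - b) * (b + c + 2)) * pstep b c := by
  rcases h.eq_or_lt with rfl | h
  · rw [pstep_of_lt (Nat.lt_succ_self _)]
    push_cast
    ring
  have hc := catalan_succ_mul b
  have f1 := cast_factorial_sub (m := 2 * c + 1) (b := b) (by omega)
  have f2 := cast_factorial_eq_succ (b + 1 + c + 1) (b + c + 1) (by ring)
  have i1 := invFact_eq_succ ((c : ℤ) + 1 - (b + 1 : ℕ)) ((c : ℤ) + 1 - b) (by push_cast; ring)
  have i2 := invFact_eq_succ (2 * (c : ℤ) + b + 4) (2 * (c : ℤ) + (b + 1 : ℕ) + 4)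
    (by push_cast; ring)
  unfold pstep
  rw [f1, f2, i1, i2, pow_succ]
  generalize invFact ((c : ℤ) + 1 - b) = x
  generalize invFact (2 * (c : ℤ) + (b + 1 : ℕ) + 4) = y
  generalize (((2 * c + 1 - (b + 1)).factorial : ℕ) : ℚ) = z
  generalize (((b + c + 1).factorial : ℕ) : ℚ) = w
  push_cast
  linear_combination (-2 * (-2 : ℚ) ^ b * (2 * c + 1 - b) * (2 * c + b + 5) * z *
    ((b + c + 2) * w) * ((c + 1 - b) * x) * y) * hc

lemma two_pow_telescope {b c : ℕ} (h : b ≤ c + 1) :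
    2 ^ b * pcoef b (c + 1) + 2 ^ b * pcoef b c
    = (2 * c + 3) * ((b + 1) * (2 * c - b + 2) * (2 * c + b + 4) * pstep b c
      - ((b + 1 : ℕ) + 1) * (2 * c - (b + 1 : ℕ) + 2) * (2 * c + (b + 1 : ℕ) + 4) *
        pstep (b + 1) c) := by
  have hs := pstep_succ h
  have f1 := cast_factorial_sub (m := 2 * (c + 1) + 1) (b := b) (by omega)
  have f2 := cast_factorial_sub (m := 2 * (c + 1)) (b := b) (by omega)
  have f3 := cast_factorial_eq_succ (b + (c + 1) + 1) (b + c + 1) (by ring)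
  have i1 := invFact_eq_succ ((c : ℤ) - b) ((c : ℤ) + 1 - b) (by ring)
  have i2 := invFact_eq_succ (2 * (c : ℤ) + b + 2) (2 * (c : ℤ) + b + 3) (by ring)
  have i3 := invFact_eq_succ (2 * (c : ℤ) + b + 3) (2 * (c : ℤ) + b + 4) (by ring)
  have hp : 2 ^ b * pcoef b (c + 1) + 2 ^ b * pcoef b c = (3 * b + 2) *
      ((2 * c + 3 - b) * (2 * c + 2 - b) * (b + c + 2)
        + (c + 1 - b) * (2 * c + b + 3) * (2 * c + b + 4)) * pstep b c := by
    unfold pcoef pcore pstep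
    rw [f1, show 2 * (c + 1) + 1 - (b + 1) = 2 * (c + 1) - b by omega, f2,
      show 2 * (c + 1) - (b + 1) = 2 * c + 1 - b by omega, f3, i1, i2, i3,
      show ((c + 1 : ℕ) : ℤ) - b = (c : ℤ) + 1 - b by push_cast; ring,
      show 2 * ((c + 1 : ℕ) : ℤ) + b + 2 = 2 * (c : ℤ) + b + 4 by push_cast; ring,
      show (-2 : ℚ) ^ b = 2 ^ b * (-1) ^ b by rw [← mul_pow]; norm_num]
    push_cast
    ring
  rw [hp]
  push_cast
  linear_combination ((2 : ℚ) * c + 3) * hs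

/-- The indicator of the even integers. -/
def evn (c : ℕ) : ℚ := if c % 2 = 0 then 1 else 0

lemma evn_succ (c : ℕ) : evn (c + 1) = 1 - evn c := by
  unfold evn
  rcases Nat.mod_two_eq_zero_or_one c with h | h <;> simp [Nat.add_mod, h]

lemma pcoef_zero (c : ℕ) : pcoef 0 c = 1 := by
  have f1 := cast_factorial_eq_succ (2 * c + 2) (2 * c + 1) (by ring)
  have f2 := cast_factorial_eq_succ (c + 1) c rfl
  have h1 : ((2 * c + 1).factorial : ℚ) ≠ 0 := by exact_mod_cast Nat.factorial_ne_zero _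
  have h2 : (c.factorial : ℚ) ≠ 0 := by exact_mod_cast Nat.factorial_ne_zero _
  unfold pcoef pcore
  rw [show (c : ℤ) - (0 : ℕ) = (c : ℕ) by simp,
    show 2 * (c : ℤ) + (0 : ℕ) + 2 = ((2 * c + 2 : ℕ) : ℤ) by push_cast; ring,
    invFact_natCast, invFact_natCast, f1, zero_add, f2]
  simp only [catalan_zero, Nat.sub_zero]
  push_cast
  field_simp
  ring

lemma sum_two_pow_pcoef (c : ℕ) : ∑ b ∈ range (c + 1), 2 ^ b * pcoef b c = evn c := by
  induction c with
  | zero => simp [pcoef_zero, evn]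
  | succ c ih =>
    have h1 : ∑ b ∈ range (c + 1 + 1), 2 ^ b * pcoef b c = evn c := by
      rw [sum_range_succ, ih, pcoef_of_lt (Nat.lt_succ_self c), mul_zero, add_zero]
    have h2 : ∑ b ∈ range (c + 1 + 1), (2 ^ b * pcoef b (c + 1) + 2 ^ b * pcoef b c) = 1 := by
      rw [sum_congr rfl fun b hb => two_pow_telescope (Nat.lt_succ_iff.mp (mem_range.mp hb)),
        ← mul_sum, sum_range_sub' (fun b : ℕ => ((b : ℚ) + 1) * (2 * c - b + 2) *
          (2 * c + b + 4) * pstep b c), pstep_of_lt (Nat.lt_succ_self _)]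
      have f1 := cast_factorial_eq_succ (2 * c + 4) (2 * c + 3) (by ring)
      have f2 := cast_factorial_eq_succ (2 * c + 3) (2 * c + 2) (by ring)
      have f3 := cast_factorial_eq_succ (2 * c + 2) (2 * c + 1) (by ring)
      have h1 : ((2 * c + 1).factorial : ℚ) ≠ 0 := by exact_mod_cast Nat.factorial_ne_zero _
      have h2 : ((c + 1).factorial : ℚ) ≠ 0 := by exact_mod_cast Nat.factorial_ne_zero _
      unfold pstep
      rw [show (c : ℤ) + 1 - (0 : ℕ) = ((c + 1 : ℕ) : ℤ) by push_cast; ring,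
        show 2 * (c : ℤ) + (0 : ℕ) + 4 = ((2 * c + 4 : ℕ) : ℤ) by push_cast; ring,
        invFact_natCast, invFact_natCast, f1, f2, f3]
      simp only [catalan_zero, Nat.sub_zero, zero_add]
      push_cast
      field_simp
      ring
    rw [sum_add_distrib, h1] at h2
    rw [evn_succ]
    linear_combination h2

lemma pcoef_self_ne_zero (c : ℕ) : pcoef c c ≠ 0 := by
  have h : (catalan c : ℚ) ≠ 0 := by
    have h1 := succ_mul_catalan_eq_centralBinom c
    have h2 := Nat.centralBinom_ne_zero c
    rw [← h1] at h2
    exact_mod_cast right_ne_zero_of_mul h2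
  unfold pcoef pcore
  rw [show (c : ℤ) - (c : ℕ) = (0 : ℕ) by simp,
    show 2 * (c : ℤ) + (c : ℕ) + 2 = ((2 * c + c + 2 : ℕ) : ℤ) by push_cast; ring,
    invFact_natCast, invFact_natCast]
  have hf : ∀ m : ℕ, (m.factorial : ℚ) ≠ 0 := fun m => by exact_mod_cast Nat.factorial_ne_zero _
  have h3 : (3 * (c : ℚ) + 2) ≠ 0 := by positivity
  simp [h, hf, h3]

/-- The binomial coefficient `binom(N, z)` for `z : ℤ`, zero at negative `z`. -/
def ch (N : ℕ) (z : ℤ) : ℚ := if z < 0 then 0 else (N.choose z.toNat : ℚ)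

/-- The sum of `binom(N, j)` over `0 ≤ j < z`. -/
def chSum (N : ℕ) (z : ℤ) : ℚ := ∑ j ∈ range z.toNat, (N.choose j : ℚ)

lemma ch_of_neg {N : ℕ} {z : ℤ} (h : z < 0) : ch N z = 0 := by simp [ch, h]

lemma ch_natCast (N k : ℕ) : ch N (k : ℤ) = (N.choose k : ℚ) := by simp [ch]

lemma ch_of_gt {N : ℕ} {z : ℤ} (h : (N : ℤ) < z) : ch N z = 0 := by
  obtain ⟨k, rfl⟩ := Int.eq_ofNat_of_zero_le (a := z) (by omega)
  rw [ch_natCast, Nat.choose_eq_zero_of_lt (by omega), Nat.cast_zero]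

lemma ch_succ (N : ℕ) (z : ℤ) : ch (N + 1) z = ch N z + ch N (z - 1) := by
  rcases lt_trichotomy z 0 with h | h | h
  · rw [ch_of_neg h, ch_of_neg h, ch_of_neg (by omega), add_zero]
  · subst h; simp [ch]
  · obtain ⟨m, rfl⟩ : ∃ m : ℕ, z = (m + 1 : ℕ) := ⟨(z - 1).toNat, by omega⟩
    rw [show ((m + 1 : ℕ) : ℤ) - 1 = (m : ℕ) by push_cast; ring, ch_natCast, ch_natCast,
      ch_natCast, Nat.choose_succ_succ]
    push_cast
    ring

lemma ch_eq_invFact (N : ℕ) (z : ℤ) :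
    ch N z = (N.factorial : ℚ) * invFact z * invFact (N - z) := by
  rcases lt_or_ge z 0 with h | h
  · rw [ch_of_neg h, invFact_of_neg h]; ring
  rcases lt_or_ge (N : ℤ) z with h' | h'
  · rw [ch_of_gt h', invFact_of_neg (z := N - z) (by omega)]; ring
  obtain ⟨k, rfl⟩ := Int.eq_ofNat_of_zero_le h
  have hk : k ≤ N := by omega
  rw [ch_natCast, show (N : ℤ) - (k : ℕ) = ((N - k : ℕ) : ℤ) by omega, invFact_natCast,
    invFact_natCast, Nat.cast_choose ℚ hk]
  field_simp

lemma chSum_of_nonpos {N : ℕ} {z : ℤ} (h : z ≤ 0) : chSum N z = 0 := by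
  rw [chSum, Int.toNat_of_nonpos h, sum_range_zero]

lemma chSum_add_one (N : ℕ) (z : ℤ) : chSum N (z + 1) = chSum N z + ch N z := by
  rcases lt_or_ge z 0 with h | h
  · rw [chSum_of_nonpos (by omega), chSum_of_nonpos (by omega), ch_of_neg h, add_zero]
  · obtain ⟨k, rfl⟩ := Int.eq_ofNat_of_zero_le h
    rw [ch_natCast, chSum, chSum, show ((k : ℤ) + 1).toNat = k + 1 by omega, sum_range_succ,
      Int.toNat_natCast]

lemma chSum_zero (z : ℤ) : chSum 0 z = if 0 < z then 1 else 0 := by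
  split_ifs with h
  · obtain ⟨k, rfl⟩ : ∃ k : ℕ, z = (k + 1 : ℕ) := ⟨(z - 1).toNat, by omega⟩
    rw [chSum, Int.toNat_natCast, sum_range_succ']
    simp
  · exact chSum_of_nonpos (by omega)

lemma chSum_succ (N : ℕ) (z : ℤ) : chSum (N + 1) z = chSum N z + chSum N (z - 1) := by
  rcases le_or_gt z 0 with h | h
  · rw [chSum_of_nonpos h, chSum_of_nonpos h, chSum_of_nonpos (by omega), add_zero]
  obtain ⟨k, rfl⟩ := Int.eq_ofNat_of_zero_le h.le
  clear h
  induction k with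
  | zero => simp [chSum]
  | succ k ih =>
    have h1 := chSum_add_one N ((k : ℤ) - 1)
    rw [sub_add_cancel] at h1
    rw [Nat.cast_succ, chSum_add_one, chSum_add_one, add_sub_cancel_right, ih, ch_succ]
    linear_combination -h1

lemma chSum_add_chSum (N : ℕ) (z : ℤ) : chSum N z + chSum N (N + 1 - z) = 2 ^ N := by
  induction N generalizing z with
  | zero =>
    rw [chSum_zero, chSum_zero]
    rcases lt_or_ge 0 z with h | h
    · rw [if_pos h, if_neg (by push_cast; omega)]; norm_num
    · rw [if_neg (by omega), if_pos (by push_cast; omega)]; norm_num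
  | succ N ih =>
    have h1 := ih z
    have h2 := ih (z - 1)
    rw [chSum_succ, chSum_succ, pow_succ,
      show ((N + 1 : ℕ) : ℤ) + 1 - z - 1 = N + 1 - z by push_cast; ring,
      show ((N + 1 : ℕ) : ℤ) + 1 - z = N + 1 - (z - 1) by push_cast; ring]
    linear_combination h1 + h2

lemma chSum_of_lt {N : ℕ} {z : ℤ} (h : (N : ℤ) < z) : chSum N z = 2 ^ N := by
  rw [← chSum_add_chSum N z, chSum_of_nonpos (z := N + 1 - z) (by omega), add_zero]

/-- The coefficients of the linear equations at the upper boundary. -/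
def bdry (a b : ℕ) : ℚ := chSum (a + b + 1) (2 * b + 1 - a)

lemma bdry_add_bdry (a b : ℕ) : bdry a b + bdry b a = 2 * 2 ^ a * 2 ^ b := by
  have h := chSum_add_chSum (a + b + 1) (2 * b + 1 - a)
  rw [show ((a + b + 1 : ℕ) : ℤ) + 1 - (2 * b + 1 - a) = 2 * a + 1 - b by push_cast; ring] at h
  rw [bdry, bdry, show b + a + 1 = a + b + 1 by ring, h]
  ring

lemma bdry_zero (b : ℕ) :
    bdry 0 b = 2 * (if b = 0 then 0 else 2 ^ b) + if b = 0 then 1 else 0 := by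
  rcases Nat.eq_zero_or_pos b with rfl | h
  · simp [bdry, chSum]
  · rw [bdry, chSum_of_lt (by push_cast; omega), if_neg (by omega), if_neg (by omega)]
    ring

lemma bdry_succ (a b : ℕ) :
    bdry (a + 1) b = 2 * bdry a b - (3 * a + 4) * xweight (a + 1) b := by
  have h1 := chSum_succ (a + b + 1) (2 * b - a)
  have h2 := chSum_add_one (a + b + 1) (2 * b - a)
  have h3 := chSum_add_one (a + b + 1) (2 * b - a - 1)
  have j1 := invFact_eq_succ (2 * (b : ℤ) - a - 1) (2 * b - a) (by ring)
  have j2 := invFact_eq_succ (2 * (a : ℤ) + 1 - b) (2 * a + 2 - b) (by ring)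
  rw [ch_eq_invFact, show ((a + b + 1 : ℕ) : ℤ) - (2 * b - a) = 2 * a + 1 - b by
    push_cast; ring, j2] at h2
  rw [ch_eq_invFact, show ((a + b + 1 : ℕ) : ℤ) - (2 * b - a - 1) = 2 * a + 2 - b by
    push_cast; ring, j1, sub_add_cancel] at h3
  unfold bdry xweight
  rw [show a + 1 + b + 1 = a + b + 1 + 1 by ring, show a + 1 + b = a + b + 1 by ring,
    show 2 * (b : ℤ) + 1 - ((a + 1 : ℕ) : ℤ) = 2 * b - a by push_cast; ring,
    show 2 * (b : ℤ) + 1 - a = 2 * b - a + 1 by ring,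
    show 2 * (b : ℤ) - ((a + 1 : ℕ) : ℤ) + 1 = 2 * b - a by push_cast; ring,
    show 2 * ((a + 1 : ℕ) : ℤ) - b = 2 * a + 2 - b by push_cast; ring, h1, h2]
  push_cast at h3 ⊢
  linear_combination -h3

lemma neg_one_pow_eq (c : ℕ) : (-1 : ℚ) ^ c = 2 * evn c - 1 := by
  induction c with
  | zero => norm_num [evn]
  | succ c ih => rw [pow_succ, ih, evn_succ]; ring

lemma sum_bdry_pcoef {a c : ℕ} (h : a ≤ c) :
    ∑ b ∈ range (c + 1), bdry a b * pcoef b c = (-1) ^ c * 2 ^ a := by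
  induction a with
  | zero =>
    have h1 := sum_two_pow_pcoef c
    rw [sum_range_succ', pcoef_zero, pow_zero, one_mul] at h1
    rw [sum_range_succ', pcoef_zero, neg_one_pow_eq]
    simp only [bdry_zero]
    simp only [Nat.add_eq_zero_iff, one_ne_zero, and_false, if_false, if_true, add_zero, mul_assoc,
      ← mul_sum]
    linear_combination 2 * h1
  | succ a ih =>
    have h1 := ih (by omega)
    have h2 := sum_xweight_eq_zero (a := a) (c := c) (by omega)
    have : ∀ b, bdry (a + 1) b * pcoef b c
        = 2 * (bdry a b * pcoef b c) - (3 * a + 4) * (xweight (a + 1) b * pcoef b c) := by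
      intro b
      rw [bdry_succ]; ring
    simp only [this]
    rw [sum_sub_distrib, ← mul_sum, ← mul_sum, h1, h2]
    ring

lemma sum_mul_pcoef (f : ℕ → ℚ) {c n : ℕ} (h : c ≤ n) :
    ∑ b ∈ range (n + 1), f b * pcoef b c = ∑ b ∈ range (c + 1), f b * pcoef b c := by
  symm
  refine sum_subset (range_mono (by omega)) fun b _ hb => ?_
  rw [pcoef_of_lt (by simpa using hb), mul_zero]

lemma eq_zero_of_sum_pcoef {f : ℕ → ℚ} {n : ℕ}
    (h : ∀ c ≤ n, ∑ b ∈ range (n + 1), f b * pcoef b c = 0) : ∀ c ≤ n, f c = 0 := by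
  intro c
  induction c using Nat.strong_induction_on with
  | _ c ih =>
    intro hc
    have h1 := h c hc
    rw [sum_mul_pcoef f hc, sum_range_succ, sum_eq_zero, zero_add] at h1
    · exact (mul_eq_zero.mp h1).resolve_right (pcoef_self_ne_zero c)
    · intro b hb
      have hb := mem_range.mp hb
      rw [ih b hb (by omega), zero_mul]

/-- The bilinear form `bdry` in the basis given by the columns of `pcoef`. -/
def gram (n c' c : ℕ) : ℚ :=
  ∑ a ∈ range (n + 1), (∑ b ∈ range (n + 1), bdry a b * pcoef b c) * pcoef a c'

lemma gram_of_le {n c' c : ℕ} (h : c' ≤ c) (hc : c ≤ n) :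
    gram n c' c = (-1) ^ c * evn c' := by
  rw [gram, sum_mul_pcoef _ (h.trans hc), ← sum_two_pow_pcoef, mul_sum]
  refine sum_congr rfl fun a ha => ?_
  have ha := mem_range.mp ha
  rw [sum_mul_pcoef _ hc, sum_bdry_pcoef (by omega)]
  ring

lemma gram_add_gram {n c' c : ℕ} (h' : c' ≤ n) (hc : c ≤ n) :
    gram n c' c + gram n c c' = 2 * evn c * evn c' := by
  have h1 : gram n c c' = ∑ a ∈ range (n + 1), (∑ b ∈ range (n + 1), bdry b a * pcoef b c)
      * pcoef a c' := by
    simp only [gram, sum_mul]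
    rw [sum_comm]
    exact sum_congr rfl fun _ _ => sum_congr rfl fun _ _ => by ring
  rw [h1, gram, ← sum_add_distrib, ← sum_two_pow_pcoef c', ← sum_mul_pcoef _ h', mul_sum]
  refine sum_congr rfl fun a _ => ?_
  rw [← add_mul, ← sum_add_distrib, ← sum_two_pow_pcoef c, ← sum_mul_pcoef _ hc]
  simp only [← add_mul, bdry_add_bdry, mul_sum, sum_mul]
  exact sum_congr rfl fun _ _ => by ring

lemma evn_mul_self (c : ℕ) : evn c * evn c = evn c := by
  unfold evn; split_ifs <;> norm_num

lemma gram_of_lt {n c' c : ℕ} (h : c < c') (hc : c' ≤ n) : gram n c' c = evn c := by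
  have h1 := gram_add_gram (n := n) (c' := c') (c := c) hc (by omega)
  rw [gram_of_le h.le hc, neg_one_pow_eq] at h1
  linear_combination h1

/-- The antisymmetric form `ε(c₁,c₂) = [c₁ = c₂ + 1] - [c₂ = c₁ + 1]`. -/
def skew (c₁ c₂ : ℕ) : ℚ := (if c₁ = c₂ + 1 then 1 else 0) - if c₂ = c₁ + 1 then 1 else 0

lemma sum_mul_skew (f : ℕ → ℚ) {n c : ℕ} (hc : c ≤ n) :
    ∑ x ∈ range (n + 1), f x * skew x c
      = (if c = n then 0 else f (c + 1)) - if c = 0 then 0 else f (c - 1) := by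
  simp only [skew, mul_sub, sum_sub_distrib, mul_ite, mul_one, mul_zero]
  congr 1
  · rw [sum_ite_eq']
    by_cases h : c = n
    · simp [h]
    · rw [if_pos (mem_range.mpr (by omega)), if_neg h]
  · rcases Nat.eq_zero_or_pos c with rfl | h
    · simp
    · obtain ⟨d, rfl⟩ : ∃ d, c = d + 1 := ⟨c - 1, by omega⟩
      simp only [Nat.add_right_cancel_iff, Nat.add_eq_zero_iff, one_ne_zero, and_false, if_false,
        Nat.add_sub_cancel]
      rw [sum_ite_eq, if_pos (mem_range.mpr (by omega))]

lemma sum_gram_skew {n c' c : ℕ} (h' : c' ≤ n) (hc : c ≤ n) :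
    ∑ x ∈ range (n + 1), gram n c' x * skew x c
      = -(if c' = c then 1 else 0) + (-1) ^ n * evn c' * if c = n then 1 else 0 := by
  rw [sum_mul_skew _ hc]
  have up : c ≠ n → gram n c' (c + 1)
      = if c' ≤ c + 1 then (-1) ^ (c + 1) * evn c' else evn (c + 1) := by
    intro h
    split_ifs with h1
    · exact gram_of_le h1 (by omega)
    · exact gram_of_lt (by omega) h'
  obtain rfl | ⟨d, rfl⟩ : c = 0 ∨ ∃ d, c = d + 1 := by
    rcases c with _ | d
    · exact Or.inl rfl
    · exact Or.inr ⟨d, rfl⟩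
  · rcases Nat.eq_zero_or_pos n with rfl | hn
    · obtain rfl : c' = 0 := by omega
      simp [evn]
    · have h0 : (0 : ℕ) ≠ n := hn.ne
      rw [if_neg h0, if_pos rfl, if_neg h0, up h0]
      rcases c' with _ | _ | c' <;> simp [evn]
  · have dn : gram n c' d = if c' ≤ d then (-1) ^ d * evn c' else evn d := by
      split_ifs with h1
      · exact gram_of_le h1 (by omega)
      · exact gram_of_lt (by omega) h'
    rw [if_neg (Nat.succ_ne_zero d), Nat.add_sub_cancel, dn]
    have e1 := evn_succ d
    have e2 := evn_succ (d + 1)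
    have e3 := evn_mul_self d
    rcases eq_or_ne (d + 1) n with h | h
    · rw [if_pos h, if_pos h, ← h]
      rcases lt_or_ge d c' with hd | hd
      · obtain rfl : c' = d + 1 := by omega
        rw [if_neg (by omega), if_pos rfl, neg_one_pow_eq, e1]
        linear_combination -2 * e3
      · rw [if_pos hd, if_neg (by omega), pow_succ]
        ring
    · rw [if_neg h, if_neg h, up h]
      rcases lt_trichotomy c' (d + 1) with hd | hd | hd
      · rw [if_pos (by omega), if_pos (by omega), if_neg (by omega)]
        ring
      · subst hd
        rw [if_pos (by omega), if_neg (by omega), if_pos rfl, pow_succ, neg_one_pow_eq, e1]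
        linear_combination -2 * e3
      · rw [if_neg (by omega : ¬ c' ≤ d), if_neg (by omega : ¬ c' = d + 1)]
        split_ifs with h2
        · obtain rfl : c' = d + 1 + 1 := by omega
          rw [neg_one_pow_eq, e2, e1]
          linear_combination 2 * e3
        · rw [e2, e1]; ring

/-- The antisymmetric matrix of the quadruple sums `t_n`, in the basis `b = n - k`. -/
def tmat (n b b' : ℕ) : ℚ :=
  ∑ x ∈ range (n + 1), ∑ y ∈ range (n + 1), pcoef b x * pcoef b' y * skew x y

lemma skew_antisymm (x y : ℕ) : skew x y = -skew y x := by unfold skew; ring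

lemma tmat_antisymm (n b b' : ℕ) : tmat n b b' = -tmat n b' b := by
  unfold tmat
  rw [sum_comm, ← sum_neg_distrib]
  refine sum_congr rfl fun x _ => ?_
  rw [← sum_neg_distrib]
  refine sum_congr rfl fun y _ => ?_
  rw [skew_antisymm]; ring

lemma sum_bdry_tmat {n a b : ℕ} (ha : a ≤ n) :
    ∑ x ∈ range (n + 1), bdry a x * tmat n x b
      = -(if a = b then 1 else 0) + (-1) ^ n * 2 ^ a * pcoef b n := by
  suffices H : ∀ a ≤ n, ∑ x ∈ range (n + 1), bdry a x * tmat n x b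
      - (-(if a = b then 1 else 0) + (-1) ^ n * 2 ^ a * pcoef b n) = 0 from sub_eq_zero.mp (H a ha)
  refine eq_zero_of_sum_pcoef fun c hc => ?_
  simp only [sub_mul, sum_sub_distrib, sub_eq_zero]
  have h1 : ∑ a ∈ range (n + 1), (∑ x ∈ range (n + 1), bdry a x * tmat n x b) * pcoef a c
      = ∑ y ∈ range (n + 1), (∑ x ∈ range (n + 1), gram n c x * skew x y) * pcoef b y := by
    simp only [tmat, gram, sum_mul, mul_sum]
    calc _ = ∑ a ∈ range (n + 1), ∑ z ∈ range (n + 1), ∑ y ∈ range (n + 1),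
        ∑ x ∈ range (n + 1), bdry a z * (pcoef z x * pcoef b y * skew x y) * pcoef a c :=
          sum_congr rfl fun _ _ => sum_congr rfl fun _ _ => sum_comm
      _ = ∑ a ∈ range (n + 1), ∑ y ∈ range (n + 1), ∑ x ∈ range (n + 1),
        ∑ z ∈ range (n + 1), bdry a z * (pcoef z x * pcoef b y * skew x y) * pcoef a c := by
          refine sum_congr rfl fun _ _ => ?_
          rw [sum_comm]
          exact sum_congr rfl fun _ _ => sum_comm
      _ = _ := by
          rw [sum_comm]
          refine sum_congr rfl fun _ _ => ?_
          rw [sum_comm]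
          exact sum_congr rfl fun _ _ => sum_congr rfl fun _ _ =>
            sum_congr rfl fun _ _ => by ring
  have h2 : ∑ y ∈ range (n + 1), (∑ x ∈ range (n + 1), gram n c x * skew x y) * pcoef b y
      = -pcoef b c + (-1) ^ n * evn c * pcoef b n := by
    rw [sum_congr rfl fun y hy => by
      rw [sum_gram_skew hc (Nat.lt_succ_iff.mp (mem_range.mp hy)), add_mul, neg_mul, ite_mul,
        mul_assoc, ite_mul, one_mul, zero_mul, mul_ite, mul_zero]]
    rw [sum_add_distrib, sum_neg_distrib, sum_ite_eq, sum_ite_eq',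
      if_pos (mem_range.mpr (by omega)), if_pos (mem_range.mpr (by omega))]
  rw [h1, h2]
  have h3 := sum_two_pow_pcoef c
  rw [← sum_mul_pcoef _ hc] at h3
  simp only [add_mul, sum_add_distrib, neg_mul, ite_mul, one_mul, zero_mul, sum_neg_distrib,
    sum_ite_eq', mem_range]
  congr 1
  · congr 1
    split_ifs with h
    · rfl
    · exact pcoef_of_lt (by omega)
  · rw [← h3, mul_sum, sum_mul]
    exact sum_congr rfl fun _ _ => by ring

lemma tmat_zero (n b : ℕ) : tmat n 0 b = (if b = 0 then 1 else 0) - pcoef b n := by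
  have hb : pcoef b 0 = if b = 0 then 1 else 0 := by
    split_ifs with h
    · rw [h, pcoef_zero]
    · exact pcoef_of_lt (by omega)
  unfold tmat
  rw [sum_comm, ← hb]
  simp only [pcoef_zero, one_mul, ← mul_sum]
  have : ∀ y ∈ range (n + 1), pcoef b y * ∑ x ∈ range (n + 1), skew x y
      = (if y = 0 then pcoef b y else 0) - (if y = n then pcoef b y else 0) := by
    intro y hy
    have h := sum_mul_skew (fun _ => 1) (Nat.lt_succ_iff.mp (mem_range.mp hy))
    simp only [one_mul] at h
    rw [h]
    split_ifs <;> ring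
  rw [sum_congr rfl this, sum_sub_distrib, sum_ite_eq', sum_ite_eq']
  simp

lemma sum_two_pow_tmat (n b : ℕ) :
    ∑ x ∈ range (n + 1), (if x = 0 then 0 else 2 ^ x) * tmat n x b
      = -(if b = 0 then 1 else 0) + evn n * pcoef b n := by
  have h := sum_bdry_tmat (n := n) (a := 0) (b := b) (Nat.zero_le _)
  simp only [bdry_zero, add_mul, sum_add_distrib, mul_assoc, ← mul_sum] at h
  have h2 : ∑ x ∈ range (n + 1), (if x = 0 then (1 : ℚ) else 0) * tmat n x b = tmat n 0 b := by
    simp [ite_mul]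
  rw [h2, tmat_zero, neg_one_pow_eq] at h
  have h3 : (if 0 = b then (1 : ℚ) else 0) = if b = 0 then 1 else 0 := by simp [eq_comm]
  rw [h3] at h
  linear_combination h / 2

open Metric Complex in
lemma integral_zpow (z : ℤ) :
    (∮ r in C(0, 1/2), r ^ z) = 2 * (Real.pi : ℂ) * I * (if z = -1 then 1 else 0) := by
  split_ifs with h
  · subst h
    simpa using circleIntegral.integral_sub_center_inv (0 : ℂ) (R := 1/2) (by norm_num)
  · simpa using circleIntegral.integral_sub_zpow_of_ne h 0 0 (1/2)

lemma ne_zero_of_mem_sphere {r : ℂ} (h : r ∈ Metric.sphere (0 : ℂ) (1/2)) : r ≠ 0 := by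
  rintro rfl
  norm_num at h

lemma one_sub_ne_zero_of_mem_closedBall {r : ℂ} (h : r ∈ Metric.closedBall (0 : ℂ) (1/2)) :
    1 - r ≠ 0 := by
  intro h0
  rw [mem_closedBall_zero_iff, ← sub_eq_zero.mp h0] at h
  norm_num at h

lemma mul_sub_one_ne_zero_of_mem_closedBall {r s : ℂ} (h : r ∈ Metric.closedBall (0 : ℂ) (1/2))
    (hs : s ∈ Metric.closedBall (0 : ℂ) (1/2)) : r * s - 1 ≠ 0 := by
  intro h0
  rw [mem_closedBall_zero_iff] at h hs
  have h1 : ‖r * s‖ = 1 := by rw [sub_eq_zero.mp h0, norm_one]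
  rw [norm_mul] at h1
  nlinarith [norm_nonneg r, norm_nonneg s]

lemma circleIntegrable_mul_zpow {f : ℂ → ℂ} (hf : ContinuousOn f (Metric.sphere 0 (1/2))) (z : ℤ) :
    CircleIntegrable (fun r => f r * r ^ z) 0 (1/2) := by
  refine ContinuousOn.circleIntegrable (by norm_num) (hf.mul fun r hr => ?_)
  exact (continuousAt_zpow₀ r z (Or.inl (ne_zero_of_mem_sphere hr))).continuousWithinAt

open Complex in
lemma integral_pow_mul_zpow (N : ℕ) (z : ℤ) :
    (∮ r in C(0, 1/2), (1 + r) ^ N * r ^ z)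
      = 2 * (Real.pi : ℂ) * I * ((ch N (-z - 1) : ℚ) : ℂ) := by
  induction N generalizing z with
  | zero =>
    simp only [pow_zero, one_mul]
    rw [integral_zpow]
    congr 1
    unfold ch
    rcases lt_trichotomy z (-1) with h | h | h
    · rw [if_neg (by omega), if_neg (by omega), Nat.choose_eq_zero_of_lt (by omega)]
      simp
    · subst h; simp
    · rw [if_neg (by omega), if_pos (by omega), Rat.cast_zero]
  | succ N ih =>
    have hint := circleIntegrable_mul_zpow (f := fun r => (1 + r) ^ N) (by fun_prop)
    have h : (∮ r in C(0, 1/2), (1 + r) ^ (N + 1) * r ^ z)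
        = ∮ r in C(0, 1/2), ((1 + r) ^ N * r ^ z + (1 + r) ^ N * r ^ (z + 1)) := by
      refine circleIntegral.integral_congr (by norm_num) fun r hr => ?_
      simp only [zpow_add_one₀ (ne_zero_of_mem_sphere hr)]
      ring
    rw [h, circleIntegral.integral_add (hint z) (hint (z + 1)), ih, ih, ch_succ,
      show -(z + 1) - 1 = -z - 1 - 1 by ring]
    push_cast
    ring

lemma continuousOn_div_one_sub (N : ℕ) :
    ContinuousOn (fun r : ℂ => (1 + r) ^ N * (1 - r)⁻¹) (Metric.closedBall 0 (1/2)) :=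
  ContinuousOn.mul (by fun_prop) (ContinuousOn.inv₀ (by fun_prop)
    fun _ hr => one_sub_ne_zero_of_mem_closedBall hr)

lemma integral_eq_zero_of_differentiable {f : ℂ → ℂ}
    (h : ∀ z ∈ Metric.closedBall (0 : ℂ) (1/2), DifferentiableAt ℂ f z) :
    (∮ r in C(0, 1/2), f r) = 0 :=
  Complex.circleIntegral_eq_zero_of_differentiable_on_off_countable (by norm_num)
    Set.countable_empty (fun z hz => (h z hz).continuousAt.continuousWithinAt)
    fun z hz => h z (Metric.ball_subset_closedBall hz.1)

open Complex in
lemma integral_div_one_sub (N : ℕ) (d : ℤ) :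
    (∮ r in C(0, 1/2), (1 + r) ^ N * (1 - r)⁻¹ * r ^ (-d))
      = 2 * (Real.pi : ℂ) * I * ((chSum N d : ℚ) : ℂ) := by
  have h0 : ∀ m : ℕ, (∮ r in C(0, 1/2), (1 + r) ^ N * (1 - r)⁻¹ * r ^ (m : ℤ)) = 0 := by
    intro m
    refine integral_eq_zero_of_differentiable fun z hz => ?_
    have := one_sub_ne_zero_of_mem_closedBall hz
    simp only [zpow_natCast]
    fun_prop (disch := assumption)
  have hint := circleIntegrable_mul_zpow
    ((continuousOn_div_one_sub N).mono Metric.sphere_subset_closedBall)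
  rcases le_or_gt d 0 with h | h
  · obtain ⟨m, rfl⟩ : ∃ m : ℕ, d = -m := ⟨(-d).toNat, by omega⟩
    rw [neg_neg, h0, chSum_of_nonpos h, Rat.cast_zero, mul_zero]
  · obtain ⟨m, rfl⟩ := Int.eq_ofNat_of_zero_le h.le
    clear h
    induction m with
    | zero => simpa [chSum_of_nonpos] using h0 0
    | succ m ih =>
      have h : (∮ r in C(0, 1/2), (1 + r) ^ N * (1 - r)⁻¹ * r ^ (-((m + 1 : ℕ) : ℤ)))
          - (∮ r in C(0, 1/2), (1 + r) ^ N * (1 - r)⁻¹ * r ^ (-(m : ℤ)))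
          = ∮ r in C(0, 1/2), (1 + r) ^ N * r ^ (-(m : ℤ) - 1) := by
        rw [← circleIntegral.integral_sub (hint _) (hint _)]
        refine circleIntegral.integral_congr (by norm_num) fun r hr => ?_
        have h1 := ne_zero_of_mem_sphere hr
        have h2 := one_sub_ne_zero_of_mem_closedBall (Metric.sphere_subset_closedBall hr)
        rw [show (-((m + 1 : ℕ) : ℤ)) = -(m : ℤ) - 1 by push_cast; ring,
          show r ^ (-(m : ℤ)) = r ^ (-(m : ℤ) - 1) * r by
            rw [← zpow_add_one₀ h1]; congr 1; ring]
        field_simp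
      rw [integral_pow_mul_zpow, show -(-(m : ℤ) - 1) - 1 = m by ring] at h
      rw [eq_add_of_sub_eq h, ih, Nat.cast_succ, chSum_add_one]
      push_cast
      ring

open Complex in
lemma integral_inv_mul_sub_one {s : ℂ} (hs : s ∈ Metric.closedBall (0 : ℂ) (1/2)) (l : ℕ) :
    (∮ r in C(0, 1/2), (r * s - 1)⁻¹ * r ^ (-(l : ℤ)))
      = -(2 * (Real.pi : ℂ) * I * (if l = 0 then 0 else s ^ (l - 1))) := by
  have hint := circleIntegrable_mul_zpow (f := fun r => (r * s - 1)⁻¹)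
    (ContinuousOn.inv₀ (by fun_prop) fun _ hr =>
      mul_sub_one_ne_zero_of_mem_closedBall (Metric.sphere_subset_closedBall hr) hs)
  have hints : ∀ z : ℤ, CircleIntegrable (fun r => s * ((r * s - 1)⁻¹ * r ^ z)) 0 (1/2) :=
    fun z => IntervalIntegrable.const_mul (hint z) s
  have h0 : (∮ r in C(0, 1/2), (r * s - 1)⁻¹ * r ^ (-((0 : ℕ) : ℤ))) = 0 := by
    simp only [Nat.cast_zero, neg_zero, zpow_zero, mul_one]
    refine integral_eq_zero_of_differentiable fun z hz => ?_
    have := mul_sub_one_ne_zero_of_mem_closedBall hz hs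
    fun_prop (disch := assumption)
  have hrec : ∀ l : ℕ, s * (∮ r in C(0, 1/2), (r * s - 1)⁻¹ * r ^ (-(l : ℤ)))
      - (∮ r in C(0, 1/2), (r * s - 1)⁻¹ * r ^ (-((l + 1 : ℕ) : ℤ)))
      = 2 * (Real.pi : ℂ) * I * (if l = 0 then 1 else 0) := by
    intro l
    have h := integral_zpow (-((l + 1 : ℕ) : ℤ))
    simp only [show (-((l + 1 : ℕ) : ℤ) = -1) ↔ l = 0 by omega] at h
    rw [← circleIntegral.integral_const_mul, ← h,
      ← circleIntegral.integral_sub (hints _) (hint _)]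
    refine circleIntegral.integral_congr (by norm_num) fun r hr => ?_
    have h1 := ne_zero_of_mem_sphere hr
    have h2 := mul_sub_one_ne_zero_of_mem_closedBall (Metric.sphere_subset_closedBall hr) hs
    rw [show r ^ (-(l : ℤ)) = r ^ (-((l + 1 : ℕ) : ℤ)) * r by
            rw [← zpow_add_one₀ h1]; congr 1; push_cast; ring]
    linear_combination r ^ (-((l + 1 : ℕ) : ℤ)) * mul_inv_cancel₀ h2
  induction l with
  | zero => rw [h0]; simp
  | succ l ih =>
    have h := hrec l
    rw [ih] at h
    rcases l with _ | l
    · simp only [if_true, mul_zero, mul_one, neg_zero, zero_sub] at h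
      simp [← h]
    · simp only [Nat.add_eq_zero_iff, one_ne_zero, and_false, if_false, Nat.add_sub_cancel,
        mul_zero] at h ⊢
      rw [pow_succ]
      linear_combination -h

open Complex in
lemma integral_skew (l₁ l₂ : ℕ) :
    (∮ s2 in C(0, 1/2), ∮ s1 in C(0, 1/2),
      (s1 - s2) / ((s1*s2 - 1) * s1^(l₁+1) * s2^(l₂+1)))
    = (2 * (Real.pi : ℂ) * I) ^ 2 *
      ((if l₂ = l₁ + 1 then 1 else 0) - if l₁ = l₂ + 1 then 1 else 0) := by
  have hin : ∀ s ∈ Metric.sphere (0 : ℂ) (1/2), (∮ s1 in C(0, 1/2),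
      (s1 - s) / ((s1*s - 1) * s1^(l₁+1) * s^(l₂+1)))
      = 2 * (Real.pi : ℂ) * I * (s ^ ((l₁ : ℤ) - l₂)
        - (if l₁ = 0 then 0 else 1) * s ^ ((l₁ : ℤ) - l₂ - 2)) := by
    intro s hs
    have hs' := Metric.sphere_subset_closedBall hs
    have hint := circleIntegrable_mul_zpow (f := fun r => (r * s - 1)⁻¹)
      (ContinuousOn.inv₀ (by fun_prop) fun _ hr =>
        mul_sub_one_ne_zero_of_mem_closedBall (Metric.sphere_subset_closedBall hr) hs')
    have hints : ∀ z : ℤ, CircleIntegrable (fun r => s * ((r * s - 1)⁻¹ * r ^ z)) 0 (1/2) :=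
      fun z => IntervalIntegrable.const_mul (hint z) s
    have hs0 := ne_zero_of_mem_sphere hs
    have h : (∮ s1 in C(0, 1/2), (s1 - s) / ((s1*s - 1) * s1^(l₁+1) * s^(l₂+1)))
        = (s ^ (l₂ + 1))⁻¹ * ((∮ r in C(0, 1/2), (r * s - 1)⁻¹ * r ^ (-(l₁ : ℤ)))
          - s * ∮ r in C(0, 1/2), (r * s - 1)⁻¹ * r ^ (-((l₁ + 1 : ℕ) : ℤ))) := by
      rw [← circleIntegral.integral_const_mul, ← circleIntegral.integral_sub (hint _)
        (hints _), ← circleIntegral.integral_const_mul]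
      refine circleIntegral.integral_congr (by norm_num) fun r hr => ?_
      have h1 := ne_zero_of_mem_sphere hr
      have h2 := mul_sub_one_ne_zero_of_mem_closedBall (Metric.sphere_subset_closedBall hr) hs'
      simp only [zpow_neg, zpow_natCast]
      field_simp
      ring
    rw [h, integral_inv_mul_sub_one hs', integral_inv_mul_sub_one hs', zpow_sub₀ hs0,
      zpow_sub₀ hs0, zpow_sub₀ hs0, zpow_natCast, zpow_natCast, if_neg (Nat.succ_ne_zero l₁)]
    rcases l₁ with _ | l
    · simp only [if_true, Nat.add_sub_cancel]
      field_simp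
      norm_cast
      ring
    · simp only [Nat.add_eq_zero_iff, one_ne_zero, and_false, if_false, Nat.add_sub_cancel]
      field_simp
      norm_cast
      ring
  rw [circleIntegral.integral_congr (by norm_num) fun s hs => hin s hs,
    circleIntegral.integral_const_mul, circleIntegral.integral_sub, integral_zpow,
    circleIntegral.integral_const_mul, integral_zpow]
  · have e1 : ((l₁ : ℤ) - l₂ = -1) ↔ l₂ = l₁ + 1 := by omega
    have e2 : ((l₁ : ℤ) - l₂ - 2 = -1) ↔ l₁ = l₂ + 1 := by omega
    have e3 : (if l₁ = 0 then (0 : ℂ) else 1) * (if l₁ = l₂ + 1 then 1 else 0)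
        = if l₁ = l₂ + 1 then 1 else 0 := by
      split_ifs <;> first | omega | simp
    simp only [e1, e2]
    linear_combination -(2 * (Real.pi : ℂ) * I) ^ 2 * e3
  · simpa using circleIntegrable_mul_zpow (f := fun _ => 1) (by fun_prop) ((l₁ : ℤ) - l₂)
  · exact circleIntegrable_mul_zpow (f := fun _ => _) (by fun_prop) ((l₁ : ℤ) - l₂ - 2)

/-- The coefficient of `r^{i-2k}` in `(1+r)^{n-k}`, with `k = n - b`. -/
def phi (n b i : ℕ) : ℚ := ch b ((i : ℤ) - 2 * ((n : ℤ) - b))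

/-- The coefficient of `r^{i-2k-1}` in `(1+r)^{n-k}(1-r)⁻¹`, with `k = n - b`. -/
def psi (n b i : ℕ) : ℚ := chSum b ((i : ℤ) - 2 * ((n : ℤ) - b))

/-- `phi` or `psi`, according to the index `e`. -/
def efun (e n b i : ℕ) : ℚ := if e = 1 then phi n b i else psi n b i

/-- The bilinear expression in `tmat` that equals `tInt`. -/
def tsum (n e₁ e₂ i j : ℕ) : ℚ :=
  ∑ b ∈ range (n + 1), ∑ b' ∈ range (n + 1), efun e₁ n b i * efun e₂ n b' j * tmat n b b'

lemma pnk_eq {n k l : ℕ} (hk : k ≤ n) (hl : l ≤ k) :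
    pnk n k l = (-1) ^ n * pcoef (n - k) (n - l) := by
  obtain ⟨b, rfl⟩ := Nat.exists_eq_add_of_le hk
  obtain ⟨d, rfl⟩ := Nat.exists_eq_add_of_le hl
  rw [pnk, pcoef, pcore, show l + d + b - (l + d) = b by omega,
    show l + d + b - l = b + d by omega, show l + d - l = d by omega,
    show l + d + b + (l + d) - 2 * l + 1 = 2 * (b + d) + 1 - b by omega,
    show 2 * (l + d + b) - (l + d) - l + 1 = b + (b + d) + 1 by omega,
    show 3 * (l + d + b) - (l + d) + 2 - 2 * l = 2 * (b + d) + b + 2 by omega,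
    show ((b + d : ℕ) : ℤ) - (b : ℤ) = (d : ℕ) by push_cast; ring,
    show 2 * ((b + d : ℕ) : ℤ) + b + 2 = ((2 * (b + d) + b + 2 : ℕ) : ℤ) by push_cast; ring,
    invFact_natCast, invFact_natCast]
  have hs : (-1 : ℚ) ^ (l + d + b) * (-1) ^ b = (-1) ^ (l + d) := by
    rw [pow_add _ (l + d), mul_assoc, ← mul_pow]; norm_num
  rw [← hs]
  push_cast
  field_simp
  ring

open Complex in
lemma integral_Afun {e n k : ℕ} (i : ℕ) (hk : k ≤ n) :
    (∮ r in C(0, 1/2), Afun e n k i r)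
      = 2 * (Real.pi : ℂ) * I * ((efun e n (n - k) i : ℚ) : ℂ) := by
  unfold Afun efun
  split_ifs with h
  · rw [integral_pow_mul_zpow, phi]
    congr 3
    omega
  · rw [show 2 * (k : ℤ) - i = -(i - 2 * k) by ring, integral_div_one_sub, psi]
    congr 3
    omega

open Complex in
lemma quadInt_eq {e₁ e₂ n k₁ k₂ : ℕ} (i j l₁ l₂ : ℕ) (h₁ : k₁ ≤ n) (h₂ : k₂ ≤ n) :
    quadInt (fun r1 r2 s1 s2 => Afun e₁ n k₁ i r1 * Afun e₂ n k₂ j r2 *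
        ((s1 - s2) / ((s1*s2 - 1) * s1^(l₁+1) * s2^(l₂+1))))
      = ((efun e₁ n (n - k₁) i : ℚ) : ℂ) * ((efun e₂ n (n - k₂) j : ℚ) : ℂ) *
        ((if l₂ = l₁ + 1 then 1 else 0) - if l₁ = l₂ + 1 then 1 else 0) := by
  unfold quadInt
  have : ∀ s1 s2 : ℂ, (∮ r2 in C(0, 1/2), ∮ r1 in C(0, 1/2),
      Afun e₁ n k₁ i r1 * Afun e₂ n k₂ j r2 *
        ((s1 - s2) / ((s1*s2 - 1) * s1^(l₁+1) * s2^(l₂+1))))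
      = (∮ r in C(0, 1/2), Afun e₁ n k₁ i r) * (∮ r in C(0, 1/2), Afun e₂ n k₂ j r) *
        ((s1 - s2) / ((s1*s2 - 1) * s1^(l₁+1) * s2^(l₂+1))) := by
    intro s1 s2
    generalize (s1 - s2) / ((s1*s2 - 1) * s1^(l₁+1) * s2^(l₂+1)) = S
    calc _ = ∮ r2 in C(0, 1/2), (S * ∮ r1 in C(0, 1/2), Afun e₁ n k₁ i r1) * Afun e₂ n k₂ j r2 := by
          congr 1
          funext r2
          rw [mul_comm S, mul_assoc, mul_comm, ← circleIntegral.integral_const_mul]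
          congr 1
          funext r1
          ring
      _ = _ := by rw [circleIntegral.integral_const_mul]; ring
  simp only [this, circleIntegral.integral_const_mul, integral_skew, integral_Afun i h₁,
    integral_Afun j h₂]
  have hpi : 2 * (Real.pi : ℂ) * I ≠ 0 := Complex.two_pi_I_ne_zero
  generalize 2 * (Real.pi : ℂ) * I = c at hpi
  field_simp

lemma sum_range_extend {n k : ℕ} (hk : k ≤ n) (f : ℕ → ℚ) :
    ∑ l ∈ range (k + 1), pcoef (n - k) (n - l) * f l
      = ∑ l ∈ range (n + 1), pcoef (n - k) (n - l) * f l := by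
  refine sum_subset (range_mono (by omega)) fun l hl hl' => ?_
  rw [mem_range] at hl hl'
  rw [pcoef_of_lt (by omega), zero_mul]

lemma sum_reflect (n : ℕ) (f : ℕ → ℚ) :
    ∑ k ∈ range (n + 1), f (n - k) = ∑ k ∈ range (n + 1), f k := by
  simpa using sum_range_reflect f (n + 1)

lemma tInt_eq (n e₁ e₂ i j : ℕ) : tInt n e₁ e₂ i j = ((tsum n e₁ e₂ i j : ℚ) : ℂ) := by
  have h1 : tInt n e₁ e₂ i j = ((∑ k₁ ∈ range (n + 1), ∑ l₁ ∈ range (k₁ + 1),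
      ∑ k₂ ∈ range (n + 1), ∑ l₂ ∈ range (k₂ + 1), pcoef (n - k₁) (n - l₁) *
        (pcoef (n - k₂) (n - l₂) *
        (efun e₁ n (n - k₁) i * efun e₂ n (n - k₂) j * skew (n - l₁) (n - l₂))) : ℚ) : ℂ) := by
    unfold tInt
    push_cast
    refine sum_congr rfl fun k₁ hk₁ => sum_congr rfl fun l₁ hl₁ => sum_congr rfl fun k₂ hk₂ =>
      sum_congr rfl fun l₂ hl₂ => ?_
    rw [mem_range] at hk₁ hl₁ hk₂ hl₂
    rw [quadInt_eq i j l₁ l₂ (by omega) (by omega), pnk_eq (by omega) (by omega),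
      pnk_eq (by omega) (by omega), skew,
      if_congr (show n - l₁ = n - l₂ + 1 ↔ l₂ = l₁ + 1 by omega) rfl rfl,
      if_congr (show n - l₂ = n - l₁ + 1 ↔ l₁ = l₂ + 1 by omega) rfl rfl]
    have hs : (-1 : ℂ) ^ n * (-1) ^ n = 1 := by rw [← mul_pow]; norm_num
    push_cast [apply_ite (Rat.cast : ℚ → ℂ)]
    linear_combination ((pcoef (n - k₁) (n - l₁) : ℚ) : ℂ) * (pcoef (n - k₂) (n - l₂) : ℚ) *
      (efun e₁ n (n - k₁) i : ℚ) * (efun e₂ n (n - k₂) j : ℚ) *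
      ((if l₂ = l₁ + 1 then 1 else 0) - if l₁ = l₂ + 1 then 1 else 0) * hs
  rw [h1]
  congr 1
  have h2 : ∀ k₁ ∈ range (n + 1), ∑ l₁ ∈ range (k₁ + 1),
      ∑ k₂ ∈ range (n + 1), ∑ l₂ ∈ range (k₂ + 1), pcoef (n - k₁) (n - l₁) *
        (pcoef (n - k₂) (n - l₂) *
        (efun e₁ n (n - k₁) i * efun e₂ n (n - k₂) j * skew (n - l₁) (n - l₂)))
      = ∑ k₂ ∈ range (n + 1),
        efun e₁ n (n - k₁) i * efun e₂ n (n - k₂) j * tmat n (n - k₁) (n - k₂) := by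
    intro k₁ hk₁
    simp only [← mul_sum]
    rw [sum_range_extend (Nat.lt_succ_iff.mp (mem_range.mp hk₁)),
      sum_congr rfl fun l₁ _ => by
        rw [sum_congr rfl fun k₂ hk₂ => by
          rw [sum_range_extend (Nat.lt_succ_iff.mp (mem_range.mp hk₂))]]]
    simp only [mul_sum]
    rw [sum_comm]
    refine sum_congr rfl fun k₂ _ => ?_
    rw [tmat, mul_sum]
    refine Eq.trans (sum_congr rfl fun l₁ _ => ?_) (sum_reflect n _)
    rw [mul_sum]
    refine Eq.trans ?_ (sum_reflect n _)
    exact sum_congr rfl fun l₂ _ => by ring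
  rw [sum_congr rfl h2, tsum]
  refine Eq.trans (sum_congr rfl fun k₁ _ => ?_) (sum_reflect n _)
  exact Eq.trans rfl (sum_reflect n fun b' => efun e₁ n (n - k₁) i * efun e₂ n b' j *
    tmat n (n - k₁) b')

/-- The rational value of `h1b`. -/
def hone (n i : ℕ) : ℚ := (-1) ^ n * ∑ b ∈ range (n + 1), pcoef b n * phi n b i

/-- The rational value of `h0b`. -/
def hzero (n i : ℕ) : ℚ := -evn i + (-1) ^ n * ∑ b ∈ range (n + 1), pcoef b n * psi n b i

lemma evn_cast (i : ℕ) : (((i + 1) % 2 : ℕ) : ℂ) = ((evn i : ℚ) : ℂ) := by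
  rcases Nat.mod_two_eq_zero_or_one i with h | h
  · simp [evn, h, show (i + 1) % 2 = 1 by omega]
  · simp [evn, h, show (i + 1) % 2 = 0 by omega]

lemma evn_succ_cast (i : ℕ) : ((i % 2 : ℕ) : ℂ) = ((evn (i + 1) : ℚ) : ℂ) := by
  rw [← evn_cast, Nat.add_assoc, Nat.add_mod_right]

open Complex in
lemma sum_pnk_mul_integral (n e i : ℕ) :
    ∑ k ∈ range (n + 1), ((pnk n k 0 : ℚ) : ℂ) * (1/(2*(Real.pi : ℂ)*I)) *
      (∮ r in C(0, 1/2), Afun e n k i r)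
      = (((-1) ^ n * ∑ b ∈ range (n + 1), pcoef b n * efun e n b i : ℚ) : ℂ) := by
  rw [← sum_reflect n, mul_sum]
  push_cast
  refine sum_congr rfl fun k hk => ?_
  have hk := Nat.lt_succ_iff.mp (mem_range.mp hk)
  have hpi : 2 * (Real.pi : ℂ) * I ≠ 0 := Complex.two_pi_I_ne_zero
  rw [integral_Afun i hk, pnk_eq hk (Nat.zero_le _), Nat.sub_zero]
  generalize 2 * (Real.pi : ℂ) * I = c at hpi
  push_cast
  field_simp

lemma h1b_eq (n i : ℕ) : h1b n i = ((hone n i : ℚ) : ℂ) := by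
  have := sum_pnk_mul_integral n 1 i
  simp only [efun, Afun, if_true] at this
  rw [hone, ← this, h1b]

lemma h0b_eq (n i : ℕ) : h0b n i = ((hzero n i : ℚ) : ℂ) := by
  have := sum_pnk_mul_integral n 0 i
  simp only [efun, Afun, zero_ne_one, if_false] at this
  rw [hzero, Rat.cast_add, Rat.cast_neg, ← this, h0b, evn_cast]

/-- The correction `1_{i<j}((i+1) mod 2)(j mod 2) - 1_{i>j}(i mod 2)((j+1) mod 2)`. -/
def theta (i j : ℕ) : ℚ :=
  (if i < j then evn i * (1 - evn j) else 0) - if j < i then (1 - evn i) * evn j else 0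

/-- The rational value of `t11`. -/
def t11Q (n i j : ℕ) : ℚ := tsum n 1 1 i j

/-- The rational value of `t10`. -/
def t10Q (n i j : ℕ) : ℚ := evn j * hone n i + tsum n 1 0 i j

/-- The rational value of `t00`. -/
def t00Q (n i j : ℕ) : ℚ := theta i j + evn j * hzero n i - evn i * hzero n j + tsum n 0 0 i j

lemma t11_eq (n i j : ℕ) : t11 n i j = ((t11Q n i j : ℚ) : ℂ) := tInt_eq n 1 1 i j

lemma t10_eq (n i j : ℕ) : t10 n i j = ((t10Q n i j : ℚ) : ℂ) := by
  rw [t10, t10Q, tInt_eq, h1b_eq, evn_cast]; push_cast; rfl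

lemma t00_eq (n i j : ℕ) : t00 n i j = ((t00Q n i j : ℚ) : ℂ) := by
  rw [t00, t00Q, tInt_eq, h0b_eq, h0b_eq, evn_cast, evn_cast, evn_succ_cast, evn_succ_cast,
    theta, evn_succ, evn_succ]
  push_cast [apply_ite (Rat.cast : ℚ → ℂ)]
  rfl

/-- The functional expressing the column values at odd vertices through those at the lowest
odd vertices. -/
def opOdd (i₁ i₂ : ℕ) : (ℕ → ℚ) →ₗ[ℚ] ℚ :=
  ∑ l ∈ range (i₁ + 1), ((-1) ^ i₂ * (-1) ^ l * (i₂.multichoose l : ℚ)) • LinearMap.proj (i₁ - l)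

/-- The functional expressing the column values at even vertices through those on the diagonal. -/
def opEven (i₁ i₂ : ℕ) : (ℕ → ℚ) →ₗ[ℚ] ℚ :=
  ∑ l ∈ range (i₂ + 1), ((-1) ^ i₂ * (i₂.choose l : ℚ)) • LinearMap.proj (i₁ + l)

lemma opOdd_apply (i₁ i₂ : ℕ) (u : ℕ → ℚ) : opOdd i₁ i₂ u
    = ∑ l ∈ range (i₁ + 1), (-1) ^ i₂ * (-1) ^ l * (i₂.multichoose l : ℚ) * u (i₁ - l) := by
  simp [opOdd, LinearMap.sum_apply]

lemma opEven_apply (i₁ i₂ : ℕ) (u : ℕ → ℚ) : opEven i₁ i₂ u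
    = ∑ l ∈ range (i₂ + 1), (-1) ^ i₂ * (i₂.choose l : ℚ) * u (i₁ + l) := by
  simp [opEven, LinearMap.sum_apply]

lemma opOdd_zero (i : ℕ) (u : ℕ → ℚ) : opOdd i 0 u = u i := by
  rw [opOdd_apply, sum_range_succ']
  simp

lemma opEven_zero (i : ℕ) (u : ℕ → ℚ) : opEven i 0 u = u i := by
  rw [opEven_apply]
  simp

lemma opOdd_zero_succ (i₂ : ℕ) (u : ℕ → ℚ) : opOdd 0 (i₂ + 1) u = -opOdd 0 i₂ u := by
  rw [opOdd_apply, opOdd_apply]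
  simp [pow_succ]

lemma opOdd_succ_succ (i₁ i₂ : ℕ) (u : ℕ → ℚ) :
    opOdd (i₁ + 1) (i₂ + 1) u = -opOdd i₁ (i₂ + 1) u - opOdd (i₁ + 1) i₂ u := by
  simp only [opOdd_apply]
  rw [sum_range_succ' _ (i₁ + 1), sum_range_succ' (fun l => (-1) ^ i₂ * (-1) ^ l * _ * _) (i₁ + 1)]
  simp only [Nat.multichoose_zero_right, Nat.multichoose_succ_succ, Nat.add_sub_add_right]
  have : ∀ l, (-1 : ℚ) ^ (i₂ + 1) * (-1) ^ (l + 1) *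
      ((i₂.multichoose (l + 1) + (i₂ + 1).multichoose l : ℕ) : ℚ) * u (i₁ - l)
      = -((-1) ^ (i₂ + 1) * (-1) ^ l * ((i₂ + 1).multichoose l : ℚ) * u (i₁ - l))
        - (-1) ^ i₂ * (-1) ^ (l + 1) * (i₂.multichoose (l + 1) : ℚ) * u (i₁ - l) := by
    intro l; push_cast; ring
  simp only [this, sum_sub_distrib, sum_neg_distrib]
  push_cast
  ring

lemma opEven_succ (i₁ i₂ : ℕ) (u : ℕ → ℚ) :
    opEven i₁ (i₂ + 1) u = -opEven i₁ i₂ u - opEven (i₁ + 1) i₂ u := by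
  simp only [opEven_apply, mul_assoc, ← mul_sum]
  rw [sum_choose_succ_mul (fun l _ => u (i₁ + l)) i₂]
  simp only [show ∀ l, i₁ + 1 + l = i₁ + (l + 1) by intro l; ring]
  ring

lemma opOdd_comm (i₁ i₂ : ℕ) (L : (ℕ → ℚ) →ₗ[ℚ] ℚ) (f : ℕ → ℕ → ℚ) :
    opOdd i₁ i₂ (fun i => L (f i)) = L (fun j => opOdd i₁ i₂ fun i => f i j) := by
  simp only [opOdd_apply]
  have : (fun j => ∑ l ∈ range (i₁ + 1),
      (-1) ^ i₂ * (-1) ^ l * (i₂.multichoose l : ℚ) * f (i₁ - l) j)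
      = ∑ l ∈ range (i₁ + 1), ((-1) ^ i₂ * (-1) ^ l * (i₂.multichoose l : ℚ)) • f (i₁ - l) := by
    ext j; simp
  rw [this, map_sum]
  simp

lemma opEven_comm (i₁ i₂ : ℕ) (L : (ℕ → ℚ) →ₗ[ℚ] ℚ) (f : ℕ → ℕ → ℚ) :
    opEven i₁ i₂ (fun i => L (f i)) = L (fun j => opEven i₁ i₂ fun i => f i j) := by
  simp only [opEven_apply]
  have : (fun j => ∑ l ∈ range (i₂ + 1), (-1) ^ i₂ * (i₂.choose l : ℚ) * f (i₁ + l) j)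
      = ∑ l ∈ range (i₂ + 1), ((-1) ^ i₂ * (i₂.choose l : ℚ)) • f (i₁ + l) := by
    ext j; simp
  rw [this, map_sum]
  simp

lemma opEven_psi (n b i N : ℕ) : opEven i N (psi n b)
    = (-1) ^ N * chSum (b + N) ((i : ℤ) + N - 2 * ((n : ℤ) - b)) := by
  induction N generalizing i with
  | zero => simp [opEven_zero, psi]
  | succ N ih =>
    rw [opEven_succ, ih, ih, ← add_assoc b, chSum_succ,
      show ((i + 1 : ℕ) : ℤ) + N - 2 * ((n : ℤ) - b) = i + (N + 1 : ℕ) - 2 * ((n : ℤ) - b) by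
        push_cast; ring,
      show (i : ℤ) + (N + 1 : ℕ) - 2 * ((n : ℤ) - b) - 1 = i + N - 2 * ((n : ℤ) - b) by
        push_cast; ring]
    ring

lemma opEven_evn (i N : ℕ) : opEven i (N + 1) evn = (-1) ^ (N + 1) * 2 ^ N := by
  induction N generalizing i with
  | zero => rw [opEven_succ, opEven_zero, opEven_zero, evn_succ]; ring
  | succ N ih => rw [opEven_succ, ih, ih]; ring

lemma theta_add_theta_succ (i j : ℕ) :
    theta i j + theta (i + 1) j = (if i < j then 1 else 0) - evn j := by
  unfold theta
  have h := evn_mul_self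
  rcases lt_trichotomy (i + 1) j with hj | rfl | hj
  · rw [if_pos (by omega), if_neg (by omega), if_pos (by omega), if_neg (by omega),
      if_pos (by omega), evn_succ]
    ring
  · rw [if_pos (by omega), if_neg (by omega), if_neg (by omega), if_neg (by omega),
      if_pos (by omega), evn_succ]
    linear_combination h i
  · rw [if_neg (by omega : ¬ i < j), if_neg (by omega : ¬ i + 1 < j), if_pos hj,
      if_neg (by omega : ¬ i < j), evn_succ]
    rcases (by omega : j = i ∨ j < i) with rfl | h'
    · rw [if_neg (by omega)]
      linear_combination -h j
    · rw [if_pos h']; ring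

lemma opEven_theta (i j N : ℕ) : opEven i (N + 1) (fun i => theta i j)
    = (-1) ^ (N + 1) * (chSum N ((j : ℤ) - i) - 2 ^ N * evn j) := by
  induction N generalizing i with
  | zero =>
    have h := theta_add_theta_succ i j
    rw [opEven_succ, opEven_zero, opEven_zero, chSum_zero]
    simp only [sub_pos, Nat.cast_lt]
    linear_combination -h
  | succ N ih =>
    rw [opEven_succ, ih, ih, chSum_succ,
      show (j : ℤ) - (i + 1 : ℕ) = j - i - 1 by push_cast; ring]
    ring

lemma opOdd_phi {n b : ℕ} (hb : b ≤ n) (j : ℕ) {s : ℕ} (hs : s ≤ b) : opOdd j s (phi n b)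
    = (-1) ^ s * ch (b - s) ((j : ℤ) - 2 * ((n : ℤ) - b)) := by
  induction s generalizing j with
  | zero => simp [opOdd_zero, phi]
  | succ s ih =>
    have hp := fun z => ch_succ (b - (s + 1)) z
    rw [show b - (s + 1) + 1 = b - s by omega] at hp
    induction j with
    | zero =>
      rw [opOdd_zero_succ, ih _ (by omega), hp, ch_of_neg (z := _ - 1) (by push_cast; omega)]
      ring
    | succ j ihj =>
      rw [opOdd_succ_succ, ihj, ih _ (by omega), hp,
        show ((j + 1 : ℕ) : ℤ) - 2 * ((n : ℤ) - b) - 1 = j - 2 * ((n : ℤ) - b) by push_cast; ring]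
      ring

lemma opOdd_phi_of_lt {n b j : ℕ} (s : ℕ) (h : j + 2 * b < 2 * n) : opOdd j s (phi n b) = 0 := by
  rw [opOdd_apply]
  refine sum_eq_zero fun l _ => ?_
  rw [phi, ch_of_neg (by omega), mul_zero]

lemma opOdd_phi_boundary {n b m : ℕ} (hb : b ≤ n) (hm : m ≤ n) :
    opOdd (2 * m + 1) (n - m) (phi n b) = 0 := by
  rcases le_or_gt (n - m) b with h | h
  · rw [opOdd_phi hb _ h, ch_of_gt (by push_cast; omega), mul_zero]
  · exact opOdd_phi_of_lt _ (by omega)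

lemma opEven_psi_boundary {n m : ℕ} (b : ℕ) (hm : m ≤ n) :
    opEven (2 * m) (n - m + 1) (psi n b) = (-1) ^ (n - m + 1) * bdry (n - m) b := by
  rw [opEven_psi, bdry, show b + (n - m + 1) = n - m + b + 1 by omega]
  congr 2
  push_cast [Nat.cast_sub hm]
  ring

lemma map_sum_mul (L : (ℕ → ℚ) →ₗ[ℚ] ℚ) (s : Finset ℕ) (f : ℕ → ℕ → ℚ) (c : ℕ → ℚ) :
    L (fun i => ∑ b ∈ s, f b i * c b) = ∑ b ∈ s, L (f b) * c b := by
  have : (fun i => ∑ b ∈ s, f b i * c b) = ∑ b ∈ s, c b • f b := by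
    ext i; simp [mul_comm]
  rw [this, map_sum]
  simp [mul_comm]

lemma map_mul_right (L : (ℕ → ℚ) →ₗ[ℚ] ℚ) (f : ℕ → ℚ) (c : ℚ) :
    L (fun i => f i * c) = L f * c := by
  have : (fun i => f i * c) = c • f := by ext i; simp [mul_comm]
  rw [this, map_smul, smul_eq_mul, mul_comm]

lemma tsum_left (n e₁ e₂ i j : ℕ) : tsum n e₁ e₂ i j = ∑ b ∈ range (n + 1), efun e₁ n b i *
    ∑ b' ∈ range (n + 1), efun e₂ n b' j * tmat n b b' := by
  simp only [tsum, mul_sum, mul_assoc]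

lemma tsum_antisymm (n e₁ e₂ i j : ℕ) : tsum n e₁ e₂ i j = -tsum n e₂ e₁ j i := by
  unfold tsum
  rw [sum_comm, ← sum_neg_distrib]
  refine sum_congr rfl fun b _ => ?_
  rw [← sum_neg_distrib]
  refine sum_congr rfl fun b' _ => ?_
  rw [tmat_antisymm]
  ring

/-- If `L` takes the values `x b` on the basis functions, it acts on `tsum` through
the vector `x * tmat`. -/
lemma map_tsum (L : (ℕ → ℚ) →ₗ[ℚ] ℚ) (n e₁ e₂ j : ℕ) :
    L (fun i => tsum n e₁ e₂ i j) = ∑ b' ∈ range (n + 1), efun e₂ n b' j *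
      ∑ b ∈ range (n + 1), L (efun e₁ n b) * tmat n b b' := by
  simp only [tsum_left]
  rw [map_sum_mul]
  simp only [mul_sum]
  rw [sum_comm]
  exact sum_congr rfl fun _ _ => sum_congr rfl fun _ _ => by ring

lemma hone_eq (n i : ℕ) :
    hone n i = ∑ b ∈ range (n + 1), phi n b i * ((-1) ^ n * pcoef b n) := by
  rw [hone, mul_sum]
  exact sum_congr rfl fun _ _ => by ring

lemma hzero_eq (n i : ℕ) :
    hzero n i = ∑ b ∈ range (n + 1), psi n b i * ((-1) ^ n * pcoef b n) - evn i := by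
  rw [hzero, mul_sum, neg_add_eq_sub]
  congr 1
  exact sum_congr rfl fun _ _ => by ring

lemma map_hone (L : (ℕ → ℚ) →ₗ[ℚ] ℚ) (n : ℕ) :
    L (hone n) = ∑ b ∈ range (n + 1), L (phi n b) * ((-1) ^ n * pcoef b n) := by
  rw [← map_sum_mul]
  exact congrArg L (funext (hone_eq n))

lemma map_hzero (L : (ℕ → ℚ) →ₗ[ℚ] ℚ) (n : ℕ) :
    L (hzero n) = ∑ b ∈ range (n + 1), L (psi n b) * ((-1) ^ n * pcoef b n) - L evn := by
  rw [← map_sum_mul, ← map_sub]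
  exact congrArg L (funext (hzero_eq n))

lemma efun_one (n b : ℕ) : efun 1 n b = phi n b := rfl

lemma efun_zero (n b : ℕ) : efun 0 n b = psi n b := rfl

lemma map_t00Q (L : (ℕ → ℚ) →ₗ[ℚ] ℚ) (n j : ℕ) : L (fun i => t00Q n i j)
    = L (fun i => theta i j) + L (hzero n) * evn j - L evn * hzero n j
      + ∑ b' ∈ range (n + 1), psi n b' j * ∑ b ∈ range (n + 1), L (psi n b) * tmat n b b' := by
  have h := map_tsum L n 0 0 j
  simp only [efun_zero] at h
  rw [← h, ← map_mul_right, ← map_mul_right, ← map_add, ← map_sub, ← map_add]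
  congr 1
  funext i
  simp only [Pi.add_apply, Pi.sub_apply, t00Q]
  ring

lemma map_t10Q_left (L : (ℕ → ℚ) →ₗ[ℚ] ℚ) (n j : ℕ) : L (fun i => t10Q n i j)
    = L (hone n) * evn j
      + ∑ b' ∈ range (n + 1), psi n b' j * ∑ b ∈ range (n + 1), L (phi n b) * tmat n b b' := by
  have h := map_tsum L n 1 0 j
  simp only [efun_zero, efun_one] at h
  rw [← h, ← map_mul_right, ← map_add]
  congr 1
  funext i
  simp only [Pi.add_apply, t10Q]
  ring

lemma map_t10Q_right (L : (ℕ → ℚ) →ₗ[ℚ] ℚ) (n j : ℕ) : L (fun i => t10Q n j i)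
    = L evn * hone n j
      - ∑ b' ∈ range (n + 1), phi n b' j * ∑ b ∈ range (n + 1), L (psi n b) * tmat n b b' := by
  have h := map_tsum L n 0 1 j
  simp only [efun_zero, efun_one] at h
  rw [← h, ← map_mul_right, ← map_sub]
  congr 1
  funext i
  simp only [Pi.sub_apply, t10Q]
  rw [tsum_antisymm]
  ring

lemma map_t11Q (L : (ℕ → ℚ) →ₗ[ℚ] ℚ) (n j : ℕ) : L (fun i => t11Q n i j)
    = ∑ b' ∈ range (n + 1), phi n b' j * ∑ b ∈ range (n + 1), L (phi n b) * tmat n b b' := by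
  have h := map_tsum L n 1 1 j
  simp only [efun_one] at h
  rw [← h]
  rfl

lemma phi_psi_zero {n b : ℕ} (hb : b ≤ n) : phi n b 0 - psi n b 1 = 0 := by
  have h := chSum_add_one b (((0 : ℕ) : ℤ) - 2 * ((n : ℤ) - b))
  rw [chSum_of_nonpos (z := ((0 : ℕ) : ℤ) - 2 * ((n : ℤ) - b)) (by push_cast; omega)] at h
  rw [phi, psi, show ((1 : ℕ) : ℤ) - 2 * ((n : ℤ) - b) = (0 : ℕ) - 2 * ((n : ℤ) - b) + 1 by
    push_cast; ring]
  linear_combination -h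

lemma phi_psi_succ (n b i : ℕ) :
    phi n b (i + 1) + phi n b i + psi n b i - psi n b (i + 2) = 0 := by
  have h := chSum_add_one b ((i : ℤ) - 2 * ((n : ℤ) - b))
  have h' := chSum_add_one b ((i : ℤ) - 2 * ((n : ℤ) - b) + 1)
  rw [phi, phi, psi, psi,
    show ((i + 1 : ℕ) : ℤ) - 2 * ((n : ℤ) - b) = i - 2 * ((n : ℤ) - b) + 1 by push_cast; ring,
    show ((i + 2 : ℕ) : ℤ) - 2 * ((n : ℤ) - b) = i - 2 * ((n : ℤ) - b) + 1 + 1 by push_cast; ring]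
  linear_combination -h - h'

lemma evn_add_two (i : ℕ) : evn (i + 2) = evn i := by rw [evn_succ, evn_succ]; ring

lemma theta_sub_theta (i j : ℕ) :
    theta i j - theta (i + 2) j = if i + 1 = j then 1 else 0 := by
  have h1 := theta_add_theta_succ i j
  have h2 := theta_add_theta_succ (i + 1) j
  have h3 : (if i < j then (1 : ℚ) else 0) - (if i + 1 < j then 1 else 0)
      = if i + 1 = j then 1 else 0 := by
    split_ifs <;> first | omega | norm_num
  rw [← h3]
  linear_combination h1 - h2

/-- The functional `u ↦ u i`. -/
abbrev ev (i : ℕ) : (ℕ → ℚ) →ₗ[ℚ] ℚ := LinearMap.proj i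

/-- If the combination `L₁` on `phi` and `L₀` on `psi` vanishes, so does the corresponding
combination of `t11Q` and `t10Q`. -/
lemma t11Q_t10Q_relation {n : ℕ} {L₁ L₀ : (ℕ → ℚ) →ₗ[ℚ] ℚ}
    (h : ∀ b ≤ n, L₁ (phi n b) + L₀ (psi n b) = 0) (he : L₀ evn = 0) (j : ℕ) :
    L₁ (fun i => t11Q n i j) - L₀ (fun i => t10Q n j i) = 0 := by
  rw [map_t11Q, map_t10Q_right, he, zero_mul, zero_sub, sub_neg_eq_add, ← sum_add_distrib]
  refine sum_eq_zero fun b' _ => ?_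
  rw [← mul_add, ← sum_add_distrib, sum_eq_zero, mul_zero]
  intro b hb
  rw [← add_mul, h b (Nat.lt_succ_iff.mp (mem_range.mp hb)), zero_mul]

/-- If the combination `L₁` on `phi` and `L₀` on `psi` vanishes, the corresponding combination of
`t10Q` and `t00Q` reduces to that of `theta`. -/
lemma t10Q_t00Q_relation {n : ℕ} {L₁ L₀ : (ℕ → ℚ) →ₗ[ℚ] ℚ}
    (h : ∀ b ≤ n, L₁ (phi n b) + L₀ (psi n b) = 0) (he : L₀ evn = 0) (j : ℕ) :
    L₁ (fun i => t10Q n i j) + L₀ (fun i => t00Q n i j) = L₀ (fun i => theta i j) := by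
  rw [map_t10Q_left, map_t00Q, map_hone, map_hzero, he]
  have h1 : ∑ b ∈ range (n + 1), L₁ (phi n b) * ((-1) ^ n * pcoef b n)
      + ∑ b ∈ range (n + 1), L₀ (psi n b) * ((-1) ^ n * pcoef b n) = 0 := by
    rw [← sum_add_distrib]
    refine sum_eq_zero fun b hb => ?_
    rw [← add_mul, h b (Nat.lt_succ_iff.mp (mem_range.mp hb)), zero_mul]
  have h2 : (∑ b' ∈ range (n + 1), psi n b' j * ∑ b ∈ range (n + 1), L₁ (phi n b) * tmat n b b')
      + ∑ b' ∈ range (n + 1), psi n b' j * ∑ b ∈ range (n + 1), L₀ (psi n b) * tmat n b b'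
      = 0 := by
    rw [← sum_add_distrib]
    refine sum_eq_zero fun b' _ => ?_
    rw [← mul_add, ← sum_add_distrib, sum_eq_zero, mul_zero]
    intro b hb
    rw [← add_mul, h b (Nat.lt_succ_iff.mp (mem_range.mp hb)), zero_mul]
  linear_combination h2 + evn j * h1

lemma t11Q_diag_zero (n j : ℕ) : t11Q n 0 j + t10Q n j 1 = 0 := by
  have h := t11Q_t10Q_relation (n := n) (L₁ := ev 0) (L₀ := -ev 1)
    (fun b hb => by simpa [sub_eq_add_neg] using phi_psi_zero hb) (by simp [evn]) j
  simpa using h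

lemma t11Q_diag_succ (n i j : ℕ) :
    t11Q n (i + 1) j + t11Q n i j - t10Q n j i + t10Q n j (i + 2) = 0 := by
  have h := t11Q_t10Q_relation (n := n) (L₁ := ev (i + 1) + ev i) (L₀ := ev i - ev (i + 2))
    (fun b _ => by
      simp only [LinearMap.add_apply, LinearMap.sub_apply, LinearMap.proj_apply]
      linear_combination phi_psi_succ n b i) (by simp [evn_add_two]) j
  simp only [LinearMap.add_apply, LinearMap.sub_apply, LinearMap.proj_apply] at h
  linear_combination h

lemma t10Q_diag_zero (n j : ℕ) : t10Q n 0 j - t00Q n 1 j = if 0 = j then 1 else 0 := by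
  have h := t10Q_t00Q_relation (n := n) (L₁ := ev 0) (L₀ := -ev 1)
    (fun b hb => by simpa [sub_eq_add_neg] using phi_psi_zero hb) (by simp [evn]) j
  simp only [LinearMap.neg_apply, LinearMap.proj_apply] at h
  rw [sub_eq_add_neg, h, theta]
  rcases Nat.eq_zero_or_pos j with rfl | hj
  · simp [evn]
  · rw [if_neg (by omega : ¬ j < 1), if_neg (by omega : ¬ 0 = j)]
    simp [evn]

lemma t10Q_diag_succ (n i j : ℕ) :
    t10Q n (i + 1) j + t10Q n i j + t00Q n i j - t00Q n (i + 2) j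
      = if i + 1 = j then 1 else 0 := by
  have h := t10Q_t00Q_relation (n := n) (L₁ := ev (i + 1) + ev i) (L₀ := ev i - ev (i + 2))
    (fun b _ => by
      simp only [LinearMap.add_apply, LinearMap.sub_apply, LinearMap.proj_apply]
      linear_combination phi_psi_succ n b i) (by simp [evn_add_two]) j
  simp only [LinearMap.add_apply, LinearMap.sub_apply, LinearMap.proj_apply] at h
  rw [← theta_sub_theta]
  linear_combination h

lemma sum_opEven_psi_tmat {n m : ℕ} (b' : ℕ) (hm : m ≤ n) :
    ∑ b ∈ range (n + 1), opEven (2 * m) (n - m + 1) (psi n b) * tmat n b b'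
      = (-1) ^ (n - m + 1) * (-(if n - m = b' then 1 else 0) + (-1) ^ n * 2 ^ (n - m) * pcoef b' n) := by
  rw [← sum_bdry_tmat (n := n) (a := n - m) (b := b') (by omega), mul_sum]
  exact sum_congr rfl fun b _ => by rw [opEven_psi_boundary b hm]; ring

lemma opEven_t10Q {n m : ℕ} (hm : m ≤ n) (j : ℕ) :
    opEven (2 * m) (n - m + 1) (fun i => t10Q n j i) = (-1) ^ (n - m + 1) * phi n (n - m) j := by
  rw [map_t10Q_right, opEven_evn]
  simp only [sum_opEven_psi_tmat _ hm]
  have : ∀ b', phi n b' j * ((-1) ^ (n - m + 1) * (-(if n - m = b' then 1 else 0)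
      + (-1) ^ n * 2 ^ (n - m) * pcoef b' n))
      = (-1) ^ (n - m + 1) * (-(if n - m = b' then phi n b' j else 0)
        + 2 ^ (n - m) * (phi n b' j * ((-1) ^ n * pcoef b' n))) := by
    intro b'; split_ifs <;> ring
  simp only [this, ← mul_sum, sum_add_distrib, sum_neg_distrib, ← hone_eq]
  rw [sum_ite_eq, if_pos (mem_range.mpr (by omega))]
  ring

lemma opEven_t00Q {n m : ℕ} (hm : m ≤ n) (j : ℕ) :
    opEven (2 * m) (n - m + 1) (fun i => t00Q n i j) = 0 := by
  rw [map_t00Q, opEven_evn, map_hzero, opEven_evn, opEven_theta]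
  simp only [sum_opEven_psi_tmat _ hm]
  have h1 : ∀ b', psi n b' j * ((-1) ^ (n - m + 1) * (-(if n - m = b' then 1 else 0)
      + (-1) ^ n * 2 ^ (n - m) * pcoef b' n))
      = (-1) ^ (n - m + 1) * (-(if n - m = b' then psi n b' j else 0)
        + 2 ^ (n - m) * (psi n b' j * ((-1) ^ n * pcoef b' n))) := by
    intro b'; split_ifs <;> ring
  have h2 : ∑ b ∈ range (n + 1), opEven (2 * m) (n - m + 1) (psi n b) * ((-1) ^ n * pcoef b n)
      = (-1) ^ (n - m + 1) * 2 ^ (n - m) := by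
    have h := sum_bdry_pcoef (a := n - m) (c := n) (by omega)
    have hs : (-1 : ℚ) ^ n * (-1) ^ n = 1 := by rw [← mul_pow]; norm_num
    calc _ = (-1) ^ (n - m + 1) * (-1) ^ n * ∑ b ∈ range (n + 1), bdry (n - m) b * pcoef b n := by
          rw [mul_sum]
          exact sum_congr rfl fun b _ => by rw [opEven_psi_boundary b hm]; ring
      _ = _ := by
          rw [h]
          linear_combination (-1) ^ (n - m + 1) * 2 ^ (n - m) * hs
  have h3 : ((j : ℤ) - (2 * m : ℕ)) = (j : ℤ) - 2 * ((n : ℤ) - (n - m : ℕ)) := by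
    push_cast [Nat.cast_sub hm]; ring
  have h4 := hzero_eq n j
  simp only [h1, h2, ← mul_sum, sum_add_distrib, sum_neg_distrib, h3]
  rw [sum_ite_eq, if_pos (mem_range.mpr (by omega)), psi]
  linear_combination -(-1) ^ (n - m + 1) * 2 ^ (n - m) * h4

lemma opOdd_t11Q {n m : ℕ} (hm : m ≤ n) (j : ℕ) :
    opOdd (2 * m + 1) (n - m) (fun i => t11Q n i j) = 0 := by
  rw [map_t11Q]
  refine sum_eq_zero fun b' _ => ?_
  rw [sum_eq_zero, mul_zero]
  intro b hb
  rw [opOdd_phi_boundary (Nat.lt_succ_iff.mp (mem_range.mp hb)) hm, zero_mul]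

lemma opOdd_t10Q {n m : ℕ} (hm : m ≤ n) (j : ℕ) :
    opOdd (2 * m + 1) (n - m) (fun i => t10Q n i j) = 0 := by
  have h : ∀ b ∈ range (n + 1), opOdd (2 * m + 1) (n - m) (phi n b) = 0 := fun b hb =>
    opOdd_phi_boundary (Nat.lt_succ_iff.mp (mem_range.mp hb)) hm
  rw [map_t10Q_left, map_hone, sum_eq_zero fun b hb => by rw [h b hb, zero_mul], zero_mul, zero_add]
  refine sum_eq_zero fun b' _ => ?_
  rw [sum_eq_zero fun b hb => by rw [h b hb, zero_mul], mul_zero]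

lemma psi_two_mul (n b : ℕ) : psi n b (2 * n) = if b = 0 then 0 else 2 ^ b := by
  rw [psi, show ((2 * n : ℕ) : ℤ) - 2 * ((n : ℤ) - b) = 2 * b by push_cast; ring]
  split_ifs with h
  · subst h; exact chSum_of_nonpos (by simp)
  · exact chSum_of_lt (by omega)

lemma psi_corner (n b : ℕ) :
    phi (n + 1) b (2 * n + 1) + psi (n + 1) b (2 * n + 1) = if b = 0 then 0 else 2 ^ b := by
  have h := chSum_add_one b (2 * (b : ℤ) - 1)
  rw [← psi_two_mul (n + 1), phi, psi, psi,
    show ((2 * n + 1 : ℕ) : ℤ) - 2 * (((n + 1 : ℕ) : ℤ) - b) = 2 * b - 1 by push_cast; ring,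
    show ((2 * (n + 1) : ℕ) : ℤ) - 2 * (((n + 1 : ℕ) : ℤ) - b) = 2 * b - 1 + 1 by push_cast; ring]
  linear_combination -h

lemma phi_base {n j : ℕ} (h : j < 2 * n) : phi n 0 j = 0 := ch_of_neg (by push_cast; omega)

lemma psi_base {n j : ℕ} (h : j ≤ 2 * n) : psi n 0 j = 0 := chSum_of_nonpos (by push_cast; omega)

lemma sum_two_pow_pcoef' (n : ℕ) :
    ∑ b ∈ range (n + 1), (if b = 0 then 0 else 2 ^ b) * pcoef b n = evn n - 1 := by
  have h1 := sum_two_pow_pcoef n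
  rw [sum_range_succ', pcoef_zero, pow_zero, one_mul] at h1
  rw [sum_range_succ']
  simp only [Nat.add_eq_zero_iff, one_ne_zero, and_false, if_false, if_true, zero_mul, add_zero]
  linear_combination h1

lemma sum_mul_corner (n : ℕ) (f : ℕ → ℚ) :
    ∑ b ∈ range (n + 1), f b * (-(if b = 0 then 1 else 0) + evn n * pcoef b n)
      = -f 0 + evn n * ∑ b ∈ range (n + 1), f b * pcoef b n := by
  have : ∀ b, f b * (-(if b = 0 then 1 else 0) + evn n * pcoef b n)
      = -(if b = 0 then f b else 0) + evn n * (f b * pcoef b n) := by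
    intro b; split_ifs <;> ring
  simp only [this, sum_add_distrib, sum_neg_distrib, ← mul_sum, sum_ite_eq']
  simp

lemma t10Q_corner {n : ℕ} (hn : evn n = 1) {j : ℕ} (hj : j < 2 * n) : t10Q n j (2 * n) = 0 := by
  have h := map_t10Q_right (ev (2 * n)) n j
  simp only [LinearMap.proj_apply, psi_two_mul, sum_two_pow_tmat] at h
  rw [sum_mul_corner, phi_base hj, hone, neg_one_pow_eq, hn] at h
  have : evn (2 * n) = 1 := by simp [evn]
  rw [h, this]
  simp only [mul_comm (pcoef _ n)]
  ring

lemma t00Q_corner {n : ℕ} (hn : evn n = 1) {j : ℕ} (hj : j ≤ 2 * n) : t00Q n (2 * n) j = 0 := by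
  have h := map_t00Q (ev (2 * n)) n j
  have he : evn (2 * n) = 1 := by simp [evn]
  have ht : theta (2 * n) j = 0 := by rw [theta, if_neg (by omega), he]; simp
  have h1 : hzero n (2 * n) = -1 := by
    rw [hzero]
    simp only [psi_two_mul, mul_comm (pcoef _ n), sum_two_pow_pcoef', hn, he]
    ring
  simp only [LinearMap.proj_apply, psi_two_mul, sum_two_pow_tmat] at h
  rw [sum_mul_corner, psi_base hj, hn, ht, he, h1] at h
  rw [h, hzero, neg_one_pow_eq, hn]
  simp only [mul_comm (pcoef _ n)]
  ring

lemma t11Q_corner {n : ℕ} (hn : evn (n + 1) = 0) {j : ℕ} (hj : j < 2 * (n + 1)) :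
    t11Q (n + 1) (2 * n + 1) j - t10Q (n + 1) j (2 * n + 1) = 0 := by
  have h1 := map_t11Q (ev (2 * n + 1)) (n + 1) j
  have h2 := map_t10Q_right (ev (2 * n + 1)) (n + 1) j
  have he : evn (2 * n + 1) = 0 := by simp [evn]
  simp only [LinearMap.proj_apply] at h1 h2
  rw [h1, h2, he, zero_mul, zero_sub, sub_neg_eq_add, ← sum_add_distrib]
  simp only [← mul_add, ← sum_add_distrib, ← add_mul, psi_corner, sum_two_pow_tmat]
  rw [sum_mul_corner, phi_base hj, hn]
  ring

lemma t10Q_t00Q_corner {n : ℕ} (hn : evn (n + 1) = 0) {j : ℕ} (hj : j ≤ 2 * (n + 1)) :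
    t10Q (n + 1) (2 * n + 1) j + t00Q (n + 1) (2 * n + 1) j
      = if 2 * (n + 1) = j then 1 else 0 := by
  have h1 := map_t10Q_left (ev (2 * n + 1)) (n + 1) j
  have h2 := map_t00Q (ev (2 * n + 1)) (n + 1) j
  have he : evn (2 * n + 1) = 0 := by simp [evn]
  simp only [LinearMap.proj_apply] at h1 h2
  have h3 : hone (n + 1) (2 * n + 1) + hzero (n + 1) (2 * n + 1) = 1 := by
    rw [hone, hzero, he, neg_zero, zero_add, ← mul_add, ← sum_add_distrib]
    simp only [← mul_add, psi_corner]
    simp only [mul_comm (pcoef _ (n + 1)), sum_two_pow_pcoef', hn, neg_one_pow_eq]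
    ring
  have h4 : (∑ b' ∈ range (n + 1 + 1), psi (n + 1) b' j *
        ∑ b ∈ range (n + 1 + 1), phi (n + 1) b (2 * n + 1) * tmat (n + 1) b b')
      + ∑ b' ∈ range (n + 1 + 1), psi (n + 1) b' j *
        ∑ b ∈ range (n + 1 + 1), psi (n + 1) b (2 * n + 1) * tmat (n + 1) b b' = 0 := by
    rw [← sum_add_distrib]
    simp only [← mul_add, ← sum_add_distrib, ← add_mul, psi_corner, sum_two_pow_tmat]
    rw [sum_mul_corner, psi_base hj, hn]
    ring
  have h5 : theta (2 * n + 1) j + evn j = if 2 * (n + 1) = j then 1 else 0 := by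
    rw [theta, he]
    rcases (by omega : j < 2 * n + 1 ∨ j = 2 * n + 1 ∨ j = 2 * (n + 1)) with h | rfl | rfl
    · rw [if_neg (by omega), if_pos h, if_neg (by omega)]; ring
    · simp only [lt_irrefl, if_false]
      rw [he, if_neg (by omega)]; ring
    · rw [if_pos (by omega), if_neg (by omega), if_pos rfl]
      simp [evn]
  rw [h1, h2, he, ← h5]
  linear_combination h4 + evn j * h3

lemma mem_Vfin {n : ℕ} {x : ℤ × ℤ} : x ∈ Vfin n ↔ memV n x := by
  simp only [Vfin, mem_filter, mem_product, mem_Icc, and_iff_right_iff_imp]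
  rintro ⟨h1, h2, h3, h4, -⟩
  omega

lemma kfunC_left (x₁ x₂ : ℤ) (z : ℤ × ℤ) : kfunC (x₁, x₂) z
    = (if (x₁ + x₂) % 2 = 0 then (if z = (x₁ - 1, x₂) then 1 else 0)
          + (if z = (x₁, x₂ + 1) then 1 else 0) + (if z = (x₁, x₂ - 1) then 1 else 0) else 0)
      + if x₁ = x₂ then (if z = (x₁ - 1, x₂ - 1) then 1 else 0) else 0 := by
  obtain ⟨z₁, z₂⟩ := z
  simp only [kfunC, Prod.mk.injEq]
  by_cases h : (x₁ + x₂) % 2 = 0 ∧ (z₁ = x₁ - 1 ∧ z₂ = x₂)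
  · rw [if_pos (by omega), if_pos h.1, if_pos h.2, if_neg (by omega), if_neg (by omega)]
    split_ifs <;> first | omega | norm_num
  by_cases h : (x₁ + x₂) % 2 = 0 ∧ (z₁ = x₁ ∧ z₂ = x₂ + 1)
  · rw [if_pos (by omega), if_pos h.1, if_neg (by omega), if_pos h.2, if_neg (by omega)]
    split_ifs <;> first | omega | norm_num
  by_cases h : (x₁ + x₂) % 2 = 0 ∧ (z₁ = x₁ ∧ z₂ = x₂ - 1)
  · rw [if_pos (by omega), if_pos h.1, if_neg (by omega), if_neg (by omega), if_pos h.2]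
    split_ifs <;> first | omega | norm_num
  split_ifs <;> first | omega | norm_num

lemma kfunC_right (x₁ x₂ : ℤ) (z : ℤ × ℤ) : kfunC z (x₁, x₂)
    = (if (x₁ + x₂) % 2 = 0 then 0 else (if z = (x₁ + 1, x₂) then 1 else 0)
          + (if z = (x₁, x₂ + 1) then 1 else 0) + (if z = (x₁, x₂ - 1) then 1 else 0))
      + if x₁ = x₂ then (if z = (x₁ + 1, x₂ + 1) then 1 else 0) else 0 := by
  obtain ⟨z₁, z₂⟩ := z
  simp only [kfunC, Prod.mk.injEq]
  by_cases h : ¬ (x₁ + x₂) % 2 = 0 ∧ (z₁ = x₁ + 1 ∧ z₂ = x₂)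
  · rw [if_pos (by omega), if_neg h.1, if_pos h.2, if_neg (by omega), if_neg (by omega)]
    split_ifs <;> first | omega | norm_num
  by_cases h : ¬ (x₁ + x₂) % 2 = 0 ∧ (z₁ = x₁ ∧ z₂ = x₂ + 1)
  · rw [if_pos (by omega), if_neg h.1, if_neg (by omega), if_pos h.2, if_neg (by omega)]
    split_ifs <;> first | omega | norm_num
  by_cases h : ¬ (x₁ + x₂) % 2 = 0 ∧ (z₁ = x₁ ∧ z₂ = x₂ - 1)
  · rw [if_pos (by omega), if_neg h.1, if_neg (by omega), if_neg (by omega), if_pos h.2]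
    split_ifs <;> first | omega | norm_num
  split_ifs <;> first | omega | norm_num

lemma KmatC_mulVec {n : ℕ} {f : ℤ × ℤ → ℂ} (hf : ∀ p, ¬ memV n p → f p = 0)
    (x₁ x₂ : ℤ) (hx : (x₁, x₂) ∈ Vfin n) :
    (KmatC n).mulVec (fun z => f z.val) ⟨(x₁, x₂), hx⟩
      = (if (x₁ + x₂) % 2 = 0 then f (x₁ - 1, x₂) + f (x₁, x₂ + 1) + f (x₁, x₂ - 1)
          else -(f (x₁ + 1, x₂) + f (x₁, x₂ + 1) + f (x₁, x₂ - 1)))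
        + if x₁ = x₂ then f (x₁ - 1, x₂ - 1) - f (x₁ + 1, x₂ + 1) else 0 := by
  have h : ∀ p, ∑ z ∈ Vfin n, (if z = p then (1 : ℂ) else 0) * f z = f p := by
    intro p
    simp only [ite_mul, one_mul, zero_mul, sum_ite_eq']
    split_ifs with hp
    · rfl
    · rw [hf p fun h => hp (mem_Vfin.mpr h)]
  have h1 : (KmatC n).mulVec (fun z => f z.val) ⟨(x₁, x₂), hx⟩
      = ∑ z ∈ Vfin n, (kfunC (x₁, x₂) z - kfunC z (x₁, x₂)) * f z := by
    simp only [Matrix.mulVec, dotProduct, KmatC]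
    exact Finset.sum_coe_sort (Vfin n) fun z => (kfunC (x₁, x₂) z - kfunC z (x₁, x₂)) * f z
  rw [h1]
  simp only [kfunC_left, kfunC_right]
  by_cases he : (x₁ + x₂) % 2 = 0
  · simp only [if_pos he]
    by_cases hd : x₁ = x₂
    · simp only [if_pos hd, add_mul, sub_mul, sum_add_distrib, sum_sub_distrib, h, zero_add]
      ring
    · simp only [if_neg hd, add_mul, sub_mul, sum_add_distrib, sum_sub_distrib, h, zero_mul,
        sum_const_zero]
      ring
  · have hd : ¬ x₁ = x₂ := by omega
    simp only [if_neg he, if_neg hd, add_mul, sub_mul, sum_add_distrib, sum_sub_distrib, h,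
      zero_mul, sum_const_zero]
    ring

/-- The vector on the vertices with values `V₀ x₁ s` at `(x₁, x₁ + 2s)` and `V₁ x₁ s` at
`(x₁, x₁ + 2s + 1)`, the value at the corner being fixed by the last diagonal equation. -/
def colVec (n : ℕ) (V₀ V₁ : ℕ → ℕ → ℚ) (p : ℤ × ℤ) : ℚ :=
  if memV n p then
    if p.1 = 2 * n ∧ p.2 = 2 * n + 1 then -V₁ (2 * n - 1) 0 - V₀ (2 * n - 1) 0
    else if (p.2 - p.1) % 2 = 0 then V₀ p.1.toNat ((p.2 - p.1) / 2).toNat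
    else V₁ p.1.toNat ((p.2 - p.1) / 2).toNat
  else 0

section

variable {n : ℕ} {V₀ V₁ : ℕ → ℕ → ℚ}

lemma colVec_out {p : ℤ × ℤ} (h : ¬ memV n p) : colVec n V₀ V₁ p = 0 := if_neg h

lemma colVec_even {z₁ z₂ : ℤ} (a s : ℕ) (h₁ : z₁ = a) (h₂ : z₂ = a + 2 * s) (ha : a ≤ 2 * n)
    (hs : a + 2 * s ≤ 2 * n + 1) : colVec n V₀ V₁ (z₁, z₂) = V₀ a s := by
  have hm : memV n (z₁, z₂) := by
    refine ⟨?_, ?_, ?_, ?_, ?_⟩ <;> simp only <;> omega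
  rw [colVec, if_pos hm, if_neg (by simp only; omega), if_pos (by simp only; omega)]
  simp only
  congr 1 <;> omega

lemma colVec_odd {z₁ z₂ : ℤ} (a s : ℕ) (h₁ : z₁ = a) (h₂ : z₂ = a + 2 * s + 1) (ha : a < 2 * n)
    (hs : a + 2 * s ≤ 2 * n) : colVec n V₀ V₁ (z₁, z₂) = V₁ a s := by
  have hm : memV n (z₁, z₂) := by
    refine ⟨?_, ?_, ?_, ?_, ?_⟩ <;> simp only <;> omega
  rw [colVec, if_pos hm, if_neg (by simp only; omega), if_neg (by simp only; omega)]
  simp only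
  congr 1 <;> omega

lemma colVec_corner (hn : n % 2 = 0) :
    colVec n V₀ V₁ (2 * n, 2 * n + 1) = -V₁ (2 * n - 1) 0 - V₀ (2 * n - 1) 0 := by
  have hm : memV n (2 * n, 2 * n + 1) := by
    refine ⟨?_, ?_, ?_, ?_, ?_⟩ <;> simp only <;> omega
  rw [colVec, if_pos hm, if_pos ⟨rfl, rfl⟩]

end

/-- The equations satisfied by the column of `K_n⁻¹` at the vertex `y`. -/
structure IsColumn (n : ℕ) (y : ℤ × ℤ) (V₀ V₁ : ℕ → ℕ → ℚ) : Prop where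
  odd : ∀ i s, V₀ (i + 1) s + V₀ i (s + 1) + V₀ i s
    = -if y = ((i : ℤ), (i : ℤ) + 2 * s + 1) then 1 else 0
  even_zero : ∀ s, V₁ 0 (s + 1) + V₁ 0 s
    = if y = ((0 : ℤ), (0 : ℤ) + 2 * ((s + 1 : ℕ) : ℤ)) then 1 else 0
  even_succ : ∀ i s, V₁ i (s + 1) + V₁ (i + 1) (s + 1) + V₁ (i + 1) s
    = if y = (((i + 1 : ℕ) : ℤ), ((i + 1 : ℕ) : ℤ) + 2 * ((s + 1 : ℕ) : ℤ)) then 1 else 0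
  diag_zero : V₁ 0 0 - V₀ 1 0 = if y = ((0 : ℤ), (0 : ℤ)) then 1 else 0
  diag_succ : ∀ i, V₁ (i + 1) 0 + V₁ i 0 + V₀ i 0 - V₀ (i + 2) 0
    = if y = (((i + 1 : ℕ) : ℤ), ((i + 1 : ℕ) : ℤ)) then 1 else 0
  top_even : ∀ m < n, V₀ (2 * m) (n - m + 1) = 0
  top_odd : ∀ m < n, V₁ (2 * m + 1) (n - m) = 0
  corner_even : n % 2 = 0 → V₀ (2 * n) 0 = 0
  corner_odd : n % 2 = 1 → V₁ (2 * n - 1) 0 + V₀ (2 * n - 1) 0 = 0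

/-- The row of `K_n` at the vertex `(x₁, x₂)` applied to a function on `ℤ × ℤ`. -/
def rowVal (f : ℤ × ℤ → ℚ) (x₁ x₂ : ℤ) : ℚ :=
  (if (x₁ + x₂) % 2 = 0 then f (x₁ - 1, x₂) + f (x₁, x₂ + 1) + f (x₁, x₂ - 1)
      else -(f (x₁ + 1, x₂) + f (x₁, x₂ + 1) + f (x₁, x₂ - 1)))
    + if x₁ = x₂ then f (x₁ - 1, x₂ - 1) - f (x₁ + 1, x₂ + 1) else 0

lemma IsColumn.rowVal_eq {n : ℕ} (hn : 1 ≤ n) {y : ℤ × ℤ} (hy : y.1 < 2 * n)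
    {V₀ V₁ : ℕ → ℕ → ℚ} (H : IsColumn n y V₀ V₁) {x₁ x₂ : ℤ} (hx : memV n (x₁, x₂)) :
    rowVal (colVec n V₀ V₁) x₁ x₂ = if y = (x₁, x₂) then 1 else 0 := by
  obtain ⟨hx0, hx1, hx2, hx3, hx4⟩ := hx
  simp only at hx0 hx1 hx2 hx3 hx4
  obtain ⟨i, rfl⟩ := Int.eq_ofNat_of_zero_le hx0
  rcases Int.emod_two_eq_zero_or_one (x₂ - i) with hp | hp
  · obtain ⟨s, rfl⟩ : ∃ s : ℕ, x₂ = i + 2 * s := ⟨((x₂ - i) / 2).toNat, by omega⟩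
    rw [rowVal, if_pos (by omega)]
    rcases s with _ | s
    · simp only [Nat.cast_zero, mul_zero, add_zero, if_true]
      have hbelow : colVec n V₀ V₁ ((i : ℤ), (i : ℤ) - 1) = 0 :=
        colVec_out (by rintro ⟨-, -, h, -⟩; simp only at h; omega)
      rw [hbelow]
      rcases (by omega : i < 2 * n ∨ i = 2 * n) with hi | hi
      · have habove : colVec n V₀ V₁ ((i : ℤ), (i : ℤ) + 1) = V₁ i 0 :=
          colVec_odd i 0 rfl (by simp) hi (by omega)
        have hnext : colVec n V₀ V₁ ((i : ℤ) + 1, (i : ℤ) + 1) = V₀ (i + 1) 0 :=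
          colVec_even (i + 1) 0 (by simp) (by simp) (by omega) (by omega)
        rw [habove, hnext]
        rcases i with _ | i
        · have h := H.diag_zero
          rw [colVec_out (p := (((0 : ℕ) : ℤ) - 1, _)) (by rintro ⟨h, -⟩; simp only at h; omega),
            colVec_out (p := (((0 : ℕ) : ℤ) - 1, _)) (by rintro ⟨h, -⟩; simp only at h; omega)]
          simp only [Nat.cast_zero]
          linear_combination h
        · have hleft : colVec n V₀ V₁ (((i + 1 : ℕ) : ℤ) - 1, ((i + 1 : ℕ) : ℤ)) = V₁ i 0 :=
            colVec_odd i 0 (by simp) (by simp) (by omega) (by omega)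
          have hprev : colVec n V₀ V₁ (((i + 1 : ℕ) : ℤ) - 1, ((i + 1 : ℕ) : ℤ) - 1) = V₀ i 0 :=
            colVec_even i 0 (by simp) (by simp) (by omega) (by omega)
          rw [hleft, hprev, ← H.diag_succ i]
          ring
      · subst hi
        have hnext : colVec n V₀ V₁ (((2 * n : ℕ) : ℤ) + 1, ((2 * n : ℕ) : ℤ) + 1) = 0 :=
          colVec_out (by rintro ⟨-, h, -⟩; simp only at h; omega)
        have hleft : colVec n V₀ V₁ (((2 * n : ℕ) : ℤ) - 1, ((2 * n : ℕ) : ℤ))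
            = V₁ (2 * n - 1) 0 :=
          colVec_odd (2 * n - 1) 0 (by omega) (by omega) (by omega) (by omega)
        have hprev : colVec n V₀ V₁ (((2 * n : ℕ) : ℤ) - 1, ((2 * n : ℕ) : ℤ) - 1)
            = V₀ (2 * n - 1) 0 :=
          colVec_even (2 * n - 1) 0 (by omega) (by omega) (by omega) (by omega)
        rw [if_neg (by rintro rfl; simp only at hy; omega), hnext, hleft, hprev]
        rcases Nat.mod_two_eq_zero_or_one n with h2 | h2
        · have h := colVec_corner (V₀ := V₀) (V₁ := V₁) h2
          rw [Nat.cast_mul, Nat.cast_ofNat, h]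
          ring
        · rw [colVec_out (by
            rintro ⟨-, -, -, -, h⟩; exact h ⟨h2, by push_cast; rfl, by push_cast; rfl⟩)]
          linear_combination H.corner_odd h2
    · rw [if_neg (by omega), colVec_odd (z₂ := _ - 1) i s rfl (by omega) (by omega) (by omega)]
      have htop : colVec n V₀ V₁ (i, i + 2 * ((s + 1 : ℕ) : ℤ) + 1) = V₁ i (s + 1) := by
        rcases (by omega : i + 2 * (s + 1) ≤ 2 * n ∨ i + 2 * (s + 1) = 2 * n + 1) with h | h
        · exact colVec_odd i (s + 1) rfl rfl (by omega) h
        · obtain ⟨m, rfl⟩ : ∃ m, i = 2 * m + 1 := ⟨i / 2, by omega⟩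
          rw [show s + 1 = n - m by omega, H.top_odd m (by omega),
            colVec_out (by rintro ⟨-, -, -, h, -⟩; simp only at h; omega)]
      rw [htop]
      rcases i with _ | i
      · rw [colVec_out (by rintro ⟨h, -⟩; simp only at h; omega)]
        simp only [Nat.cast_zero]
        rw [← H.even_zero s]
        ring
      · rw [colVec_odd i (s + 1) (by simp) (by omega) (by omega) (by omega), ← H.even_succ i s]
        ring
  · obtain ⟨s, rfl⟩ : ∃ s : ℕ, x₂ = i + 2 * s + 1 := ⟨((x₂ - i) / 2).toNat, by omega⟩
    rw [rowVal, if_neg (by omega), if_neg (by omega), add_zero,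
      colVec_even (z₂ := _ - 1) i s rfl (by omega) (by omega) (by omega)]
    rcases (by omega : i < 2 * n ∨ i = 2 * n) with hi | hi
    · have htop : colVec n V₀ V₁ (i, i + 2 * (s : ℤ) + 1 + 1) = V₀ i (s + 1) := by
        rcases (by omega : i + 2 * (s + 1) ≤ 2 * n + 1 ∨ i + 2 * s = 2 * n) with h | h
        · exact colVec_even i (s + 1) rfl (by push_cast; ring) (by omega) h
        · obtain ⟨m, rfl⟩ : ∃ m, i = 2 * m := ⟨i / 2, by omega⟩
          rw [show s + 1 = n - m + 1 by omega, H.top_even m (by omega),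
            colVec_out (by rintro ⟨-, -, -, h, -⟩; simp only at h; omega)]
      rw [htop, colVec_even (i + 1) s (by simp) (by push_cast; ring) (by omega) (by omega),
        H.odd i s, neg_neg]
    · obtain rfl : s = 0 := by omega
      subst hi
      rw [if_neg (by rintro rfl; simp only at hy; omega),
        colVec_out (by rintro ⟨-, h, -⟩; simp only at h; omega),
        colVec_out (by rintro ⟨-, -, -, h, -⟩; simp only at h; omega),
        H.corner_even (by omega)]
      ring

lemma IsColumn.inv_eq {n : ℕ} (hn : 1 ≤ n) (hdet : IsUnit (KmatC n).det) {y : ℤ × ℤ}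
    (hyV : y ∈ Vfin n) (hy : y.1 < 2 * n) {V₀ V₁ : ℕ → ℕ → ℚ} (H : IsColumn n y V₀ V₁)
    {x : ℤ × ℤ} (hx : x ∈ Vfin n) :
    (KmatC n)⁻¹ ⟨x, hx⟩ ⟨y, hyV⟩ = ((colVec n V₀ V₁ x : ℚ) : ℂ) := by
  classical
  have h : (KmatC n).mulVec (fun z => ((colVec n V₀ V₁ z.val : ℚ) : ℂ))
      = Pi.single ⟨y, hyV⟩ 1 := by
    ext ⟨⟨x₁, x₂⟩, hx⟩
    have h1 := KmatC_mulVec (f := fun p => ((colVec n V₀ V₁ p : ℚ) : ℂ))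
      (fun p hp => by rw [colVec_out hp, Rat.cast_zero]) x₁ x₂ hx
    have h2 := congrArg (Rat.cast : ℚ → ℂ) (H.rowVal_eq hn hy (mem_Vfin.mp hx))
    rw [h1, Pi.single_apply]
    simp only [Subtype.mk.injEq, eq_comm (a := (x₁, x₂))]
    push_cast [rowVal, apply_ite (Rat.cast : ℚ → ℂ)] at h2
    exact h2
  have h3 := congrArg (fun v => (KmatC n)⁻¹.mulVec v ⟨x, hx⟩) h
  simp only [Matrix.mulVec_mulVec, Matrix.nonsing_inv_mul _ hdet, Matrix.one_mulVec,
    Matrix.mulVec_single_one, Matrix.col_apply] at h3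
  exact h3.symm

lemma KmatC_inv_skew {n : ℕ} (hdet : IsUnit (KmatC n).det) (x y : ↥(Vfin n)) :
    (KmatC n)⁻¹ x y = -(KmatC n)⁻¹ y x := by
  have h : (KmatC n).transpose = -KmatC n := by
    ext a b
    simp only [Matrix.transpose_apply, Matrix.neg_apply, KmatC]
    ring
  have h1 := congrFun (congrFun (Matrix.transpose_nonsing_inv (KmatC n)) y) x
  have h2 : (-KmatC n)⁻¹ = -(KmatC n)⁻¹ :=
    Matrix.inv_eq_right_inv (by rw [neg_mul_neg, Matrix.mul_nonsing_inv _ hdet])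
  rw [h, h2, Matrix.transpose_apply] at h1
  exact h1

/-- The local correction between an odd vertex `(i₁, i₁ + 2i₂ + 1)` and an even vertex
`(j₁, j₁ + 2j₂)`. -/
def corr (i₁ i₂ j₁ j₂ : ℕ) : ℚ :=
  if j₁ ≤ i₁ ∧ i₂ < j₂ then ((j₂ - i₂ - 1).choose (i₁ - j₁) : ℚ) else 0

lemma corr_of_not {i₁ i₂ j₁ j₂ : ℕ} (h : ¬ (j₁ ≤ i₁ ∧ i₂ < j₂)) : corr i₁ i₂ j₁ j₂ = 0 :=
  if_neg h

lemma corr_of_lt {i₁ i₂ j₁ j₂ : ℕ} (h : j₁ + j₂ < i₁ + i₂ + 1) : corr i₁ i₂ j₁ j₂ = 0 := by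
  rw [corr]
  split_ifs with h1
  · rw [Nat.choose_eq_zero_of_lt (by omega), Nat.cast_zero]
  · rfl

lemma corr_add (i d s e : ℕ) : corr (i + d) s i (s + e + 1) = (e.choose d : ℚ) := by
  rw [corr, if_pos (by omega)]
  congr 2 <;> omega

lemma corr_succ_succ (i₁ i₂ j₁ j₂ : ℕ) : corr i₁ (i₂ + 1) j₁ (j₂ + 1) = corr i₁ i₂ j₁ j₂ := by
  simp only [corr, Nat.add_lt_add_iff_right, Nat.add_sub_add_right]

lemma corr_right_succ (i₁ i₂ j₁ j₂ : ℕ) : corr i₁ i₂ j₁ (j₂ + 1)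
    = corr i₁ i₂ (j₁ + 1) j₂ + corr i₁ i₂ j₁ j₂ + if i₁ = j₁ ∧ i₂ = j₂ then 1 else 0 := by
  by_cases h : j₁ ≤ i₁ ∧ i₂ ≤ j₂
  · obtain ⟨d, rfl⟩ := Nat.exists_eq_add_of_le h.1
    obtain ⟨e, rfl⟩ := Nat.exists_eq_add_of_le h.2
    rw [corr_add]
    rcases e with _ | e
    · rw [corr_of_not (by omega), corr_of_not (by omega)]
      rcases d with _ | d <;> simp
    · rw [if_neg (by omega), ← add_assoc, corr_add]
      rcases d with _ | d
      · rw [corr_of_not (by omega)]; simp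
      · rw [show j₁ + (d + 1) = j₁ + 1 + d by ring, corr_add, Nat.choose_succ_succ]
        push_cast; ring
  · rw [corr_of_not (by omega), corr_of_not (by omega), corr_of_not (by omega),
      if_neg (by omega)]
    ring

lemma corr_left_zero (i₂ j₁ j₂ : ℕ) : corr 0 i₂ j₁ j₂
    = corr 0 (i₂ + 1) j₁ j₂ + if 0 = j₁ ∧ i₂ + 1 = j₂ then 1 else 0 := by
  rcases j₂ with _ | j₂
  · rw [corr_of_not (by omega), corr_of_not (by omega), if_neg (by omega), add_zero]
  · rw [corr_succ_succ, corr_right_succ, corr_of_not (by omega), zero_add]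
    simp only [Nat.add_right_cancel_iff]

lemma corr_left_succ (i₁ i₂ j₁ j₂ : ℕ) : corr (i₁ + 1) i₂ j₁ j₂
    = corr (i₁ + 1) (i₂ + 1) j₁ j₂ + corr i₁ (i₂ + 1) j₁ j₂
      + if i₁ + 1 = j₁ ∧ i₂ + 1 = j₂ then 1 else 0 := by
  have h (j₂ : ℕ) : corr (i₁ + 1) i₂ (j₁ + 1) j₂ = corr i₁ i₂ j₁ j₂ := by
    simp only [corr, Nat.add_le_add_iff_right, Nat.add_sub_add_right]
  rcases j₂ with _ | j₂
  · rw [corr_of_not (by omega), corr_of_not (by omega), corr_of_not (by omega),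
      if_neg (by omega)]
    ring
  · rw [corr_succ_succ, corr_succ_succ, corr_right_succ, h]
    simp only [Nat.add_right_cancel_iff]
    ring

lemma opEven_single (j₁ j₂ i : ℕ) : opEven j₁ j₂ (fun j => if i = j then 1 else 0)
    = (-1) ^ j₂ * corr i 0 j₁ (j₂ + 1) := by
  rw [opEven_apply]
  by_cases h : j₁ ≤ i
  · obtain ⟨d, rfl⟩ := Nat.exists_eq_add_of_le h
    have h1 := corr_add j₁ d 0 j₂
    rw [zero_add] at h1
    simp only [h1, mul_ite, mul_one, mul_zero, Nat.add_left_cancel_iff, sum_ite_eq, mem_range]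
    split_ifs with h2
    · rfl
    · rw [Nat.choose_eq_zero_of_lt (by omega), Nat.cast_zero, mul_zero]
  · rw [corr_of_not (by omega), mul_zero]
    exact sum_eq_zero fun l _ => by rw [if_neg (by omega), mul_zero]

lemma opOdd_congr {i₁ : ℕ} (i₂ : ℕ) {u v : ℕ → ℚ} (h : ∀ i ≤ i₁, u i = v i) :
    opOdd i₁ i₂ u = opOdd i₁ i₂ v := by
  simp only [opOdd_apply]
  exact sum_congr rfl fun l _ => by rw [h _ (Nat.sub_le _ _)]

lemma opEven_congr {i₁ i₂ : ℕ} {u v : ℕ → ℚ} (h : ∀ i ≤ i₁ + i₂, u i = v i) :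
    opEven i₁ i₂ u = opEven i₁ i₂ v := by
  simp only [opEven_apply]
  exact sum_congr rfl fun l hl => by rw [h _ (by have := mem_range.mp hl; omega)]

lemma evn_eq_one {n : ℕ} (h : n % 2 = 0) : evn n = 1 := by
  simp [evn, h]

lemma evn_eq_zero {n : ℕ} (h : n % 2 = 1) : evn n = 0 := by
  simp [evn, h]

lemma isColumn_odd {n j₁ j₂ : ℕ} (hj₁ : j₁ < 2 * n) (hj : j₁ + 2 * j₂ ≤ 2 * n) :
    IsColumn n (j₁, j₁ + 2 * j₂ + 1)
      (fun i s => opEven i s (fun i => opOdd j₁ j₂ fun j => -t10Q n j i)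
        + (-1) ^ (s + j₂) * corr j₁ j₂ i s)
      (fun i s => opOdd i s fun i => opOdd j₁ j₂ fun j => t11Q n i j) where
  odd i s := by
    have h := corr_right_succ j₁ j₂ i s
    have h1 : (((j₁ : ℤ), (j₁ : ℤ) + 2 * j₂ + 1) = ((i : ℤ), (i : ℤ) + 2 * s + 1))
        ↔ (j₁ = i ∧ j₂ = s) := by
      rw [Prod.mk.injEq]; omega
    simp only [h1, opEven_succ]
    rw [h]
    split_ifs with h2
    · obtain ⟨rfl, rfl⟩ := h2
      have h3 : (-1 : ℚ) ^ (j₂ + j₂) = 1 := Even.neg_one_pow ⟨j₂, rfl⟩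
      rw [show j₂ + 1 + j₂ = j₂ + j₂ + 1 by ring, pow_succ, h3]
      ring
    · ring
  even_zero s := by
    rw [opOdd_zero_succ, if_neg (by rw [Prod.mk.injEq]; omega)]
    ring
  even_succ i s := by
    rw [opOdd_succ_succ, if_neg (by rw [Prod.mk.injEq]; omega)]
    ring
  diag_zero := by
    rw [if_neg (by rw [Prod.mk.injEq]; omega)]
    simp only [opOdd_zero, opEven_zero, corr_of_not (show ¬ (1 ≤ j₁ ∧ j₂ < 0) by omega)]
    rw [mul_zero, add_zero, ← map_sub, ← map_zero (opOdd j₁ j₂)]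
    congr 1
    funext j
    simpa using t11Q_diag_zero n j
  diag_succ i := by
    rw [if_neg (by rw [Prod.mk.injEq]; omega)]
    simp only [opOdd_zero, opEven_zero, corr_of_not (show ¬ (i + 2 ≤ j₁ ∧ j₂ < 0) by omega),
      corr_of_not (show ¬ (i ≤ j₁ ∧ j₂ < 0) by omega)]
    rw [mul_zero, add_zero, add_zero, ← map_add, ← map_add, ← map_sub,
      ← map_zero (opOdd j₁ j₂)]
    congr 1
    funext j
    have h := t11Q_diag_succ n i j
    simp only [Pi.add_apply, Pi.sub_apply, Pi.zero_apply]
    linear_combination h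
  top_even m hm := by
    have h : opEven (2 * m) (n - m + 1) (fun i => opOdd j₁ j₂ fun j => -t10Q n j i)
        = -((-1) ^ (n - m + 1) * opOdd j₁ j₂ (phi n (n - m))) := by
      rw [opEven_comm (2 * m) (n - m + 1) (opOdd j₁ j₂) fun i j => -t10Q n j i,
        show -((-1) ^ (n - m + 1) * opOdd j₁ j₂ (phi n (n - m)))
          = opOdd j₁ j₂ (-((-1 : ℚ) ^ (n - m + 1) • phi n (n - m))) by
            rw [map_neg, map_smul, smul_eq_mul]]
      congr 1
      funext j
      have h1 : (fun i => -t10Q n j i) = -fun i => t10Q n j i := rfl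
      rw [h1, map_neg, opEven_t10Q hm.le]
      simp
    simp only [h]
    by_cases hs : j₂ ≤ n - m
    · rw [opOdd_phi (Nat.sub_le n m) j₁ hs, corr, ch]
      have h2 : (j₁ : ℤ) - 2 * ((n : ℤ) - ((n - m : ℕ) : ℤ)) = j₁ - 2 * m := by omega
      rw [h2]
      by_cases h3 : 2 * m ≤ j₁
      · rw [if_neg (by omega), if_pos (by omega),
          show ((j₁ : ℤ) - 2 * m).toNat = j₁ - 2 * m by omega,
          show n - m + 1 - j₂ - 1 = n - m - j₂ by omega]
        ring
      · rw [if_pos (by omega), if_neg (by omega)]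
        ring
    · rw [opOdd_phi_of_lt _ (by omega), corr_of_not (by omega)]
      ring
  top_odd m hm := by
    rw [opOdd_comm (2 * m + 1) (n - m) (opOdd j₁ j₂) fun i j => t11Q n i j,
      ← map_zero (opOdd j₁ j₂)]
    congr 1
    funext j
    exact opOdd_t11Q hm.le j
  corner_even hn := by
    simp only [opEven_zero, corr_of_not (show ¬ (2 * n ≤ j₁ ∧ j₂ < 0) by omega)]
    rw [mul_zero, add_zero, ← map_zero (opOdd j₁ j₂)]
    exact opOdd_congr _ fun j hj => by
      rw [t10Q_corner (evn_eq_one hn) (by omega), neg_zero, Pi.zero_apply]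
  corner_odd hn := by
    obtain ⟨n, rfl⟩ : ∃ N, n = N + 1 := ⟨n - 1, by omega⟩
    rw [show 2 * (n + 1) - 1 = 2 * n + 1 by omega]
    simp only [opOdd_zero, opEven_zero, corr_of_not (show ¬ (2 * n + 1 ≤ j₁ ∧ j₂ < 0) by omega)]
    rw [mul_zero, add_zero, ← map_add, ← map_zero (opOdd j₁ j₂)]
    refine opOdd_congr _ fun j hj => ?_
    have h := t11Q_corner (evn_eq_zero hn) (show j < 2 * (n + 1) by omega)
    simpa [sub_eq_add_neg] using h

lemma isColumn_even {n j₁ j₂ : ℕ} (hj₁ : j₁ < 2 * n) (hj : j₁ + 2 * j₂ ≤ 2 * n + 1) :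
    IsColumn n (j₁, j₁ + 2 * j₂)
      (fun i s => opEven i s fun i => opEven j₁ j₂ fun j => t00Q n i j)
      (fun i s => opOdd i s (fun i => opEven j₁ j₂ fun j => t10Q n i j)
        - (-1) ^ (s + j₂) * corr i s j₁ j₂) where
  odd i s := by
    rw [opEven_succ, if_neg (by rw [Prod.mk.injEq]; omega)]
    ring
  even_zero s := by
    have h := corr_left_zero s j₁ j₂
    have h1 : (((j₁ : ℤ), (j₁ : ℤ) + 2 * j₂) = ((0 : ℤ), (0 : ℤ) + 2 * ((s + 1 : ℕ) : ℤ)))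
        ↔ (0 = j₁ ∧ s + 1 = j₂) := by
      rw [Prod.mk.injEq]; omega
    simp only [h1, opOdd_zero_succ]
    rw [h]
    split_ifs with h2
    · obtain ⟨rfl, rfl⟩ := h2
      have h3 : (-1 : ℚ) ^ (s + s) = 1 := Even.neg_one_pow ⟨s, rfl⟩
      rw [show s + (s + 1) = s + s + 1 by ring, show s + 1 + (s + 1) = s + s + 1 + 1 by ring,
        pow_succ, pow_succ, h3]
      ring
    · ring
  even_succ i s := by
    have h := corr_left_succ i s j₁ j₂
    have h1 : (((j₁ : ℤ), (j₁ : ℤ) + 2 * j₂)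
          = (((i + 1 : ℕ) : ℤ), ((i + 1 : ℕ) : ℤ) + 2 * ((s + 1 : ℕ) : ℤ)))
        ↔ (i + 1 = j₁ ∧ s + 1 = j₂) := by
      rw [Prod.mk.injEq]; omega
    simp only [h1, opOdd_succ_succ]
    rw [h]
    split_ifs with h2
    · obtain ⟨rfl, rfl⟩ := h2
      have h3 : (-1 : ℚ) ^ (s + s) = 1 := Even.neg_one_pow ⟨s, rfl⟩
      rw [show s + (s + 1) = s + s + 1 by ring, show s + 1 + (s + 1) = s + s + 1 + 1 by ring,
        pow_succ, pow_succ, h3]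
      ring
    · ring
  diag_zero := by
    have h1 : (((j₁ : ℤ), (j₁ : ℤ) + 2 * j₂) = ((0 : ℤ), (0 : ℤ))) ↔ (0 = j₁ ∧ 0 = j₂) := by
      rw [Prod.mk.injEq]; omega
    have h2 : (opEven j₁ j₂ fun j => t10Q n 0 j) - (opEven j₁ j₂ fun j => t00Q n 1 j)
        = (-1) ^ j₂ * corr 0 0 j₁ (j₂ + 1) := by
      rw [← opEven_single, ← map_sub]
      congr 1
      funext j
      exact t10Q_diag_zero n j
    simp only [h1, opOdd_zero, opEven_zero]
    have h3 := corr_left_zero 0 j₁ (j₂ + 1)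
    rw [corr_succ_succ] at h3
    rw [h3] at h2
    rw [zero_add]
    simp only [zero_add, eq_comm (a := 1), Nat.add_eq_right] at h2
    rw [sub_right_comm, h2]
    by_cases hj₂ : j₂ = 0
    · subst hj₂; simp
    · rw [if_neg (by omega), if_neg (by omega)]; ring
  diag_succ i := by
    have h1 : (((j₁ : ℤ), (j₁ : ℤ) + 2 * j₂) = (((i + 1 : ℕ) : ℤ), ((i + 1 : ℕ) : ℤ)))
        ↔ (i + 1 = j₁ ∧ 0 = j₂) := by
      rw [Prod.mk.injEq]; omega
    have h2 : (opEven j₁ j₂ fun j => t10Q n (i + 1) j) + (opEven j₁ j₂ fun j => t10Q n i j)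
          + (opEven j₁ j₂ fun j => t00Q n i j) - (opEven j₁ j₂ fun j => t00Q n (i + 2) j)
        = (-1) ^ j₂ * corr (i + 1) 0 j₁ (j₂ + 1) := by
      rw [← opEven_single, ← map_add, ← map_add, ← map_sub]
      congr 1
      funext j
      exact t10Q_diag_succ n i j
    simp only [h1, opOdd_zero, opEven_zero]
    have h3 := corr_left_succ i 0 j₁ (j₂ + 1)
    rw [corr_succ_succ, corr_succ_succ] at h3
    rw [h3] at h2
    rw [zero_add]
    by_cases hj₂ : j₂ = 0
    · subst hj₂
      simp only [zero_add, and_true, pow_zero, one_mul] at h2 ⊢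
      linear_combination h2
    · rw [if_neg (by omega)] at h2 ⊢
      linear_combination h2
  top_even m hm := by
    rw [opEven_comm (2 * m) (n - m + 1) (opEven j₁ j₂) fun i j => t00Q n i j,
      ← map_zero (opEven j₁ j₂)]
    congr 1
    funext j
    exact opEven_t00Q hm.le j
  top_odd m hm := by
    rw [opOdd_comm (2 * m + 1) (n - m) (opEven j₁ j₂) fun i j => t10Q n i j,
      show corr (2 * m + 1) (n - m) j₁ j₂ = 0 from ?_, mul_zero, sub_zero,
      ← map_zero (opEven j₁ j₂)]
    · congr 1
      funext j
      exact opOdd_t10Q hm.le j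
    · rw [corr]
      split_ifs with h
      · rw [Nat.choose_eq_zero_of_lt (by omega), Nat.cast_zero]
      · rfl
  corner_even hn := by
    simp only [opEven_zero]
    rw [← map_zero (opEven j₁ j₂)]
    exact opEven_congr fun j hj => by
      rw [t00Q_corner (evn_eq_one hn) (by omega), Pi.zero_apply]
  corner_odd hn := by
    obtain ⟨n, rfl⟩ : ∃ N, n = N + 1 := ⟨n - 1, by omega⟩
    rw [show 2 * (n + 1) - 1 = 2 * n + 1 by omega]
    have h2 : (opEven j₁ j₂ fun j => t10Q (n + 1) (2 * n + 1) j)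
          + (opEven j₁ j₂ fun j => t00Q (n + 1) (2 * n + 1) j)
        = (-1) ^ j₂ * corr (2 * n + 1 + 1) 0 j₁ (j₂ + 1) := by
      rw [← opEven_single, ← map_add]
      refine opEven_congr fun j hj => ?_
      exact t10Q_t00Q_corner (evn_eq_zero hn) (by omega)
    simp only [opOdd_zero, opEven_zero]
    have h3 := corr_left_succ (2 * n + 1) 0 j₁ (j₂ + 1)
    rw [corr_succ_succ, corr_succ_succ, corr_of_lt (i₁ := 2 * n + 1 + 1) (j₂ := j₂) (by omega),
      if_neg (by omega)] at h3
    rw [h3] at h2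
    rw [zero_add]
    linear_combination h2

lemma genBinom_natCast (m l : ℕ) : genBinom (m : ℤ) l = (m.choose l : ℂ) := by
  rw [genBinom, Nat.cast_choose_eq_descPochhammer_div, descPochhammer_eval_eq_prod_range]
  simp

lemma genBinom_multichoose (m l : ℕ) : genBinom ((m : ℤ) - 1 + l) l = (m.multichoose l : ℂ) := by
  rcases m with _ | m
  · rcases l with _ | l
    · simp [genBinom]
    · rw [show ((0 : ℕ) : ℤ) - 1 + ((l + 1 : ℕ) : ℤ) = ((l : ℕ) : ℤ) by push_cast; ring,
        genBinom_natCast, Nat.multichoose_zero_succ, Nat.choose_succ_self]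
  · rw [show ((m + 1 : ℕ) : ℤ) - 1 + l = ((m + l : ℕ) : ℤ) by push_cast; ring,
      genBinom_natCast, Nat.multichoose_eq]
    congr 2
    omega

lemma genBinom_corr (i₁ i₂ j₁ j₂ : ℕ) :
    (if j₁ ≤ i₁ ∧ 2 * i₁ + 2 * i₂ + 1 < 2 * j₁ + 2 * j₂ then
      genBinom ((j₂ : ℤ) - (i₂ : ℤ) - 1) (i₁ - j₁) else 0) = ((corr i₁ i₂ j₁ j₂ : ℚ) : ℂ) := by
  split_ifs with h
  · rw [corr, if_pos (by omega),
      show (j₂ : ℤ) - i₂ - 1 = ((j₂ - i₂ - 1 : ℕ) : ℤ) by omega, genBinom_natCast, Rat.cast_natCast]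
  · by_cases h1 : j₁ ≤ i₁
    · rw [corr_of_lt (by omega), Rat.cast_zero]
    · rw [corr_of_not (by omega), Rat.cast_zero]

end TSSCPP

open TSSCPP in
/-- Main theorem: the entries of `K_n⁻¹` at `x = (i₁, i₁+2i₂+ε_i)`, `y = (j₁, j₁+2j₂+ε_j)`,
in the three cases `(ε_i,ε_j) = (1,1), (0,0), (1,0)`; the case `(0,1)` is determined by
the skew-symmetry `K_n⁻¹(x,y) = −K_n⁻¹(y,x)`. -/
theorem Kinv_main (n : ℕ) (hn : 1 ≤ n) (hdet : IsUnit (KmatC n).det)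
    (i1 i2 j1 j2 ei ej : ℕ) (hei : ei ≤ 1) (hej : ej ≤ 1)
    (hi1 : i1 + 1 ≤ 2*n) (hj1 : j1 + 1 ≤ 2*n)
    (hi2 : i2 ≤ n - (i1 + ei)/2) (hj2 : j2 ≤ n - (j1 + ej)/2)
    (hx : (((i1:ℤ), (i1:ℤ) + 2*(i2:ℤ) + (ei:ℤ))) ∈ Vfin n)
    (hy : (((j1:ℤ), (j1:ℤ) + 2*(j2:ℤ) + (ej:ℤ))) ∈ Vfin n) :
    (ei = 1 → ej = 1 →
      (KmatC n)⁻¹ ⟨((i1:ℤ), (i1:ℤ) + 2*(i2:ℤ) + (ei:ℤ)), hx⟩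
          ⟨((j1:ℤ), (j1:ℤ) + 2*(j2:ℤ) + (ej:ℤ)), hy⟩
        = ∑ l1 ∈ Finset.range (i1+1), ∑ l2 ∈ Finset.range (j1+1),
            (-1)^(i2+j2) * (-1)^(l1+l2) *
              genBinom ((i2:ℤ) - 1 + (l1:ℤ)) l1 * genBinom ((j2:ℤ) - 1 + (l2:ℤ)) l2 *
              t11 n (i1-l1) (j1-l2)) ∧
    (ei = 0 → ej = 0 →
      (KmatC n)⁻¹ ⟨((i1:ℤ), (i1:ℤ) + 2*(i2:ℤ) + (ei:ℤ)), hx⟩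
          ⟨((j1:ℤ), (j1:ℤ) + 2*(j2:ℤ) + (ej:ℤ)), hy⟩
        = ∑ l1 ∈ Finset.range (i2+1), ∑ l2 ∈ Finset.range (j2+1),
            (-1)^(i2+j2) * genBinom (i2:ℤ) l1 * genBinom (j2:ℤ) l2 *
              t00 n (i1+l1) (j1+l2)) ∧
    (ei = 1 → ej = 0 →
      (KmatC n)⁻¹ ⟨((i1:ℤ), (i1:ℤ) + 2*(i2:ℤ) + (ei:ℤ)), hx⟩
          ⟨((j1:ℤ), (j1:ℤ) + 2*(j2:ℤ) + (ej:ℤ)), hy⟩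
        = (∑ l1 ∈ Finset.range (i1+1), ∑ l2 ∈ Finset.range (j2+1),
            (-1)^(i2+j2) * (-1)^l1 *
              genBinom ((i2:ℤ) - 1 + (l1:ℤ)) l1 * genBinom (j2:ℤ) l2 *
              t10 n (i1-l1) (j1+l2))
          - (-1)^(i2+j2) *
            (if j1 ≤ i1 ∧ 2*i1 + 2*i2 + 1 < 2*j1 + 2*j2 then
              genBinom ((j2:ℤ) - (i2:ℤ) - 1) (i1-j1) else 0)) ∧
    ((KmatC n)⁻¹ ⟨((i1:ℤ), (i1:ℤ) + 2*(i2:ℤ) + (ei:ℤ)), hx⟩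
          ⟨((j1:ℤ), (j1:ℤ) + 2*(j2:ℤ) + (ej:ℤ)), hy⟩
      = -(KmatC n)⁻¹ ⟨((j1:ℤ), (j1:ℤ) + 2*(j2:ℤ) + (ej:ℤ)), hy⟩
          ⟨((i1:ℤ), (i1:ℤ) + 2*(i2:ℤ) + (ei:ℤ)), hx⟩) := by
  have hxm := mem_Vfin.mp hx
  have hym := mem_Vfin.mp hy
  have hx4 := hxm.2.2.2.1
  have hy4 := hym.2.2.2.1
  simp only at hx4 hy4
  have hy1 : ((j1 : ℤ), (j1 : ℤ) + 2 * (j2 : ℤ) + (ej : ℤ)).1 < 2 * n := by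
    simp only; omega
  refine ⟨?_, ?_, ?_, KmatC_inv_skew hdet _ _⟩
  · rintro rfl rfl
    rw [IsColumn.inv_eq hn hdet hy hy1
        (isColumn_odd (n := n) (j₁ := j1) (j₂ := j2) (by omega) (by omega)) hx,
      colVec_odd (n := n) i1 i2 rfl (by simp) (by omega) (by omega)]
    simp only [opOdd_apply, genBinom_multichoose, t11_eq, mul_sum]
    push_cast
    exact sum_congr rfl fun _ _ => sum_congr rfl fun _ _ => by ring
  · rintro rfl rfl
    have H := isColumn_even (n := n) (j₁ := j1) (j₂ := j2) (by omega) (by omega)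
    rw [IsColumn.inv_eq hn hdet hy hy1 (by simpa using H) hx,
      colVec_even i1 i2 rfl (by simp) (by omega) (by omega)]
    simp only [opEven_apply, genBinom_natCast, t00_eq, mul_sum]
    push_cast
    exact sum_congr rfl fun _ _ => sum_congr rfl fun _ _ => by ring
  · rintro rfl rfl
    have H := isColumn_even (n := n) (j₁ := j1) (j₂ := j2) (by omega) (by omega)
    rw [IsColumn.inv_eq hn hdet hy hy1 (by simpa using H) hx,
      colVec_odd (n := n) i1 i2 rfl (by simp) (by omega) (by omega), genBinom_corr]
    simp only [opOdd_apply, opEven_apply, genBinom_multichoose, genBinom_natCast, t10_eq, mul_sum]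
    push_cast
    congr 1
    exact sum_congr rfl fun _ _ => sum_congr rfl fun _ _ => by ring
end
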